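/- Fix c > 0 and suppose f solves the max-matching PDE with parameter c. For each N ≥ 1, let X₁, …, X_N and Y₁, …, Y_N be 2N independent uniform random variables on [0,1]; run the greedy algorithm closest with threshold c/N and offline set {X₁, …, X_N} on the arrival sequence Y₁, Y₂, …, Y_N, and let κ_N(t) be the number of online points matched among the first ⌊tN⌋ arrivals. Then for every t ∈ [0,1], κ_N(t)/N converges in probability, as N → ∞, to 1 − ∫₀^∞ f(x,t) dx. -/

import Mathlib

open MeasureTheory
open scoped ENNReal

/-- One step of the greedy algorithm `closest` with threshold `r ∈ (0, ∞]`: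
given the set `S` of free offline points and an arriving point `y`, if some
`x ∈ S` satisfies `|x - y| < r` then `y` is matched to the `x ∈ S` minimizing
`|x - y|` (ties broken in favor of the smaller `x`), which is removed from `S`;
otherwise `y` stays unmatched.  Returns the new free set and the chosen point. -/
noncomputable def closestStep (r : ℝ≥0∞) (S : Finset ℝ) (y : ℝ) : Finset ℝ × Option ℝ :=
  if h : (S.filter fun x => ENNReal.ofReal |x - y| < r).Nonempty then
    let x0 := (((S.filter fun x => ENNReal.ofReal |x - y| < r)).filter
        (fun x => |x - y| =
          (S.filter fun x => ENNReal.ofReal |x - y| < r).inf' h fun x => |x - y|)).min'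
      (by
        obtain ⟨b, hb, he⟩ :=
          Finset.exists_mem_eq_inf' h (fun x : ℝ => |x - y|)
        exact ⟨b, Finset.mem_filter.2 ⟨hb, he.symm⟩⟩)
    (S.erase x0, some x0)
  else (S, none)

/-- The state of the greedy algorithm `closest` after the first `m` arrivals
`y 0, …, y (m-1)`, starting from the offline set `X`: the set of free offline
points, the number of matched online points, and the total length of the matching. -/
noncomputable def closestState (r : ℝ≥0∞) (X : Finset ℝ) (y : ℕ → ℝ) : ℕ → Finset ℝ × ℕ × ℝ
  | 0 => (X, 0, 0)
  | m + 1 =>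
    match closestStep r (closestState r X y m).1 (y m) with
    | (S', none) => (S', (closestState r X y m).2.1, (closestState r X y m).2.2)
    | (S', some x) =>
        (S', (closestState r X y m).2.1 + 1, (closestState r X y m).2.2 + |x - y m|)

/-- Number of online points matched by `closest` among the first `m` arrivals. -/
noncomputable def closestMatchedCount (r : ℝ≥0∞) (X : Finset ℝ) (y : ℕ → ℝ) (m : ℕ) : ℕ :=
  (closestState r X y m).2.1

/-- The right-hand side of the max-matching PDE with parameter `c`. -/
noncomputable def maxMatchRHS (c : ℝ) (f : ℝ → ℝ → ℝ) (x t : ℝ) : ℝ :=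
  -(min x (2 * c)) * f x t
    - ((∫ x' in Set.Ioi (0 : ℝ), min x' (2 * c) * f x' t) /
        (∫ x' in Set.Ioi (0 : ℝ), f x' t)) * f x t
    + (∫ x' in (0 : ℝ)..x, min x' (2 * c) * f x' t * f (x - x') t) /
        (∫ x' in Set.Ioi (0 : ℝ), f x' t)

/-- `f` solves the max-matching PDE with parameter `c`. -/
def SolvesMaxMatchingPDE (c : ℝ) (f : ℝ → ℝ → ℝ) : Prop :=
  Measurable (Function.uncurry f) ∧
  (∀ x t, 0 ≤ f x t) ∧
  (∀ x t, x < 0 → f x t = 0) ∧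
  (∀ t ∈ Set.Icc (0 : ℝ) 1,
    IntegrableOn (fun x => f x t) (Set.Ioi 0) ∧
    IntegrableOn (fun x => x * f x t) (Set.Ioi 0) ∧
    0 < ∫ x in Set.Ioi (0 : ℝ), f x t) ∧
  (∀ x, 0 ≤ x → f x 0 = Real.exp (-x)) ∧
  (∀ x, 0 ≤ x → ∀ t ∈ Set.Icc (0 : ℝ) 1,
    HasDerivWithinAt (fun s => f x s) (maxMatchRHS c f x t) (Set.Icc 0 1) t)

/-- The product of `N` copies of the uniform distribution on `[0,1]`. -/
noncomputable def unifCube (N : ℕ) : Measure (Fin N → ℝ) :=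
  Measure.pi fun _ => volume.restrict (Set.Icc 0 1)


open MeasureTheory
open scoped ENNReal

namespace MM

noncomputable def cv (g h : ℝ → ℝ) (x : ℝ) : ℝ := ∫ y, g y * h (x - y)

lemma cv_int2 {g h : ℝ → ℝ} (hg : Integrable g) (hh : Integrable h) :
    Integrable (fun q : ℝ × ℝ => g q.2 * h (q.1 - q.2)) (volume.prod volume) := by
  have := hg.convolution_integrand (ContinuousLinearMap.mul ℝ ℝ) hh (μ := volume) (ν := volume)
  simpa using this

lemma cv_ae {g h : ℝ → ℝ} (hg : Integrable g) (hh : Integrable h) :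
    ∀ᵐ x, Integrable (fun y => g y * h (x - y)) := (cv_int2 hg hh).prod_right_ae

lemma cv_integrable {g h : ℝ → ℝ} (hg : Integrable g) (hh : Integrable h) :
    Integrable (cv g h) := (cv_int2 hg hh).integral_prod_left

lemma cv_integral {g h ψ : ℝ → ℝ} (hg : Integrable g) (hh : Integrable h)
    (hψ : Measurable ψ) {M : ℝ} (hM : ∀ x, |ψ x| ≤ M) :
    ∫ x, cv g h x * ψ x = ∫ x, g x * ∫ y, h y * ψ (x + y) := by
  have h1 : Integrable (fun q : ℝ × ℝ => (g q.2 * h (q.1 - q.2)) * ψ q.1)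
      (volume.prod volume) := by
    refine (cv_int2 hg hh).mul_bdd (c := M) ?_ ?_
    · exact (hψ.comp measurable_fst).aestronglyMeasurable
    · exact Filter.Eventually.of_forall fun x => hM _
  calc ∫ x, cv g h x * ψ x = ∫ x, ∫ y, (g y * h (x - y)) * ψ x := by
        simp_rw [cv, integral_mul_const]
    _ = ∫ y, ∫ x, (g y * h (x - y)) * ψ x := integral_integral_swap h1
    _ = _ := by
        congr 1; ext y
        simp_rw [mul_assoc]
        rw [integral_const_mul]
        congr 1
        rw [← integral_add_right_eq_self _ y]
        simp [add_comm]

lemma cv_one {g h : ℝ → ℝ} (hg : Integrable g) (hh : Integrable h) :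
    ∫ x, cv g h x = (∫ x, g x) * ∫ x, h x := by
  have := cv_integral hg hh (ψ := fun _ => 1) measurable_const (M := 1) (by simp)
  simpa [integral_mul_const] using this

lemma taylor2 {g g' : ℝ → ℝ} {K : ℝ}
    (hd : ∀ s ∈ Set.Icc (0:ℝ) 1, HasDerivWithinAt g (g' s) (Set.Icc 0 1) s)
    (hL : ∀ s ∈ Set.Icc (0:ℝ) 1, ∀ t ∈ Set.Icc (0:ℝ) 1, |g' s - g' t| ≤ K * |s - t|)
    {s t : ℝ} (hs : s ∈ Set.Icc (0:ℝ) 1) (ht : t ∈ Set.Icc (0:ℝ) 1) :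
    |g s - g t - (s - t) * g' t| ≤ K * (s - t) ^ 2 := by
  have hsub : Set.uIcc t s ⊆ Set.Icc 0 1 := by
    intro z hz
    rw [Set.mem_uIcc] at hz
    rcases hz with h | h <;> constructor <;> linarith [hs.1, hs.2, ht.1, ht.2, h.1, h.2]
  by_cases hst : s = t
  · subst hst; simp
  have hK : 0 ≤ K := by
    have := hL s hs t ht
    have h2 : 0 < |s - t| := abs_pos.2 (sub_ne_zero.2 hst)
    by_contra hk
    push Not at hk
    nlinarith [abs_nonneg (g' s - g' t)]
  have key := (convex_uIcc t s).norm_image_sub_le_of_norm_hasDerivWithin_le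
    (f := fun z => g z - z * g' t) (f' := fun z => g' z - 1 * g' t) (C := K * |s - t|) (x := t) (y := s)
    (fun z hz => ((hd z (hsub hz)).mono hsub).sub ((hasDerivWithinAt_id z _).mul_const _))
    (fun z hz => by
      rw [one_mul]
      refine (hL z (hsub hz) t ht).trans ?_
      exact mul_le_mul_of_nonneg_left (Set.abs_sub_left_of_mem_uIcc hz) hK)
    Set.left_mem_uIcc Set.right_mem_uIcc
  rw [Real.norm_eq_abs, Real.norm_eq_abs] at key
  calc _ = |g s - s * g' t - (g t - t * g' t)| := by congr 1; ring
    _ ≤ _ := key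
    _ = _ := by rw [mul_assoc, ← sq, sq_abs]

lemma lip1 {g g' : ℝ → ℝ} {K : ℝ}
    (hd : ∀ s ∈ Set.Icc (0:ℝ) 1, HasDerivWithinAt g (g' s) (Set.Icc 0 1) s)
    (hL : ∀ s ∈ Set.Icc (0:ℝ) 1, |g' s| ≤ K)
    {s t : ℝ} (hs : s ∈ Set.Icc (0:ℝ) 1) (ht : t ∈ Set.Icc (0:ℝ) 1) :
    |g s - g t| ≤ K * |s - t| :=
  (convex_Icc (0:ℝ) 1).norm_image_sub_le_of_norm_hasDerivWithin_le (f := g) (f' := g') (C := K)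
    (fun z hz => hd z hz) (fun z hz => hL z hz) ht hs

/-- clipped rate function -/
noncomputable def aa (c x : ℝ) : ℝ := max 0 (min x (2 * c))

lemma aa_nonneg (c x : ℝ) : 0 ≤ aa c x := le_max_left _ _
lemma aa_le {c : ℝ} (hc : 0 < c) (x : ℝ) : aa c x ≤ 2 * c :=
  max_le (by linarith) (min_le_right _ _)
lemma aa_cont (c : ℝ) : Continuous (aa c) := by unfold aa; fun_prop
lemma aa_of_nonneg {c x : ℝ} (hc : 0 < c) (hx : 0 ≤ x) : aa c x = min x (2 * c) :=
  max_eq_right (le_min hx (by linarith))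
lemma aa_of_nonpos {c x : ℝ} (hx : x ≤ 0) : aa c x = 0 :=
  max_eq_left ((min_le_left _ _).trans hx)
lemma aa_abs {c : ℝ} (hc : 0 < c) (x : ℝ) : |aa c x| ≤ 2 * c := by
  rw [abs_of_nonneg (aa_nonneg c x)]; exact aa_le hc x

end MM

open MeasureTheory
open scoped ENNReal

namespace MM
section PDE
variable {c : ℝ} {f : ℝ → ℝ → ℝ}

noncomputable def uu (f : ℝ → ℝ → ℝ) (t : ℝ) : ℝ := ∫ x, f x t
noncomputable def AA (c : ℝ) (f : ℝ → ℝ → ℝ) (t : ℝ) : ℝ := ∫ x, aa c x * f x t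

lemma setInt_Ioi {g : ℝ → ℝ} (hg : ∀ x < 0, g x = 0) : ∫ x in Set.Ioi (0:ℝ), g x = ∫ x, g x := by
  rw [← integral_Ici_eq_integral_Ioi]
  refine setIntegral_eq_integral_of_forall_compl_eq_zero fun x hx => ?_
  exact hg x (by simpa using hx)

lemma f_integrable (hf : SolvesMaxMatchingPDE c f) {t : ℝ} (ht : t ∈ Set.Icc (0:ℝ) 1) :
    Integrable (fun x => f x t) := by
  have h1 : IntegrableOn (fun x => f x t) (Set.Ici 0) :=
    (integrableOn_Ici_iff_integrableOn_Ioi).2 (hf.2.2.2.1 t ht).1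
  rw [← integrableOn_iff_integrable_of_support_subset (s := Set.Ici 0)]
  · exact h1
  · intro x hx
    by_contra h
    exact hx (hf.2.2.1 x t (by simpa using h))

lemma uu_eq (hf : SolvesMaxMatchingPDE c f) (t : ℝ) : ∫ x in Set.Ioi (0:ℝ), f x t = uu f t :=
  setInt_Ioi fun x hx => hf.2.2.1 x t hx

lemma AA_eq (hc : 0 < c) (hf : SolvesMaxMatchingPDE c f) (t : ℝ) :
    ∫ x in Set.Ioi (0:ℝ), min x (2 * c) * f x t = AA c f t := by
  rw [AA, ← setInt_Ioi]
  · refine setIntegral_congr_fun measurableSet_Ioi fun x hx => ?_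
    show _ = aa c x * f x t
    rw [aa_of_nonneg hc (le_of_lt hx)]
  · intro x hx; simp [hf.2.2.1 x t hx]

lemma uu_pos (hf : SolvesMaxMatchingPDE c f) {t : ℝ} (ht : t ∈ Set.Icc (0:ℝ) 1) : 0 < uu f t := by
  rw [← uu_eq hf]; exact (hf.2.2.2.1 t ht).2.2

lemma af_integrable (hc : 0 < c) {g : ℝ → ℝ} (hg : Integrable g) :
    Integrable (fun x => aa c x * g x) :=
  hg.bdd_mul (c := 2 * c) (aa_cont c).aestronglyMeasurable
    (Filter.Eventually.of_forall fun x => aa_abs hc x)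

lemma AA_nonneg (hf : SolvesMaxMatchingPDE c f) (t : ℝ) : 0 ≤ AA c f t :=
  integral_nonneg fun x => mul_nonneg (aa_nonneg c x) (hf.2.1 x t)

lemma AA_le (hc : 0 < c) (hf : SolvesMaxMatchingPDE c f) {t : ℝ} (ht : t ∈ Set.Icc (0:ℝ) 1) :
    AA c f t ≤ 2 * c * uu f t := by
  rw [AA, uu, ← integral_const_mul]
  exact integral_mono (af_integrable hc (f_integrable hf ht)) ((f_integrable hf ht).const_mul _)
    fun x => mul_le_mul_of_nonneg_right (aa_le hc x) (hf.2.1 x t)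

lemma cvf_eq (hc : 0 < c) (hf : SolvesMaxMatchingPDE c f) (t : ℝ) {x : ℝ} (hx : 0 ≤ x) :
    ∫ x' in (0 : ℝ)..x, min x' (2 * c) * f x' t * f (x - x') t
      = cv (fun y => aa c y * f y t) (fun y => f y t) x := by
  rw [intervalIntegral.integral_of_le hx, cv]
  rw [← setIntegral_eq_integral_of_forall_compl_eq_zero (s := Set.Ioc 0 x)
    (f := fun y => aa c y * f y t * f (x - y) t)]
  · refine setIntegral_congr_fun measurableSet_Ioc fun y hy => ?_
    show _ = aa c y * f y t * f (x - y) t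
    rw [aa_of_nonneg hc hy.1.le]
  · intro y hy
    rw [Set.mem_Ioc, not_and_or] at hy
    rcases hy with h | h
    · rw [aa_of_nonpos (by linarith)]; simp
    · rw [hf.2.2.1 (x - y) t (by linarith)]; simp

/-- the derivative -/
noncomputable def DD (c : ℝ) (f : ℝ → ℝ → ℝ) (x t : ℝ) : ℝ :=
  - aa c x * f x t - AA c f t / uu f t * f x t
    + cv (fun y => aa c y * f y t) (fun y => f y t) x / uu f t

lemma cv_neg_eq (hf : SolvesMaxMatchingPDE c f) (t : ℝ) {x : ℝ} (hx : x < 0) :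
    cv (fun y => aa c y * f y t) (fun y => f y t) x = 0 := by
  rw [cv, ← integral_zero ℝ ℝ]
  congr 1; ext y
  by_cases hy : y < 0
  · simp [hf.2.2.1 y t hy]
  · rw [hf.2.2.1 (x - y) t (by linarith)]; simp

lemma f_deriv (hc : 0 < c) (hf : SolvesMaxMatchingPDE c f) (x : ℝ) {t : ℝ}
    (ht : t ∈ Set.Icc (0:ℝ) 1) :
    HasDerivWithinAt (fun s => f x s) (DD c f x t) (Set.Icc 0 1) t := by
  by_cases hx : 0 ≤ x
  · have := hf.2.2.2.2.2 x hx t ht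
    convert this using 1
    rw [DD, maxMatchRHS, uu_eq hf, AA_eq hc hf, cvf_eq hc hf t hx, aa_of_nonneg hc hx]
  · push Not at hx
    have h0 : (fun s => f x s) = fun _ => 0 := by ext s; exact hf.2.2.1 x s hx
    rw [h0, DD, cv_neg_eq hf t hx, hf.2.2.1 x t hx]
    simpa using hasDerivWithinAt_const t (Set.Icc (0:ℝ) 1) (0:ℝ)

lemma cvf_nonneg (hf : SolvesMaxMatchingPDE c f) (x t : ℝ) :
    0 ≤ cv (fun y => aa c y * f y t) (fun y => f y t) x :=
  integral_nonneg fun y => mul_nonneg (mul_nonneg (aa_nonneg c y) (hf.2.1 y t)) (hf.2.1 _ t)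

lemma DD_ge (hc : 0 < c) (hf : SolvesMaxMatchingPDE c f) (x : ℝ) {t : ℝ}
    (ht : t ∈ Set.Icc (0:ℝ) 1) : 0 ≤ DD c f x t + 4 * c * f x t := by
  have h1 := div_nonneg (cvf_nonneg (c := c) hf x t) (uu_pos hf ht).le
  have h2 : AA c f t / uu f t ≤ 2 * c := (div_le_iff₀ (uu_pos hf ht)).2 (AA_le hc hf ht)
  have h3 := hf.2.1 x t
  have h4 := aa_le hc x
  unfold DD
  nlinarith [mul_nonneg (sub_nonneg.2 h2) h3, mul_nonneg (sub_nonneg.2 h4) h3]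

lemma f_mono (hc : 0 < c) (hf : SolvesMaxMatchingPDE c f) (x : ℝ) :
    MonotoneOn (fun t => Real.exp (4 * c * t) * f x t) (Set.Icc 0 1) := by
  have hd : ∀ t ∈ Set.Icc (0:ℝ) 1, HasDerivWithinAt (fun t => Real.exp (4 * c * t) * f x t)
      (Real.exp (4 * c * t) * (4 * c * 1) * f x t + Real.exp (4 * c * t) * DD c f x t)
      (Set.Icc 0 1) t := fun t ht =>
    ((((hasDerivAt_id t).const_mul (4 * c)).exp).hasDerivWithinAt).mul (f_deriv hc hf x ht)
  refine monotoneOn_of_hasDerivWithinAt_nonneg (convex_Icc 0 1)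
    (f' := fun t => (Real.exp (4 * c * t) * (4 * c * 1) * f x t
      + Real.exp (4 * c * t) * DD c f x t)) ?_ ?_ ?_
  · exact fun t ht => (hd t ht).continuousWithinAt
  · exact fun t ht => (hd t (interior_subset ht)).mono interior_subset
  · intro t ht
    have := mul_nonneg (Real.exp_pos (4 * c * t)).le (DD_ge hc hf x (interior_subset ht))
    linarith

lemma f_le_one (hc : 0 < c) (hf : SolvesMaxMatchingPDE c f) (x : ℝ) {t : ℝ}
    (ht : t ∈ Set.Icc (0:ℝ) 1) : f x t ≤ Real.exp (4 * c) * f x 1 := by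
  have h := f_mono hc hf x ht (Set.right_mem_Icc.2 zero_le_one) ht.2
  simp only [mul_one] at h
  refine le_trans ?_ h
  have h1 : 1 ≤ Real.exp (4 * c * t) := Real.one_le_exp (by have := ht.1; positivity)
  nlinarith [hf.2.1 x t]

lemma f_ge_zero (hc : 0 < c) (hf : SolvesMaxMatchingPDE c f) (x : ℝ) {t : ℝ}
    (ht : t ∈ Set.Icc (0:ℝ) 1) : Real.exp (-(4 * c)) * f x 0 ≤ f x t := by
  have h := f_mono hc hf x (Set.left_mem_Icc.2 zero_le_one) ht ht.1
  simp only [mul_zero, Real.exp_zero, one_mul] at h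
  have h1 : Real.exp (4 * c * t) ≤ Real.exp (4 * c) :=
    Real.exp_le_exp.2 (by nlinarith [ht.2])
  have h2 : f x 0 ≤ Real.exp (4 * c) * f x t :=
    h.trans (mul_le_mul_of_nonneg_right h1 (hf.2.1 x t))
  calc _ ≤ Real.exp (-(4 * c)) * (Real.exp (4 * c) * f x t) := by gcongr
    _ = f x t := by rw [← mul_assoc, ← Real.exp_add]; simp

lemma uu_zero (hf : SolvesMaxMatchingPDE c f) : uu f 0 = 1 := by
  rw [← uu_eq hf]
  rw [setIntegral_congr_fun measurableSet_Ioi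
    (fun x hx => hf.2.2.2.2.1 x (le_of_lt hx) : Set.EqOn (fun x => f x 0) (fun x => Real.exp (-x)) (Set.Ioi 0))]
  exact integral_exp_neg_Ioi_zero

lemma uu_lower (hc : 0 < c) (hf : SolvesMaxMatchingPDE c f) {t : ℝ}
    (ht : t ∈ Set.Icc (0:ℝ) 1) : Real.exp (-(4 * c)) ≤ uu f t := by
  have h0 : (0:ℝ) ∈ Set.Icc (0:ℝ) 1 := Set.left_mem_Icc.2 zero_le_one
  calc _ = Real.exp (-(4 * c)) * uu f 0 := by rw [uu_zero hf, mul_one]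
    _ = ∫ x, Real.exp (-(4 * c)) * f x 0 := by rw [integral_const_mul, uu]
    _ ≤ _ := integral_mono ((f_integrable hf h0).const_mul _) (f_integrable hf ht)
      fun x => f_ge_zero hc hf x ht

lemma cv_bound {g₁ g₂ h₁ h₂ : ℝ → ℝ} {x : ℝ} (hi : Integrable fun y => g₂ y * h₂ (x - y))
    (h : ∀ᵐ y, |g₁ y * h₁ (x - y)| ≤ g₂ y * h₂ (x - y)) : |cv g₁ h₁ x| ≤ cv g₂ h₂ x := by
  exact norm_integral_le_of_norm_le (f := fun y => g₁ y * h₁ (x - y)) hi h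

lemma uu_deriv (hc : 0 < c) (hf : SolvesMaxMatchingPDE c f) {t : ℝ}
    (ht : t ∈ Set.Icc (0:ℝ) 1) :
    HasDerivWithinAt (uu f) (-AA c f t) (Set.Icc 0 1) t := by
  set F1 : ℝ → ℝ := fun x => Real.exp (4 * c) * f x 1 with hF1
  have h1 : (1:ℝ) ∈ Set.Icc (0:ℝ) 1 := Set.right_mem_Icc.2 zero_le_one
  have iF1 : Integrable F1 := (f_integrable hf h1).const_mul _
  have F1n : ∀ x, 0 ≤ F1 x := fun x => mul_nonneg (Real.exp_pos _).le (hf.2.1 x 1)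
  set e := Real.exp (-(4 * c)) with he
  have hepos : 0 < e := Real.exp_pos _
  have iaF1 : Integrable (fun x => 2 * c * F1 x) := iF1.const_mul _
  set G1 : ℝ → ℝ := fun x => 4 * c * F1 x + cv (fun x => 2 * c * F1 x) F1 x / e with hG1
  have iG1 : Integrable G1 := (iF1.const_mul _).add ((cv_integrable iaF1 iF1).div_const _)
  have hbd : ∀ᵐ x, ∀ s ∈ Set.Icc (0:ℝ) 1, |DD c f x s| ≤ G1 x := by
    filter_upwards [cv_ae iaF1 iF1] with x hx s hs
    have k1 : |cv (fun y => aa c y * f y s) (fun y => f y s) x| ≤ cv (fun x => 2 * c * F1 x) F1 x := by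
      refine cv_bound hx (Filter.Eventually.of_forall fun y => ?_)
      have a1 := aa_nonneg c y
      have a2 := hf.2.1 y s
      have a3 := hf.2.1 (x - y) s
      have a4 := f_le_one hc hf y hs
      have a5 := f_le_one hc hf (x - y) hs
      have a6 := aa_le hc y
      rw [abs_of_nonneg (by positivity)]
      simp only [hF1]
      have a7 := hf.2.1 y 1
      gcongr
    have hu := uu_lower hc hf hs
    have hup := uu_pos hf hs
    have k2 : |cv (fun y => aa c y * f y s) (fun y => f y s) x / uu f s|
        ≤ cv (fun x => 2 * c * F1 x) F1 x / e := by
      rw [abs_div, abs_of_pos hup]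
      exact div_le_div₀ ((abs_nonneg _).trans k1) k1 hepos hu
    have h2 : AA c f s / uu f s ≤ 2 * c := (div_le_iff₀ hup).2 (AA_le hc hf hs)
    have h2' : 0 ≤ AA c f s / uu f s := div_nonneg (AA_nonneg hf s) hup.le
    have h3 := hf.2.1 x s
    have h5 : f x s ≤ F1 x := f_le_one hc hf x hs
    have h4 := aa_le hc x
    have h4' := aa_nonneg c x
    have k3 : aa c x * f x s ≤ 2 * c * F1 x := by gcongr
    have k4 : AA c f s / uu f s * f x s ≤ 2 * c * F1 x := by gcongr
    have k5 : 0 ≤ aa c x * f x s := by positivity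
    have k6 : 0 ≤ AA c f s / uu f s * f x s := by positivity
    rw [abs_le] at k2 ⊢
    unfold DD
    simp only [hG1]
    constructor <;> linarith [k2.1, k2.2]
  have hDDi : ∫ x, DD c f x t = -AA c f t := by
    have i1 := f_integrable hf ht
    have i2 := af_integrable hc i1
    have i3 := cv_integrable i2 i1
    unfold DD
    have hup := (uu_pos hf ht).ne'
    simp_rw [neg_mul]
    rw [integral_add, integral_sub, integral_neg, integral_const_mul, integral_div, cv_one i2 i1]
    · change -AA c f t - AA c f t / uu f t * uu f t + AA c f t * uu f t / uu f t = _
      field_simp; ring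
    · exact i2.neg
    · exact i1.const_mul _
    · exact i2.neg.sub (i1.const_mul _)
    · exact i3.div_const _
  rw [hasDerivWithinAt_iff_tendsto_slope, ← hDDi]
  have hev : ∀ᶠ s in nhdsWithin t (Set.Icc 0 1 \ {t}), s ∈ Set.Icc (0:ℝ) 1 \ {t} := self_mem_nhdsWithin
  have := tendsto_integral_filter_of_dominated_convergence (μ := volume)
    (l := nhdsWithin t (Set.Icc 0 1 \ {t})) (F := fun s x => slope (fun s => f x s) t s)
    (f := fun x => DD c f x t) G1 ?_ ?_ iG1 ?_
  · refine this.congr' ?_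
    filter_upwards [hev] with s hs
    simp only [slope, vsub_eq_sub, smul_eq_mul]
    rw [integral_const_mul, integral_sub (f_integrable hf hs.1) (f_integrable hf ht)]
    rfl
  · filter_upwards [hev] with s hs
    simp only [slope, vsub_eq_sub, smul_eq_mul]
    exact (((f_integrable hf hs.1).sub (f_integrable hf ht)).const_mul _).aestronglyMeasurable
  · filter_upwards [hev] with s hs
    filter_upwards [hbd] with x hx
    have := lip1 (fun s hs => f_deriv hc hf x hs) hx hs.1 ht
    simp only [slope, vsub_eq_sub, smul_eq_mul]
    have hst : 0 < |s - t| := abs_pos.2 (sub_ne_zero.2 hs.2)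
    rw [Real.norm_eq_abs, abs_mul, abs_inv, inv_mul_le_iff₀ hst]
    linarith
  · refine Filter.Eventually.of_forall fun x => ?_
    exact hasDerivWithinAt_iff_tendsto_slope.1 (f_deriv hc hf x ht)

end PDE
end MM

open MeasureTheory
open scoped ENNReal

namespace MM

structure GoodP (c K : ℝ) (p : ℝ → ℝ → ℝ) (u : ℝ → ℝ) : Prop where
  Knn : 0 ≤ K
  int : ∀ t ∈ Set.Icc (0:ℝ) 1, Integrable (p t)
  nonneg : ∀ t ∈ Set.Icc (0:ℝ) 1, ∀ x, 0 ≤ p t x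
  one : ∀ t ∈ Set.Icc (0:ℝ) 1, ∫ x, p t x = 1
  unn : ∀ t ∈ Set.Icc (0:ℝ) 1, 0 ≤ u t
  ule : ∀ t ∈ Set.Icc (0:ℝ) 1, u t ≤ K
  lip : ∀ s ∈ Set.Icc (0:ℝ) 1, ∀ t ∈ Set.Icc (0:ℝ) 1, ∀ ψ : ℝ → ℝ, Measurable ψ → ∀ M : ℝ,
    (∀ x, |ψ x| ≤ M) → |(∫ x, p s x * ψ x) - ∫ x, p t x * ψ x| ≤ K * M * |s - t|
  tay : ∀ s ∈ Set.Icc (0:ℝ) 1, ∀ t ∈ Set.Icc (0:ℝ) 1, ∀ ψ : ℝ → ℝ, Measurable ψ → ∀ M : ℝ,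
    (∀ x, |ψ x| ≤ M) → |(∫ x, p s x * ψ x) - (∫ x, p t x * ψ x)
      - (s - t) * ((∫ x, aa c x * p t x * ∫ y, p t y * ψ (x + y)) - ∫ x, aa c x * p t x * ψ x)|
      ≤ K * M * (s - t) ^ 2
  utay : ∀ s ∈ Set.Icc (0:ℝ) 1, ∀ t ∈ Set.Icc (0:ℝ) 1,
    |u s - u t + (s - t) * (u t * ∫ x, aa c x * p t x)| ≤ K * (s - t) ^ 2
  exp0 : p 0 = fun x => if 0 ≤ x then Real.exp (-x) else 0
  u0 : u 0 = 1

section PDE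
variable {c : ℝ} {f : ℝ → ℝ → ℝ}

noncomputable def pp (f : ℝ → ℝ → ℝ) (t x : ℝ) : ℝ := f x t / uu f t

noncomputable def dp (c : ℝ) (f : ℝ → ℝ → ℝ) (t x : ℝ) : ℝ :=
  cv (fun y => aa c y * pp f t y) (pp f t) x - aa c x * pp f t x

lemma pp_deriv (hc : 0 < c) (hf : SolvesMaxMatchingPDE c f) (x : ℝ) {t : ℝ}
    (ht : t ∈ Set.Icc (0:ℝ) 1) :
    HasDerivWithinAt (fun s => pp f s x) (dp c f t x) (Set.Icc 0 1) t := by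
  have hu := (uu_pos hf ht).ne'
  have := (f_deriv hc hf x ht).div (uu_deriv hc hf ht) hu
  refine HasDerivWithinAt.congr_deriv this ?_
  have h1 : cv (fun y => aa c y * pp f t y) (pp f t) x
      = cv (fun y => aa c y * f y t) (fun y => f y t) x / (uu f t * uu f t) := by
    simp only [cv, pp]
    rw [← integral_div]
    congr 1; ext y; field_simp
  rw [dp, h1, DD, pp]
  field_simp
  ring

lemma goodP_exists (hc : 0 < c) (hf : SolvesMaxMatchingPDE c f) :
    ∃ K, GoodP c K (pp f) (uu f) := by
  have h1 : (1:ℝ) ∈ Set.Icc (0:ℝ) 1 := Set.right_mem_Icc.2 zero_le_one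
  set e := Real.exp (-(4 * c)) with he
  have hepos : 0 < e := Real.exp_pos _
  set P1 : ℝ → ℝ := fun x => Real.exp (4 * c) * f x 1 / e with hP1
  have iP1 : Integrable P1 := ((f_integrable hf h1).const_mul _).div_const _
  have P1n : ∀ x, 0 ≤ P1 x := fun x =>
    div_nonneg (mul_nonneg (Real.exp_pos _).le (hf.2.1 x 1)) hepos.le
  have pint : ∀ t ∈ Set.Icc (0:ℝ) 1, Integrable (pp f t) := fun t ht =>
    (f_integrable hf ht).div_const _
  have pnn : ∀ t ∈ Set.Icc (0:ℝ) 1, ∀ x, 0 ≤ pp f t x := fun t ht x =>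
    div_nonneg (hf.2.1 x t) (uu_pos hf ht).le
  have ple : ∀ t ∈ Set.Icc (0:ℝ) 1, ∀ x, pp f t x ≤ P1 x := fun t ht x =>
    div_le_div₀ (mul_nonneg (Real.exp_pos _).le (hf.2.1 x 1)) (f_le_one hc hf x ht) hepos
      (uu_lower hc hf ht)
  have pone : ∀ t ∈ Set.Icc (0:ℝ) 1, ∫ x, pp f t x = 1 := fun t ht => by
    simp only [pp]; rw [integral_div]; exact div_self (uu_pos hf ht).ne'
  set Q1 : ℝ → ℝ := fun x => 2 * c * P1 x with hQ1
  have iQ1 : Integrable Q1 := iP1.const_mul _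
  set G2 : ℝ → ℝ := fun x => Q1 x + cv Q1 P1 x with hG2
  have iG2 : Integrable G2 := iQ1.add (cv_integrable iQ1 iP1)
  have cvn : ∀ x, 0 ≤ cv Q1 P1 x := fun x => integral_nonneg fun y => by
    have := P1n y; have := P1n (x - y); simp only [hQ1, Pi.zero_apply]; positivity
  have G2n : ∀ x, 0 ≤ G2 x := fun x => by
    have := P1n x; have := cvn x; simp only [hG2, hQ1]; positivity
  have hdp : ∀ᵐ x, ∀ s ∈ Set.Icc (0:ℝ) 1, |dp c f s x| ≤ G2 x := by
    filter_upwards [cv_ae iQ1 iP1] with x hx s hs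
    have k1 : |cv (fun y => aa c y * pp f s y) (pp f s) x| ≤ cv Q1 P1 x := by
      refine cv_bound hx (Filter.Eventually.of_forall fun y => ?_)
      have a1 := aa_nonneg c y
      have a2 := pnn s hs y
      have a3 := pnn s hs (x - y)
      have a4 := ple s hs y
      have a5 := ple s hs (x - y)
      have a6 := aa_le hc y
      rw [abs_of_nonneg (by positivity)]
      have a7 := P1n y
      simp only [hQ1]
      gcongr
    have k2 : aa c x * pp f s x ≤ Q1 x :=
      mul_le_mul (aa_le hc x) (ple s hs x) (pnn s hs x) (by linarith)
    have k3 : 0 ≤ aa c x * pp f s x := mul_nonneg (aa_nonneg c x) (pnn s hs x)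
    have k4 : 0 ≤ Q1 x := k3.trans k2
    simp only [dp, hG2]
    rw [abs_le] at k1 ⊢
    constructor <;> linarith [k1.1, k1.2]
  have hlip : ∀ᵐ x, ∀ s ∈ Set.Icc (0:ℝ) 1, ∀ t ∈ Set.Icc (0:ℝ) 1,
      |pp f s x - pp f t x| ≤ G2 x * |s - t| := by
    filter_upwards [hdp] with x hx s hs t ht
    exact lip1 (fun s hs => pp_deriv hc hf x hs) hx hs ht
  set G3 : ℝ → ℝ := fun x => 2 * c * G2 x with hG3
  have iG3 : Integrable G3 := iG2.const_mul _
  set H : ℝ → ℝ := fun x => cv G3 P1 x + cv Q1 G2 x + G3 x with hH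
  have iH : Integrable H := ((cv_integrable iG3 iP1).add (cv_integrable iQ1 iG2)).add iG3
  have hdl : ∀ᵐ x, ∀ s ∈ Set.Icc (0:ℝ) 1, ∀ t ∈ Set.Icc (0:ℝ) 1,
      |dp c f s x - dp c f t x| ≤ H x * |s - t| := by
    filter_upwards [cv_ae iQ1 iP1, cv_ae iG3 iP1, cv_ae iQ1 iG2, hlip] with x hx1 hx2 hx3 hx4 s hs t ht
    have hpi : ∀ s ∈ Set.Icc (0:ℝ) 1, Integrable (fun y => aa c y * pp f s y * pp f s (x - y)) := by
      intro s hs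
      refine hx1.mono' ?_ (Filter.Eventually.of_forall fun y => ?_)
      · have hm : Measurable (pp f s) :=
          (hf.1.comp (measurable_id.prodMk measurable_const)).div_const _
        exact (((aa_cont c).measurable.mul hm).mul
          (hm.comp (measurable_const.sub measurable_id))).aestronglyMeasurable
      · have a1 := aa_nonneg c y
        have a2 := pnn s hs y
        have a3 := pnn s hs (x - y)
        have a4 := ple s hs y
        have a5 := ple s hs (x - y)
        have a6 := aa_le hc y
        rw [Real.norm_eq_abs, abs_of_nonneg (by positivity)]
        have a7 := P1n y
        simp only [hQ1]
        gcongr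
    have hl2 : ∀ᵐ y, ∀ s ∈ Set.Icc (0:ℝ) 1, ∀ t ∈ Set.Icc (0:ℝ) 1,
      |pp f s (x - y) - pp f t (x - y)| ≤ G2 (x - y) * |s - t| :=
      (quasiMeasurePreserving_sub_left_of_right_invariant volume x).ae hlip
    have k1 : |cv (fun y => aa c y * pp f s y) (pp f s) x - cv (fun y => aa c y * pp f t y) (pp f t) x|
        ≤ (cv G3 P1 x + cv Q1 G2 x) * |s - t| := by
      simp only [cv]
      rw [← integral_sub (hpi s hs) (hpi t ht), ← integral_add hx2 hx3, ← integral_mul_const]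
      refine norm_integral_le_of_norm_le (f := fun y => aa c y * pp f s y * pp f s (x - y)
        - aa c y * pp f t y * pp f t (x - y)) ((hx2.add hx3).mul_const _) ?_
      filter_upwards [hlip, hl2] with y hy1 hy2
      have a1 := aa_nonneg c y
      have a6 := aa_le hc y
      have b1 := hy1 s hs t ht
      have b2 := hy2 s hs t ht
      have e1 : aa c y * pp f s y * pp f s (x - y) - aa c y * pp f t y * pp f t (x - y)
        = aa c y * ((pp f s y - pp f t y) * pp f s (x - y)
          + pp f t y * (pp f s (x - y) - pp f t (x - y))) := by ring
      rw [Real.norm_eq_abs, e1, abs_mul, abs_of_nonneg a1]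
      have a7 := P1n y
      have c1 : |(pp f s y - pp f t y) * pp f s (x - y)| ≤ (G2 y * |s - t|) * P1 (x - y) := by
        rw [abs_mul, abs_of_nonneg (pnn s hs (x - y))]
        exact mul_le_mul b1 (ple s hs _) (pnn s hs _) (mul_nonneg (G2n _) (abs_nonneg _))
      have c2 : |pp f t y * (pp f s (x - y) - pp f t (x - y))| ≤ P1 y * (G2 (x - y) * |s - t|) := by
        rw [abs_mul, abs_of_nonneg (pnn t ht y)]
        exact mul_le_mul (ple t ht _) b2 (abs_nonneg _) a7
      calc _ ≤ 2 * c * ((G2 y * |s - t|) * P1 (x - y) + P1 y * (G2 (x - y) * |s - t|)) :=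
            mul_le_mul a6 ((abs_add_le _ _).trans (add_le_add c1 c2)) (abs_nonneg _) (by linarith)
        _ = _ := by simp only [hG3, hQ1]; ring
    have k2 : |aa c x * pp f s x - aa c x * pp f t x| ≤ G3 x * |s - t| := by
      rw [← mul_sub, abs_mul, abs_of_nonneg (aa_nonneg c x)]
      calc _ ≤ 2 * c * (G2 x * |s - t|) :=
            mul_le_mul (aa_le hc x) (hx4 s hs t ht) (abs_nonneg _) (by linarith)
        _ = _ := by simp only [hG3]; ring
    simp only [dp, hH]
    rw [abs_le] at k1 k2 ⊢
    constructor <;> nlinarith [k1.1, k1.2, k2.1, k2.2]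
  have hty : ∀ᵐ x, ∀ s ∈ Set.Icc (0:ℝ) 1, ∀ t ∈ Set.Icc (0:ℝ) 1,
      |pp f s x - pp f t x - (s - t) * dp c f t x| ≤ H x * (s - t) ^ 2 := by
    filter_upwards [hdl] with x hx s hs t ht
    exact taylor2 (fun s hs => pp_deriv hc hf x hs) hx hs ht
  have Hn : 0 ≤ ∫ x, H x := integral_nonneg fun x => by
    have e1 : 0 ≤ cv G3 P1 x := integral_nonneg fun y => by
      have := G2n y; have := P1n (x - y); simp only [hG3, Pi.zero_apply]; positivity
    have e2 : 0 ≤ cv Q1 G2 x := integral_nonneg fun y => by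
      have := P1n y; have := G2n (x - y); simp only [hQ1, Pi.zero_apply]; positivity
    have := G2n x
    simp only [hH, hG3, Pi.zero_apply]; positivity
  have G2i : 0 ≤ ∫ x, G2 x := integral_nonneg G2n
  have mulint : ∀ {g ψ : ℝ → ℝ} {M : ℝ}, Integrable g → Measurable ψ → (∀ x, |ψ x| ≤ M) →
      Integrable (fun x => g x * ψ x) := fun hg hψ hM =>
    hg.mul_bdd hψ.aestronglyMeasurable (Filter.Eventually.of_forall hM)
  have hlipψ : ∀ s ∈ Set.Icc (0:ℝ) 1, ∀ t ∈ Set.Icc (0:ℝ) 1, ∀ ψ : ℝ → ℝ, Measurable ψ → ∀ M : ℝ,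
    (∀ x, |ψ x| ≤ M) → |(∫ x, pp f s x * ψ x) - ∫ x, pp f t x * ψ x| ≤ (∫ x, G2 x) * M * |s - t| := by
    intro s hs t ht ψ hψ M hM
    rw [← integral_sub (mulint (pint s hs) hψ hM) (mulint (pint t ht) hψ hM), mul_assoc,
      ← integral_mul_const]
    refine norm_integral_le_of_norm_le (f := fun x => pp f s x * ψ x - pp f t x * ψ x)
      (iG2.mul_const _) ?_
    filter_upwards [hlip] with x hx
    rw [Real.norm_eq_abs, ← sub_mul, abs_mul]
    calc _ ≤ (G2 x * |s - t|) * M :=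
          mul_le_mul (hx s hs t ht) (hM x) (abs_nonneg _) (mul_nonneg (G2n _) (abs_nonneg _))
      _ = _ := by ring
  have htayψ : ∀ s ∈ Set.Icc (0:ℝ) 1, ∀ t ∈ Set.Icc (0:ℝ) 1, ∀ ψ : ℝ → ℝ, Measurable ψ → ∀ M : ℝ,
    (∀ x, |ψ x| ≤ M) → |(∫ x, pp f s x * ψ x) - (∫ x, pp f t x * ψ x)
      - (s - t) * ((∫ x, aa c x * pp f t x * ∫ y, pp f t y * ψ (x + y)) - ∫ x, aa c x * pp f t x * ψ x)|
      ≤ (∫ x, H x) * M * (s - t) ^ 2 := by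
    intro s hs t ht ψ hψ M hM
    have ia := af_integrable hc (pint t ht)
    have e1 := cv_integral ia (pint t ht) hψ hM
    have i1 := mulint (cv_integrable ia (pint t ht)) hψ hM
    have i2 := mulint ia hψ hM
    have i3 : Integrable (fun x => pp f s x * ψ x - pp f t x * ψ x) :=
      (mulint (pint s hs) hψ hM).sub (mulint (pint t ht) hψ hM)
    have i4 : Integrable (fun x => (s - t) * (cv (fun x => aa c x * pp f t x) (pp f t) x * ψ x
      - aa c x * pp f t x * ψ x)) := (i1.sub i2).const_mul _
    rw [← e1, ← integral_sub i1 i2, ← integral_const_mul,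
      ← integral_sub (mulint (pint s hs) hψ hM) (mulint (pint t ht) hψ hM),
      ← integral_sub i3 i4, mul_assoc, ← integral_mul_const]
    refine norm_integral_le_of_norm_le (f := fun x => pp f s x * ψ x - pp f t x * ψ x - (s - t) *
      (cv (fun x => aa c x * pp f t x) (pp f t) x * ψ x - aa c x * pp f t x * ψ x)) (iH.mul_const _) ?_
    filter_upwards [hty] with x hx
    have e2 : pp f s x * ψ x - pp f t x * ψ x - (s - t) *
      (cv (fun x => aa c x * pp f t x) (pp f t) x * ψ x - aa c x * pp f t x * ψ x)
      = (pp f s x - pp f t x - (s - t) * dp c f t x) * ψ x := by simp only [dp]; ring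
    rw [Real.norm_eq_abs, e2, abs_mul]
    calc _ ≤ (H x * (s - t) ^ 2) * M :=
          mul_le_mul (hx s hs t ht) (hM x) (abs_nonneg _) ((abs_nonneg _).trans (hx s hs t ht))
      _ = _ := by ring
  -- bounds for u
  set U := ∫ x, Real.exp (4 * c) * f x 1 with hU
  have ule : ∀ t ∈ Set.Icc (0:ℝ) 1, uu f t ≤ U := fun t ht =>
    integral_mono (f_integrable hf ht) ((f_integrable hf h1).const_mul _)
      fun x => f_le_one hc hf x ht
  have hAb : ∀ t ∈ Set.Icc (0:ℝ) 1, AA c f t = uu f t * ∫ x, aa c x * pp f t x := by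
    intro t ht
    have hu := (uu_pos hf ht).ne'
    rw [← integral_const_mul, AA]
    congr 1; ext x; simp only [pp]; field_simp
  have hU0 : 0 ≤ U := (uu_pos hf h1).le.trans (ule 1 h1)
  have ulip : ∀ s ∈ Set.Icc (0:ℝ) 1, ∀ t ∈ Set.Icc (0:ℝ) 1, |uu f s - uu f t| ≤ (2 * c * U) * |s - t| := by
    intro s hs t ht
    refine lip1 (fun s hs => uu_deriv hc hf hs) (fun s hs => ?_) hs ht
    rw [abs_neg, abs_of_nonneg (AA_nonneg hf s)]
    exact (AA_le hc hf hs).trans (mul_le_mul_of_nonneg_left (ule s hs) (by linarith))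
  have alip : ∀ s ∈ Set.Icc (0:ℝ) 1, ∀ t ∈ Set.Icc (0:ℝ) 1,
      |(∫ x, aa c x * pp f s x) - ∫ x, aa c x * pp f t x| ≤ (∫ x, G2 x) * (2 * c) * |s - t| := by
    intro s hs t ht
    have := hlipψ s hs t ht (aa c) (aa_cont c).measurable (2 * c) (aa_abs hc)
    simpa only [mul_comm (aa c _)] using this
  have abd : ∀ s ∈ Set.Icc (0:ℝ) 1, |∫ x, aa c x * pp f s x| ≤ 2 * c := by
    intro s hs
    have e1 : (2 * c) = ∫ x, 2 * c * pp f s x := by rw [integral_const_mul, pone s hs, mul_one]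
    rw [e1]
    refine norm_integral_le_of_norm_le (f := fun x => aa c x * pp f s x) ((pint s hs).const_mul _) ?_
    refine Filter.Eventually.of_forall fun x => ?_
    rw [Real.norm_eq_abs, abs_mul, abs_of_nonneg (pnn s hs x)]
    exact mul_le_mul_of_nonneg_right (aa_abs hc x) (pnn s hs x)
  have AAlip : ∀ s ∈ Set.Icc (0:ℝ) 1, ∀ t ∈ Set.Icc (0:ℝ) 1,
      |(-AA c f s) - (-AA c f t)| ≤ (2 * c * U * (2 * c) + U * ((∫ x, G2 x) * (2 * c))) * |s - t| := by
    intro s hs t ht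
    rw [hAb s hs, hAb t ht]
    have e1 : -(uu f s * ∫ x, aa c x * pp f s x) - -(uu f t * ∫ x, aa c x * pp f t x)
      = -((uu f s - uu f t) * (∫ x, aa c x * pp f s x)
        + uu f t * ((∫ x, aa c x * pp f s x) - ∫ x, aa c x * pp f t x)) := by ring
    rw [e1, abs_neg]
    refine (abs_add_le _ _).trans ?_
    rw [abs_mul, abs_mul, abs_of_nonneg (uu_pos hf ht).le]
    calc _ ≤ ((2 * c * U) * |s - t|) * (2 * c) + U * ((∫ x, G2 x) * (2 * c) * |s - t|) := by
          have := abd s hs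
          have := ulip s hs t ht
          have := alip s hs t ht
          have := ule t ht
          gcongr
      _ = _ := by ring
  set K4 := 2 * c * U * (2 * c) + U * ((∫ x, G2 x) * (2 * c)) with hK4
  have hK4n : 0 ≤ K4 := by positivity
  have key : ∀ M : ℝ, 0 ≤ M → ∀ A B : ℝ, A ≤ B → A * M ≤ B * M := fun M hM A B h =>
    mul_le_mul_of_nonneg_right h hM
  refine ⟨(∫ x, G2 x) + (∫ x, H x) + K4 + U, ⟨by positivity, pint, pnn, pone,
    fun t ht => (uu_pos hf ht).le, fun t ht => (ule t ht).trans (by linarith), ?_, ?_, ?_, ?_, uu_zero hf⟩⟩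
  · intro s hs t ht ψ hψ M hM
    refine (hlipψ s hs t ht ψ hψ M hM).trans ?_
    have hM0 : 0 ≤ M := (abs_nonneg _).trans (hM 0)
    gcongr
    linarith
  · intro s hs t ht ψ hψ M hM
    refine (htayψ s hs t ht ψ hψ M hM).trans ?_
    have hM0 : 0 ≤ M := (abs_nonneg _).trans (hM 0)
    gcongr
    linarith
  · intro s hs t ht
    have := taylor2 (fun s hs => uu_deriv hc hf hs) AAlip hs ht
    rw [hAb t ht] at this
    calc _ = |uu f s - uu f t - (s - t) * -(uu f t * ∫ x, aa c x * pp f t x)| := by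
            congr 1; ring
      _ ≤ _ := this
      _ ≤ _ := by
        refine mul_le_mul_of_nonneg_right ?_ (sq_nonneg _)
        linarith
  · ext x
    rw [pp, uu_zero hf, div_one]
    split_ifs with h
    · exact hf.2.2.2.2.1 x h
    · exact hf.2.2.1 x 0 (by linarith)

end PDE
end MM

open MeasureTheory
open scoped ENNReal

namespace MM

def scons (g : ℝ) (s : ℕ → ℝ) : ℕ → ℝ
  | 0 => g
  | n + 1 => s n

def shf (s : ℕ → ℝ) : ℕ → ℝ := fun n => s (n + 1)

@[simp] lemma scons_zero (g : ℝ) (s : ℕ → ℝ) : scons g s 0 = g := rfl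
@[simp] lemma scons_succ (g : ℝ) (s : ℕ → ℝ) (n : ℕ) : scons g s (n + 1) = s n := rfl
@[simp] lemma shf_scons (g : ℝ) (s : ℕ → ℝ) : shf (scons g s) = s := rfl
lemma scons_eta (g : ℕ → ℝ) : scons (g 0) (shf g) = g := by
  ext n; cases n <;> rfl

@[fun_prop] lemma scons_cont' {X : Type*} [TopologicalSpace X] {g : X → ℝ} {s : X → ℕ → ℝ}
    (hg : Continuous g) (hs : Continuous s) : Continuous fun x => scons (g x) (s x) := by
  refine continuous_pi fun n => ?_
  cases n with
  | zero => exact hg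
  | succ n => exact (continuous_apply n).comp hs

@[fun_prop] lemma shf_cont' {X : Type*} [TopologicalSpace X] {s : X → ℕ → ℝ}
    (hs : Continuous s) : Continuous fun x => shf (s x) :=
  continuous_pi fun n => (continuous_apply (n + 1)).comp hs

@[fun_prop] lemma aa_cont' {X : Type*} [TopologicalSpace X] (c : ℝ) {s : X → ℝ}
    (hs : Continuous s) : Continuous fun x => aa c (s x) := (aa_cont c).comp hs

noncomputable def RR (c : ℝ) : ℕ → ((ℕ → ℝ) → ℝ) → (ℕ → ℝ) → ℝ
  | 0, _, _ => 0
  | k + 1, φ, g => (aa c (g 0) + aa c (g 1)) / 2 * (φ (scons (g 0 + g 1) (shf (shf g))) - φ g)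
      + RR c k (fun s => φ (scons (g 0) s)) (shf g)

noncomputable def QQ (c : ℝ) : ℕ → ((ℕ → ℝ) → ℝ) → (ℕ → ℝ) → ℝ
  | 0, _, _ => 0
  | k + 1, φ, g => aa c (g 0) * (φ (scons (g 0 + g 1) (shf (shf g))) - φ g)
      + QQ c k (fun s => φ (scons (g 0) s)) (shf g)

noncomputable def LL (c : ℝ) (k : ℕ) (φ : (ℕ → ℝ) → ℝ) (g : ℕ → ℝ) : ℝ :=
  RR c k φ g - (aa c (g 0) * φ g + aa c (g 0) * φ (shf g)) / 2

noncomputable def II (p : ℝ → ℝ) : ℕ → ((ℕ → ℝ) → ℝ) → ℝ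
  | 0, φ => φ 0
  | k + 1, φ => ∫ g, p g * II p k (fun s => φ (scons g s))

structure TT (k : ℕ) (M : ℝ) (φ : (ℕ → ℝ) → ℝ) : Prop where
  cont : Continuous φ
  bd : ∀ g, |φ g| ≤ M
  loc : ∀ g g', (∀ i < k, g i = g' i) → φ g = φ g'

structure Dens (p : ℝ → ℝ) : Prop where
  int : Integrable p
  nn : ∀ x, 0 ≤ p x
  one : ∫ x, p x = 1

lemma TT.Mnn {k : ℕ} {M : ℝ} {φ : (ℕ → ℝ) → ℝ} (h : TT k M φ) : 0 ≤ M :=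
  (abs_nonneg _).trans (h.bd 0)

lemma TT.sub {k : ℕ} {M : ℝ} {φ : (ℕ → ℝ) → ℝ} (h : TT (k + 1) M φ) (g : ℝ) :
    TT k M (fun s => φ (scons g s)) where
  cont := h.cont.comp (by fun_prop)
  bd s := h.bd _
  loc s s' hs := h.loc _ _ fun i hi => by
    cases i with
    | zero => rfl
    | succ i => exact hs i (by omega)

lemma RR_cont (c : ℝ) (k : ℕ) : ∀ {X : Type} [TopologicalSpace X] (Φ : X → (ℕ → ℝ) → ℝ),
    Continuous (fun q : X × (ℕ → ℝ) => Φ q.1 q.2) →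
    Continuous (fun q : X × (ℕ → ℝ) => RR c k (Φ q.1) q.2) := by
  induction k with
  | zero => intro X _ Φ h; simp only [RR]; fun_prop
  | succ k ih =>
    intro X _ Φ h
    simp only [RR]
    have h1 := ih (X := X × ℝ) (fun x s => Φ x.1 (scons x.2 s))
      (h.comp (f := fun q : (X × ℝ) × (ℕ → ℝ) => (q.1.1, scons q.1.2 q.2)) (by fun_prop))
    have h2 := h1.comp (f := fun q : X × (ℕ → ℝ) => ((q.1, q.2 0), shf q.2)) (by fun_prop)
    have h3 := h.comp (f := fun q : X × (ℕ → ℝ) =>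
      (q.1, scons (q.2 0 + q.2 1) (shf (shf q.2)))) (by fun_prop)
    have h4 : Continuous fun q : X × (ℕ → ℝ) => (aa c (q.2 0) + aa c (q.2 1)) / 2 := by fun_prop
    exact (h4.mul (h3.sub h)).add h2

lemma QQ_cont (c : ℝ) (k : ℕ) : ∀ {X : Type} [TopologicalSpace X] (Φ : X → (ℕ → ℝ) → ℝ),
    Continuous (fun q : X × (ℕ → ℝ) => Φ q.1 q.2) →
    Continuous (fun q : X × (ℕ → ℝ) => QQ c k (Φ q.1) q.2) := by
  induction k with
  | zero => intro X _ Φ h; simp only [QQ]; fun_prop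
  | succ k ih =>
    intro X _ Φ h
    simp only [QQ]
    have h1 := ih (X := X × ℝ) (fun x s => Φ x.1 (scons x.2 s))
      (h.comp (f := fun q : (X × ℝ) × (ℕ → ℝ) => (q.1.1, scons q.1.2 q.2)) (by fun_prop))
    have h2 := h1.comp (f := fun q : X × (ℕ → ℝ) => ((q.1, q.2 0), shf q.2)) (by fun_prop)
    have h3 := h.comp (f := fun q : X × (ℕ → ℝ) =>
      (q.1, scons (q.2 0 + q.2 1) (shf (shf q.2)))) (by fun_prop)
    have h4 : Continuous fun q : X × (ℕ → ℝ) => aa c (q.2 0) := by fun_prop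
    exact (h4.mul (h3.sub h)).add h2

lemma RR_bd {c : ℝ} (hc : 0 < c) (k : ℕ) : ∀ {M : ℝ} {φ : (ℕ → ℝ) → ℝ}, (∀ g, |φ g| ≤ M) →
    ∀ g, |RR c k φ g| ≤ 4 * c * k * M := by
  induction k with
  | zero => intro M φ h g; simp [RR]
  | succ k ih =>
    intro M φ h g
    simp only [RR]
    have h1 := ih (φ := fun s => φ (scons (g 0) s)) (M := M) (fun s => h _) (shf g)
    have h2 : |(aa c (g 0) + aa c (g 1)) / 2 * (φ (scons (g 0 + g 1) (shf (shf g))) - φ g)|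
        ≤ 2 * c * (M + M) := by
      rw [abs_mul]
      refine mul_le_mul ?_ ((abs_sub _ _).trans (add_le_add (h _) (h _))) (abs_nonneg _) (by linarith)
      have := aa_nonneg c (g 0); have := aa_nonneg c (g 1)
      have := aa_le hc (g 0); have := aa_le hc (g 1)
      rw [abs_of_nonneg (by positivity)]; linarith
    refine (abs_add_le _ _).trans ((add_le_add h2 h1).trans (le_of_eq ?_))
    push_cast; ring

lemma QQ_bd {c : ℝ} (hc : 0 < c) (k : ℕ) : ∀ {M : ℝ} {φ : (ℕ → ℝ) → ℝ}, (∀ g, |φ g| ≤ M) →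
    ∀ g, |QQ c k φ g| ≤ 4 * c * k * M := by
  induction k with
  | zero => intro M φ h g; simp [QQ]
  | succ k ih =>
    intro M φ h g
    simp only [QQ]
    have h1 := ih (φ := fun s => φ (scons (g 0) s)) (M := M) (fun s => h _) (shf g)
    have h2 : |aa c (g 0) * (φ (scons (g 0 + g 1) (shf (shf g))) - φ g)|
        ≤ 2 * c * (M + M) := by
      rw [abs_mul]
      exact mul_le_mul (aa_abs hc _) ((abs_sub _ _).trans (add_le_add (h _) (h _))) (abs_nonneg _)
        (by linarith)
    refine (abs_add_le _ _).trans ((add_le_add h2 h1).trans (le_of_eq ?_))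
    push_cast; ring

lemma RR_loc (c : ℝ) (k : ℕ) : ∀ {M : ℝ} {φ : (ℕ → ℝ) → ℝ}, TT k M φ →
    ∀ g g', (∀ i < k + 1, g i = g' i) → RR c k φ g = RR c k φ g' := by
  induction k with
  | zero => intros; simp [RR]
  | succ k ih =>
    intro M φ h g g' hg
    simp only [RR]
    have e0 := hg 0 (by omega)
    have e1 := hg 1 (by omega)
    have e2 : φ g = φ g' := h.loc _ _ fun i hi => hg i (by omega)
    have e3 : φ (scons (g 0 + g 1) (shf (shf g))) = φ (scons (g' 0 + g' 1) (shf (shf g'))) := by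
      refine h.loc _ _ fun i hi => ?_
      cases i with
      | zero => simp [e0, e1]
      | succ i => exact hg (i + 2) (by omega)
    have e4 := ih (h.sub (g 0)) (shf g) (shf g') fun i hi => hg (i + 1) (by omega)
    rw [e4, e3, e2, e0, e1]

lemma LL_TT {c : ℝ} (hc : 0 < c) {k : ℕ} {M : ℝ} {φ : (ℕ → ℝ) → ℝ} (h : TT k M φ) :
    TT (k + 1) (4 * c * (k + 1) * M) (LL c k φ) where
  cont := by
    have h1 := (RR_cont c k (X := Unit) (fun _ => φ) (h.cont.comp continuous_snd)).comp
      (f := fun g : ℕ → ℝ => ((), g)) (by fun_prop)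
    have h2 : Continuous fun g : ℕ → ℝ => (aa c (g 0) * φ g + aa c (g 0) * φ (shf g)) / 2 := by
      have := h.cont; fun_prop
    exact h1.sub h2
  bd g := by
    have h1 := RR_bd hc k h.bd g
    have h2 : |(aa c (g 0) * φ g + aa c (g 0) * φ (shf g)) / 2| ≤ 2 * c * M := by
      have e1 : |aa c (g 0) * φ g| ≤ 2 * c * M := by
        rw [abs_mul]; exact mul_le_mul (aa_abs hc _) (h.bd _) (abs_nonneg _) (by linarith)
      have e2 : |aa c (g 0) * φ (shf g)| ≤ 2 * c * M := by
        rw [abs_mul]; exact mul_le_mul (aa_abs hc _) (h.bd _) (abs_nonneg _) (by linarith)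
      rw [abs_le] at e1 e2 ⊢
      constructor <;> linarith [e1.1, e1.2, e2.1, e2.2]
    have := mul_nonneg hc.le h.Mnn
    refine (abs_sub _ _).trans ((add_le_add h1 h2).trans ?_)
    nlinarith
  loc g g' hg := by
    have e1 := RR_loc c k h g g' hg
    have e2 : φ g = φ g' := h.loc _ _ fun i hi => hg i (by omega)
    have e3 : φ (shf g) = φ (shf g') := h.loc _ _ fun i hi => hg (i + 1) (by omega)
    have e0 := hg 0 (by omega)
    simp only [LL]
    rw [e0, e1, e2, e3]

section IIlem
variable {p : ℝ → ℝ}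

lemma Dens.integrable_mul (hp : Dens p) {ψ : ℝ → ℝ} (hψ : Continuous ψ) {M : ℝ}
    (hM : ∀ x, |ψ x| ≤ M) : Integrable (fun x => p x * ψ x) :=
  hp.int.mul_bdd hψ.aestronglyMeasurable (Filter.Eventually.of_forall hM)

lemma Dens.bound (hp : Dens p) {ψ : ℝ → ℝ} {M : ℝ} (hM : ∀ x, |ψ x| ≤ M) :
    |∫ x, p x * ψ x| ≤ M := by
  have e1 : M = ∫ x, p x * M := by rw [integral_mul_const, hp.one, one_mul]
  rw [e1]
  refine norm_integral_le_of_norm_le (f := fun x => p x * ψ x) (hp.int.mul_const _) ?_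
  refine Filter.Eventually.of_forall fun x => ?_
  rw [Real.norm_eq_abs, abs_mul, abs_of_nonneg (hp.nn x)]
  exact mul_le_mul_of_nonneg_left (hM x) (hp.nn x)

lemma II_bd (hp : Dens p) (k : ℕ) : ∀ {φ : (ℕ → ℝ) → ℝ} {M : ℝ}, (∀ g, |φ g| ≤ M) →
    |II p k φ| ≤ M := by
  induction k with
  | zero => intro φ M h; exact h _
  | succ k ih => intro φ M h; exact hp.bound fun x => ih fun s => h _

lemma II_cont (hp : Dens p) (k : ℕ) : ∀ {X : Type} [TopologicalSpace X]
    [FirstCountableTopology X] (Φ : X → (ℕ → ℝ) → ℝ) (M : ℝ),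
    Continuous (fun q : X × (ℕ → ℝ) => Φ q.1 q.2) → (∀ x g, |Φ x g| ≤ M) →
    Continuous (fun x => II p k (Φ x)) := by
  induction k with
  | zero =>
    intro X _ _ Φ M h _
    exact h.comp (f := fun x => (x, (0 : ℕ → ℝ))) (by fun_prop)
  | succ k ih =>
    intro X _ _ Φ M h hM
    simp only [II]
    have h1 := ih (X := X × ℝ) (fun x s => Φ x.1 (scons x.2 s)) M
      (h.comp (f := fun q : (X × ℝ) × (ℕ → ℝ) => (q.1.1, scons q.1.2 q.2)) (by fun_prop))
      (fun x s => hM _ _)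
    refine continuous_of_dominated (bound := fun g => p g * M) ?_ ?_ (hp.int.mul_const _) ?_
    · intro x
      exact hp.int.aestronglyMeasurable.mul
        (h1.comp (f := fun g => (x, g)) (by fun_prop)).aestronglyMeasurable
    · intro x
      refine Filter.Eventually.of_forall fun g => ?_
      rw [Real.norm_eq_abs, abs_mul, abs_of_nonneg (hp.nn g)]
      exact mul_le_mul_of_nonneg_left (II_bd hp k fun s => hM _ _) (hp.nn g)
    · refine Filter.Eventually.of_forall fun g => ?_
      exact continuous_const.mul (h1.comp (f := fun x => (x, g)) (by fun_prop))

lemma II_cont_sub (hp : Dens p) (k : ℕ) {φ : (ℕ → ℝ) → ℝ} {M : ℝ} (h : Continuous φ)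
    (hM : ∀ g, |φ g| ≤ M) : Continuous (fun g => II p k (fun s => φ (scons g s))) :=
  II_cont hp k (fun g s => φ (scons g s)) M (h.comp (by fun_prop)) (fun _ _ => hM _)

lemma II_add (hp : Dens p) (k : ℕ) : ∀ {φ₁ φ₂ : (ℕ → ℝ) → ℝ} {M₁ M₂ : ℝ}, Continuous φ₁ →
    Continuous φ₂ → (∀ g, |φ₁ g| ≤ M₁) → (∀ g, |φ₂ g| ≤ M₂) →
    II p k (fun s => φ₁ s + φ₂ s) = II p k φ₁ + II p k φ₂ := by
  induction k with
  | zero => intros; rfl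
  | succ k ih =>
    intro φ₁ φ₂ M₁ M₂ h1 h2 b1 b2
    simp only [II]
    rw [← integral_add]
    · congr 1; ext g
      rw [← mul_add, ← ih (φ₁ := fun s => φ₁ (scons g s)) (φ₂ := fun s => φ₂ (scons g s))
        (h1.comp (by fun_prop)) (h2.comp (by fun_prop)) (fun s => b1 _) (fun s => b2 _)]
    · exact hp.integrable_mul (II_cont_sub hp k h1 b1) fun x => II_bd hp k fun s => b1 _
    · exact hp.integrable_mul (II_cont_sub hp k h2 b2) fun x => II_bd hp k fun s => b2 _

lemma II_smul (k : ℕ) : ∀ (φ : (ℕ → ℝ) → ℝ) (a : ℝ),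
    II p k (fun s => a * φ s) = a * II p k φ := by
  induction k with
  | zero => intros; rfl
  | succ k ih =>
    intro φ a
    simp only [II]
    rw [← integral_const_mul]
    congr 1; ext g
    rw [ih]; ring

lemma II_sub (hp : Dens p) (k : ℕ) {φ₁ φ₂ : (ℕ → ℝ) → ℝ} {M₁ M₂ : ℝ} (h1 : Continuous φ₁)
    (h2 : Continuous φ₂) (b1 : ∀ g, |φ₁ g| ≤ M₁) (b2 : ∀ g, |φ₂ g| ≤ M₂) :
    II p k (fun s => φ₁ s - φ₂ s) = II p k φ₁ - II p k φ₂ := by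
  have := II_add hp k (φ₁ := φ₁) (φ₂ := fun s => (-1) * φ₂ s) h1 (by fun_prop) b1
    (fun g => by simpa using b2 g)
  rw [II_smul] at this
  rw [sub_eq_add_neg, ← neg_one_mul, ← this]
  congr 1; ext s; ring

lemma II_loc (hp : Dens p) (k : ℕ) : ∀ {φ : (ℕ → ℝ) → ℝ} {M : ℝ}, TT k M φ →
    II p (k + 1) φ = II p k φ := by
  induction k with
  | zero =>
    intro φ M h
    simp only [II]
    have : ∀ g : ℝ, φ (scons g 0) = φ 0 := fun g => h.loc _ _ (by simp)
    simp_rw [this, integral_mul_const, hp.one, one_mul]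
  | succ k ih =>
    intro φ M h
    rw [II, II]
    congr 1; ext g
    rw [ih (h.sub g)]

end IIlem
end MM

open MeasureTheory
open scoped ENNReal

namespace MM

def BC (ψ : ℝ → ℝ) : Prop := Continuous ψ ∧ ∃ M, ∀ x, |ψ x| ≤ M

lemma BC.add {f g : ℝ → ℝ} (hf : BC f) (hg : BC g) : BC (fun x => f x + g x) := by
  obtain ⟨h1, M, h2⟩ := hf
  obtain ⟨h3, M', h4⟩ := hg
  exact ⟨h1.add h3, M + M', fun x => (abs_add_le _ _).trans (add_le_add (h2 x) (h4 x))⟩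

lemma BC.mul {f g : ℝ → ℝ} (hf : BC f) (hg : BC g) : BC (fun x => f x * g x) := by
  obtain ⟨h1, M, h2⟩ := hf
  obtain ⟨h3, M', h4⟩ := hg
  refine ⟨h1.mul h3, M * M', fun x => ?_⟩
  rw [abs_mul]
  exact mul_le_mul (h2 x) (h4 x) (abs_nonneg _) ((abs_nonneg _).trans (h2 x))

lemma BC.const (a : ℝ) : BC (fun _ => a) := ⟨continuous_const, |a|, fun _ => le_rfl⟩

lemma BC.aa {c : ℝ} (hc : 0 < c) : BC (aa c) := ⟨aa_cont c, 2 * c, fun x => aa_abs hc x⟩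

lemma BC.II {p : ℝ → ℝ} (hp : Dens p) (k : ℕ) (Φ : ℝ → (ℕ → ℝ) → ℝ) {M : ℝ}
    (h : Continuous (fun q : ℝ × (ℕ → ℝ) => Φ q.1 q.2)) (hM : ∀ x g, |Φ x g| ≤ M) :
    BC (fun g => II p k (Φ g)) :=
  ⟨II_cont hp k Φ M h hM, M, fun x => II_bd hp k (hM x)⟩

lemma BC.intg {p ψ : ℝ → ℝ} (hp : Dens p) (h : BC ψ) : Integrable (fun x => p x * ψ x) := by
  obtain ⟨h1, M, h2⟩ := h
  exact hp.integrable_mul h1 h2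

lemma BC.conv {p ψ : ℝ → ℝ} (hp : Dens p) (h : BC ψ) :
    BC (fun g => ∫ h, p h * ψ (g + h)) := by
  obtain ⟨h1, M, h2⟩ := h
  exact BC.II hp 1 (fun g s => ψ (g + s 0)) (by fun_prop) (fun _ _ => h2 _)

lemma BC.convw {p ψ w : ℝ → ℝ} (hp : Dens p) (h : BC ψ) (hw : BC w) :
    BC (fun g => ∫ h, p h * (w h * ψ (g + h))) := by
  obtain ⟨h1, M, h2⟩ := h
  obtain ⟨h3, M', h4⟩ := hw
  refine BC.II hp 1 (fun g s => w (s 0) * ψ (g + s 0)) (M := M' * M) (by fun_prop) (fun _ _ => ?_)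
  rw [abs_mul]
  exact mul_le_mul (h4 _) (h2 _) (abs_nonneg _) ((abs_nonneg _).trans (h4 0))

lemma II_wt {p : ℝ → ℝ} (k : ℕ) (w : ℝ → ℝ) (χ : (ℕ → ℝ) → ℝ) :
    II p (k + 1) (fun s => w (s 0) * χ s)
      = ∫ h, p h * (w h * II p k (fun s => χ (scons h s))) := by
  simp only [II, scons_zero, II_smul]

lemma fub {p ψ w : ℝ → ℝ} (hp : Dens p) (h : BC ψ) (hw : BC w) :
    (∫ g, p g * ∫ h, p h * (w h * ψ (g + h))) = ∫ g, p g * (w g * ∫ h, p h * ψ (g + h)) := by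
  obtain ⟨h1, M, h2⟩ := h
  obtain ⟨h3, M', h4⟩ := hw
  simp_rw [← integral_const_mul]
  rw [integral_integral_swap]
  · congr 1; ext x; congr 1; ext y; rw [add_comm y x]; ring
  · have e : Integrable (fun q : ℝ × ℝ => p q.1 * p q.2) (volume.prod volume) :=
      hp.int.mul_prod hp.int
    have := e.mul_bdd (g := fun q : ℝ × ℝ => w q.2 * ψ (q.1 + q.2)) (c := M' * M)
      (by apply Continuous.aestronglyMeasurable; fun_prop)
      (Filter.Eventually.of_forall fun q => by
        rw [Real.norm_eq_abs, abs_mul]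
        exact mul_le_mul (h4 _) (h2 _) (abs_nonneg _) ((abs_nonneg _).trans (h4 0)))
    refine this.congr (Filter.Eventually.of_forall fun q => ?_)
    simp only [Function.uncurry]; ring

lemma lin3 {α : Type*} [MeasurableSpace α] {μ : Measure α} {F1 F2 F3 : α → ℝ}
    (h1 : Integrable F1 μ) (h2 : Integrable F2 μ)
    (h3 : Integrable F3 μ) (a1 a2 a3 : ℝ) :
    ∫ x, (a1 * F1 x + a2 * F2 x + a3 * F3 x) ∂μ
      = a1 * (∫ x, F1 x ∂μ) + a2 * (∫ x, F2 x ∂μ) + a3 * ∫ x, F3 x ∂μ := by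
  have := integral_add ((h1.const_mul a1).add (h2.const_mul a2)) (h3.const_mul a3)
  simp only [Pi.add_apply] at this
  rw [this, integral_add (h1.const_mul a1) (h2.const_mul a2)]
  simp only [integral_const_mul]

lemma lin5 {F1 F2 F3 F4 F5 : ℝ → ℝ} (h1 : Integrable F1) (h2 : Integrable F2)
    (h3 : Integrable F3) (h4 : Integrable F4) (h5 : Integrable F5) (a1 a2 a3 a4 a5 : ℝ) :
    ∫ x, (a1 * F1 x + a2 * F2 x + a3 * F3 x + a4 * F4 x + a5 * F5 x)
      = a1 * (∫ x, F1 x) + a2 * (∫ x, F2 x) + a3 * (∫ x, F3 x) + a4 * (∫ x, F4 x)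
        + a5 * ∫ x, F5 x := by
  have h123 : Integrable (fun x => a1 * F1 x + a2 * F2 x + a3 * F3 x) :=
    ((h1.const_mul a1).add (h2.const_mul a2)).add (h3.const_mul a3)
  have := lin3 h123 h4 h5 1 a4 a5
  simp only [one_mul] at this
  rw [this, lin3 h1 h2 h3]

section AB
variable {c : ℝ} {p : ℝ → ℝ}

lemma wt_mul_bd {c M : ℝ} (hc : 0 < c) {φ : (ℕ → ℝ) → ℝ} (h : ∀ g, |φ g| ≤ M) (x : ℝ) (g) :
    |aa c x * φ g| ≤ 2 * c * M := by
  rw [abs_mul]; exact mul_le_mul (aa_abs hc _) (h _) (abs_nonneg _) (by linarith)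

/-- the merge part against a weight -/
lemma II_merge (hp : Dens p) {k : ℕ} {M : ℝ} {φ : (ℕ → ℝ) → ℝ} (h : TT (k + 1) M φ) {w : ℝ → ℝ}
    (hw : BC w) (g : ℝ) :
    II p (k + 1) (fun s => w (s 0) * (φ (scons (g + s 0) (shf s)) - φ (scons g s)))
      = (∫ y, p y * (w y * II p k (fun s => φ (scons (g + y) s))))
        - II p (k + 1) (fun s => w (s 0) * φ (scons g s)) := by
  obtain ⟨h3, M', h4⟩ := hw
  have hb := h.bd
  have hcon := h.cont
  have M'0 := (abs_nonneg _).trans (h4 0)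
  have e1 := II_sub hp (k + 1) (φ₁ := fun s => w (s 0) * φ (scons (g + s 0) (shf s)))
    (φ₂ := fun s => w (s 0) * φ (scons g s)) (M₁ := M' * M) (M₂ := M' * M)
    (by fun_prop) (by fun_prop)
    (fun s => by rw [abs_mul]; exact mul_le_mul (h4 _) (hb _) (abs_nonneg _) M'0)
    (fun s => by rw [abs_mul]; exact mul_le_mul (h4 _) (hb _) (abs_nonneg _) M'0)
  simp_rw [mul_sub]
  rw [e1, II_wt]
  simp

noncomputable def ps (p : ℝ → ℝ) (k : ℕ) (φ : (ℕ → ℝ) → ℝ) (g : ℝ) : ℝ :=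
  II p k (fun s => φ (scons g s))

lemma ps_BC (hp : Dens p) {k : ℕ} {M : ℝ} {φ : (ℕ → ℝ) → ℝ} (h : TT (k + 1) M φ) :
    BC (ps p k φ) :=
  BC.II hp k (fun g s => φ (scons g s)) (h.cont.comp (by fun_prop)) (fun _ _ => h.bd _)

lemma IIQ_BC (hc : 0 < c) (hp : Dens p) {k : ℕ} {M : ℝ} {φ : (ℕ → ℝ) → ℝ} (h : TT (k + 1) M φ) :
    BC (fun g => II p (k + 1) (QQ c k (fun s => φ (scons g s)))) :=
  BC.II hp (k + 1) (fun g => QQ c k (fun s => φ (scons g s)))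
    (QQ_cont c k (X := ℝ) (fun g s => φ (scons g s)) (h.cont.comp (by fun_prop)))
    (fun _ _ => QQ_bd hc k (fun _ => h.bd _) _)

lemma QQ_contφ (k : ℕ) {φ : (ℕ → ℝ) → ℝ} (h : Continuous φ) : Continuous (QQ c k φ) :=
  (QQ_cont c k (X := Unit) (fun _ => φ) (h.comp continuous_snd)).comp
      (f := fun g : ℕ → ℝ => ((), g)) (by fun_prop)

lemma RR_contφ (k : ℕ) {φ : (ℕ → ℝ) → ℝ} (h : Continuous φ) : Continuous (RR c k φ) :=
  (RR_cont c k (X := Unit) (fun _ => φ) (h.comp continuous_snd)).comp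
      (f := fun g : ℕ → ℝ => ((), g)) (by fun_prop)

lemma Q_step (hc : 0 < c) (hp : Dens p) {k : ℕ} {M : ℝ} {φ : (ℕ → ℝ) → ℝ} (h : TT (k + 1) M φ)
    (g : ℝ) :
    II p (k + 1) (fun s => QQ c (k + 1) φ (scons g s))
      = aa c g * (∫ y, p y * ps p k φ (g + y)) - aa c g * ps p k φ g
        + II p (k + 1) (QQ c k (fun s => φ (scons g s))) := by
  have hcon := h.cont
  simp only [QQ]
  have e := II_add hp (k + 1) (φ₁ := fun s => aa c g * (φ (scons (g + s 0) (shf s)) - φ (scons g s)))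
    (φ₂ := QQ c k (fun s => φ (scons g s))) (M₁ := 2 * c * (M + M)) (M₂ := 4 * c * k * M)
    (by fun_prop) (QQ_contφ k (hcon.comp (by fun_prop)))
    (fun s => by
      rw [abs_mul]
      exact mul_le_mul (aa_abs hc _) ((abs_sub _ _).trans (add_le_add (h.bd _) (h.bd _)))
        (abs_nonneg _) (by linarith))
    (fun s => QQ_bd hc k (fun _ => h.bd _) _)
  have e2 := II_merge hp h (w := fun _ => 1) (BC.const 1) g
  simp only [one_mul] at e2
  rw [II_loc hp k (h.sub g)] at e2
  simp only [scons_zero, shf_scons]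
  refine Eq.trans e ?_
  rw [II_smul, e2]
  simp only [ps]
  ring

lemma R_step (hc : 0 < c) (hp : Dens p) {k : ℕ} {M : ℝ} {φ : (ℕ → ℝ) → ℝ} (h : TT (k + 1) M φ)
    (g : ℝ) :
    II p (k + 1) (fun s => RR c (k + 1) φ (scons g s))
      = 1 / 2 * (aa c g * (∫ y, p y * ps p k φ (g + y)) - aa c g * ps p k φ g)
        + 1 / 2 * ((∫ y, p y * (aa c y * ps p k φ (g + y)))
          - II p (k + 1) (fun s => aa c (s 0) * φ (scons g s)))
        + II p (k + 1) (RR c k (fun s => φ (scons g s))) := by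
  have hcon := h.cont
  simp only [RR]
  have bb : ∀ s, |(aa c g + aa c (s 0)) / 2 * (φ (scons (g + s 0) (shf s)) - φ (scons g s))|
      ≤ 2 * c * (M + M) := fun s => by
      rw [abs_mul]
      refine mul_le_mul ?_ ((abs_sub _ _).trans (add_le_add (h.bd _) (h.bd _)))
        (abs_nonneg _) (by linarith)
      have := abs_le.1 (aa_abs hc g); have := abs_le.1 (aa_abs hc (s 0))
      rw [abs_le]; constructor <;> linarith
  have e := II_add hp (k + 1)
    (φ₁ := fun s => (aa c g + aa c (s 0)) / 2 * (φ (scons (g + s 0) (shf s)) - φ (scons g s)))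
    (φ₂ := RR c k (fun s => φ (scons g s))) (M₁ := 2 * c * (M + M)) (M₂ := 4 * c * k * M)
    (by fun_prop) (RR_contφ k (hcon.comp (by fun_prop))) bb
    (fun s => RR_bd hc k (fun _ => h.bd _) _)
  have e2 := II_merge hp h (w := fun y => (aa c g + aa c y) / 2)
    (by simpa [div_eq_mul_inv] using ((BC.const (aa c g)).add (BC.aa hc)).mul (BC.const 2⁻¹)) g
  have l1 := II_loc hp k (h.sub g)
  refine Eq.trans e ?_
  rw [e2]
  have e3 : (∫ y, p y * ((aa c g + aa c y) / 2 * II p k fun s => φ (scons (g + y) s)))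
      = 1 / 2 * (aa c g * (∫ y, p y * ps p k φ (g + y)))
        + 1 / 2 * (∫ y, p y * (aa c y * ps p k φ (g + y))) := by
    have hs : BC (fun y => ps p k φ (g + y)) := by
      obtain ⟨a, M', b⟩ := ps_BC hp h
      exact ⟨a.comp (by fun_prop), M', fun _ => b _⟩
    rw [← integral_const_mul, ← integral_const_mul, ← integral_const_mul, ← integral_add]
    · congr 1; ext y; simp only [ps]; ring
    · exact ((hs.intg hp).const_mul _).const_mul _
    · exact ((((BC.aa hc).mul hs)).intg hp).const_mul _
  have e4 : II p (k + 1) (fun s => (aa c g + aa c (s 0)) / 2 * φ (scons g s))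
      = 1 / 2 * (aa c g * ps p k φ g) + 1 / 2 * II p (k + 1) (fun s => aa c (s 0) * φ (scons g s)) := by
    have := II_add hp (k + 1) (φ₁ := fun s => (aa c g / 2) * φ (scons g s))
      (φ₂ := fun s => 1 / 2 * (aa c (s 0) * φ (scons g s))) (M₁ := 2 * c * M)
      (M₂ := 1 / 2 * (2 * c * M)) (by fun_prop) (by fun_prop)
      (fun s => by
        rw [abs_mul]; refine mul_le_mul ?_ (h.bd _) (abs_nonneg _) (by linarith)
        have := abs_le.1 (aa_abs hc g)
        rw [abs_le]; constructor <;> linarith)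
      (fun s => by
        rw [abs_mul, abs_of_pos (by norm_num : (0:ℝ) < 1/2)]
        exact mul_le_mul_of_nonneg_left (wt_mul_bd hc h.bd _ _) (by norm_num))
    rw [II_smul, II_smul, l1] at this
    refine Eq.trans (congrArg _ (funext fun s => ?_)) (this.trans ?_)
    · ring
    · simp only [ps]; ring
  rw [e3, e4]
  ring

lemma lemA (hc : 0 < c) (hp : Dens p) (k : ℕ) : ∀ {M : ℝ} {φ : (ℕ → ℝ) → ℝ}, TT k M φ →
    II p (k + 1) (RR c k φ) = II p (k + 1) (QQ c k φ)
      + 1 / 2 * II p (k + 1) (fun s => aa c (s 0) * φ s) - 1 / 2 * (∫ x, p x * aa c x) * II p k φ := by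
  induction k with
  | zero =>
    intro M φ h
    rw [II_wt]
    have : ∀ y, II p 0 (fun s => φ (scons y s)) = φ 0 := fun y => h.loc _ _ (by simp)
    simp_rw [this, ← mul_assoc, integral_mul_const]
    simp [II, RR, QQ]
    ring
  | succ k ih =>
    intro M φ h
    have hps := ps_BC hp h
    have eR : ∀ g, II p (k + 1) (fun s => RR c (k + 1) φ (scons g s))
      = (1 / 2 * (aa c g * (∫ y, p y * ps p k φ (g + y))) + (-1 / 2) * (aa c g * ps p k φ g))
        + 1 / 2 * ((∫ y, p y * (aa c y * ps p k φ (g + y))))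
        + (II p (k + 1) (QQ c k (fun s => φ (scons g s))) +
          (- 1 / 2 * (∫ x, p x * aa c x)) * ps p k φ g) := by
      intro g
      rw [R_step hc hp h, ih (h.sub g)]
      simp only [ps]
      ring
    have i1 := ((BC.aa hc).mul (BC.conv hp hps)).intg hp
    have i2 := ((BC.aa hc).mul hps).intg hp
    have i3 := (BC.convw hp hps (BC.aa hc)).intg hp
    have i4 := (IIQ_BC hc hp h).intg hp
    have i5 := hps.intg hp
    have L : II p (k + 1 + 1) (RR c (k + 1) φ)
        = (1 / 2 * (∫ g, p g * (aa c g * (∫ y, p y * ps p k φ (g + y))))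
          + (-1 / 2) * (∫ g, p g * (aa c g * ps p k φ g)))
        + 1 / 2 * (∫ g, p g * ((∫ y, p y * (aa c y * ps p k φ (g + y)))))
        + ((∫ g, p g * II p (k + 1) (QQ c k (fun s => φ (scons g s)))) +
          (- 1 / 2 * (∫ x, p x * aa c x)) * ∫ g, p g * ps p k φ g) := by
      rw [II]
      simp_rw [eR]
      refine Eq.trans (integral_congr_ae (Filter.Eventually.of_forall fun g => ?_))
        ((lin5 i1 i2 i3 i4 i5 (1 / 2) (-1 / 2) (1 / 2) 1 (- 1 / 2 * (∫ x, p x * aa c x))).trans ?_)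
      · simp only; ring
      · ring
    have Q : II p (k + 1 + 1) (QQ c (k + 1) φ)
        = (∫ g, p g * (aa c g * (∫ y, p y * ps p k φ (g + y))))
          - (∫ g, p g * (aa c g * ps p k φ g))
          + (∫ g, p g * II p (k + 1) (QQ c k (fun s => φ (scons g s)))) := by
      rw [II]
      simp_rw [Q_step hc hp h]
      refine Eq.trans (integral_congr_ae (Filter.Eventually.of_forall fun g => ?_))
        ((lin3 i1 i2 i4 1 (-1) 1).trans ?_)
      · simp only; ring
      · ring
    have W : II p (k + 1 + 1) (fun s => aa c (s 0) * φ s) = ∫ g, p g * (aa c g * ps p k φ g) := by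
      rw [II_wt]
      congr 1; ext g
      rw [II_loc hp k (h.sub g)]; rfl
    have Z : II p (k + 1) φ = ∫ g, p g * ps p k φ g := rfl
    rw [L, Q, W, Z, fub hp hps (BC.aa hc)]
    ring

lemma Q_int (hc : 0 < c) (hp : Dens p) {k : ℕ} {M : ℝ} {φ : (ℕ → ℝ) → ℝ} (h : TT (k + 1) M φ) :
    II p (k + 1 + 1) (QQ c (k + 1) φ)
        = ((∫ g, aa c g * p g * (∫ y, p y * ps p k φ (g + y)))
          - (∫ g, aa c g * p g * ps p k φ g))
          + (∫ g, p g * II p (k + 1) (QQ c k (fun s => φ (scons g s)))) := by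
  have hps := ps_BC hp h
  have i1 := ((BC.aa hc).mul (BC.conv hp hps)).intg hp
  have i2 := ((BC.aa hc).mul hps).intg hp
  have i4 := (IIQ_BC hc hp h).intg hp
  rw [II]
  simp_rw [Q_step hc hp h]
  have e1 : (∫ g, aa c g * p g * (∫ y, p y * ps p k φ (g + y)))
    = ∫ g, p g * (aa c g * (∫ y, p y * ps p k φ (g + y))) := by congr 1; ext g; ring
  have e2 : (∫ g, aa c g * p g * ps p k φ g) = ∫ g, p g * (aa c g * ps p k φ g) := by
    congr 1; ext g; ring
  rw [e1, e2]
  refine Eq.trans (integral_congr_ae (Filter.Eventually.of_forall fun g => ?_))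
    ((lin3 i1 i2 i4 1 (-1) 1).trans ?_)
  · simp only; ring
  · ring

lemma L_int (hc : 0 < c) (hp : Dens p) {k : ℕ} {M : ℝ} {φ : (ℕ → ℝ) → ℝ} (h : TT k M φ) :
    II p (k + 1) (LL c k φ) = II p (k + 1) (QQ c k φ) - (∫ x, p x * aa c x) * II p k φ := by
  have hcon := h.cont
  have e1 := II_sub hp (k + 1) (φ₁ := RR c k φ)
    (φ₂ := fun g => 1 / 2 * (aa c (g 0) * φ g + aa c (g 0) * φ (shf g)))
    (M₁ := 4 * c * k * M) (M₂ := 1 / 2 * (2 * c * M + 2 * c * M)) (RR_contφ k hcon) (by fun_prop)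
    (RR_bd hc k h.bd) (fun s => by
        rw [abs_mul, abs_of_pos (by norm_num : (0:ℝ) < 1/2)]
        exact mul_le_mul_of_nonneg_left ((abs_add_le _ _).trans (add_le_add
          (wt_mul_bd hc h.bd _ _) (wt_mul_bd hc h.bd _ _))) (by norm_num))
  have e2 := II_add hp (k + 1) (φ₁ := fun g => aa c (g 0) * φ g)
    (φ₂ := fun g => aa c (g 0) * φ (shf g)) (M₁ := 2 * c * M) (M₂ := 2 * c * M)
    (by fun_prop) (by fun_prop) (fun _ => wt_mul_bd hc h.bd _ _) (fun _ => wt_mul_bd hc h.bd _ _)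
  have e3 : II p (k + 1) (fun g => aa c (g 0) * φ (shf g)) = (∫ x, p x * aa c x) * II p k φ := by
    rw [II_wt]
    simp only [shf_scons, ← mul_assoc]
    rw [integral_mul_const]
  have e4 : LL c k φ = fun g => RR c k φ g - 1 / 2 * (aa c (g 0) * φ g + aa c (g 0) * φ (shf g)) := by
    ext g; simp only [LL]; ring
  rw [e4, e1, II_smul, e2, e3, lemA hc hp k h]
  ring

end AB
end MM

open MeasureTheory
open scoped ENNReal

namespace MM

section C
variable {c K : ℝ} {p : ℝ → ℝ → ℝ} {u : ℝ → ℝ}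

lemma GoodP.dens (hG : GoodP c K p u) {t : ℝ} (ht : t ∈ Set.Icc (0:ℝ) 1) : Dens (p t) :=
  ⟨hG.int t ht, hG.nonneg t ht, hG.one t ht⟩

lemma lemC (hc : 0 < c) (hG : GoodP c K p u) (k : ℕ) : ∃ C, 0 ≤ C ∧ ∀ M φ, TT k M φ →
    ∀ s ∈ Set.Icc (0:ℝ) 1, ∀ t ∈ Set.Icc (0:ℝ) 1,
    |II (p s) k φ - II (p t) k φ| ≤ C * M * |s - t| ∧
    |II (p s) k φ - II (p t) k φ - (s - t) * II (p t) (k + 1) (QQ c k φ)| ≤ C * M * (s - t) ^ 2 := by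
  induction k with
  | zero =>
    refine ⟨0, le_rfl, fun M φ h s hs t ht => ?_⟩
    simp [II, QQ]
  | succ k ih =>
    obtain ⟨C, hC, ih⟩ := ih
    have hK := hG.Knn
    refine ⟨K + C + K * C, by positivity, fun M φ h s hs t ht => ?_⟩
    have hM := h.Mnn
    have ds := hG.dens hs
    have dt := hG.dens ht
    have bs := ps_BC ds h
    have bt := ps_BC dt h
    have bq := IIQ_BC hc dt h
    have Mt : ∀ x, |ps (p t) k φ x| ≤ M := fun x => II_bd dt k fun _ => h.bd _
    have i1 := bs.intg ds
    have i2 := bt.intg ds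
    have i3 := bs.intg dt
    have i4 := bt.intg dt
    have i5 := bq.intg dt
    have es : II (p s) (k + 1) φ = ∫ x, p s x * ps (p s) k φ x := rfl
    have et : II (p t) (k + 1) φ = ∫ x, p t x * ps (p t) k φ x := rfl
    have hd : ∀ x, |ps (p s) k φ x - ps (p t) k φ x| ≤ C * M * |s - t| :=
      fun x => (ih M _ (h.sub x) s hs t ht).1
    have hd2 : ∀ x, |ps (p s) k φ x - ps (p t) k φ x
        - (s - t) * II (p t) (k + 1) (QQ c k (fun s => φ (scons x s)))| ≤ C * M * (s - t) ^ 2 :=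
      fun x => (ih M _ (h.sub x) s hs t ht).2
    have B1 := hG.lip s hs t ht _ bt.1.measurable M Mt
    have B2 := hG.tay s hs t ht _ bt.1.measurable M Mt
    have B3 := ds.bound hd
    have e3 : ∫ x, p s x * (ps (p s) k φ x - ps (p t) k φ x)
      = (∫ x, p s x * ps (p s) k φ x) - ∫ x, p s x * ps (p t) k φ x := by
      simp_rw [mul_sub]; exact integral_sub i1 i2
    have e4 : ∫ x, p t x * (ps (p s) k φ x - ps (p t) k φ x)
      = (∫ x, p t x * ps (p s) k φ x) - ∫ x, p t x * ps (p t) k φ x := by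
      simp_rw [mul_sub]; exact integral_sub i3 i4
    have B4 := hG.lip s hs t ht _ (bs.1.sub bt.1).measurable _ hd
    have B5 := dt.bound hd2
    have e5 : ∫ x, p t x * (ps (p s) k φ x - ps (p t) k φ x
        - (s - t) * II (p t) (k + 1) (QQ c k (fun s => φ (scons x s))))
      = (∫ x, p t x * ps (p s) k φ x) - (∫ x, p t x * ps (p t) k φ x)
        - (s - t) * ∫ x, p t x * II (p t) (k + 1) (QQ c k (fun s => φ (scons x s))) := by
      refine Eq.trans (integral_congr_ae (Filter.Eventually.of_forall fun g => ?_))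
        ((lin3 i3 i4 i5 1 (-1) (-(s - t))).trans ?_)
      · simp only; ring
      · ring
    simp only [Pi.sub_apply] at B4
    rw [e3] at B3 B4
    rw [e4] at B4
    rw [e5] at B5
    rw [es, et, Q_int hc dt h]
    have hKC : 0 ≤ K * C * M * |s - t| := by positivity
    have sq : K * (C * M * |s - t|) * |s - t| = K * C * M * (s - t) ^ 2 := by
      rw [← sq_abs (s - t)]; ring
    rw [sq] at B4
    rw [abs_le] at B1 B2 B3 B4 B5
    rw [abs_le, abs_le]
    refine ⟨⟨?_, ?_⟩, ?_, ?_⟩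
    · linarith [B1.1, B3.1]
    · linarith [B1.2, B3.2]
    · linarith [B2.1, B4.1, B5.1]
    · linarith [B2.2, B4.2, B5.2]

noncomputable def mu (p : ℝ → ℝ → ℝ) (u : ℝ → ℝ) (k : ℕ) (φ : (ℕ → ℝ) → ℝ) (t : ℝ) : ℝ :=
  u t * II (p t) k φ

lemma mu_taylor (hc : 0 < c) (hG : GoodP c K p u) (k : ℕ) : ∃ C, 0 ≤ C ∧ ∀ M φ, TT k M φ →
    ∀ s ∈ Set.Icc (0:ℝ) 1, ∀ t ∈ Set.Icc (0:ℝ) 1,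
    |mu p u k φ s - mu p u k φ t - (s - t) * mu p u (k + 1) (LL c k φ) t| ≤ C * M * (s - t) ^ 2 := by
  obtain ⟨C, hC, h⟩ := lemC hc hG k
  have hK := hG.Knn
  refine ⟨K * C + K + (2 * c * K) * C + K * C, by positivity, fun M φ hφ s hs t ht => ?_⟩
  obtain ⟨h1, h2⟩ := h M φ hφ s hs t ht
  have hM := hφ.Mnn
  have ds := hG.dens hs
  have dt := hG.dens ht
  have hA : |∫ x, p t x * aa c x| ≤ 2 * c := dt.bound (aa_abs hc)
  have eA : (∫ x, aa c x * p t x) = ∫ x, p t x * aa c x := by simp_rw [mul_comm]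
  have h3 := hG.utay s hs t ht
  rw [eA] at h3
  have bs : |II (p s) k φ| ≤ M := II_bd ds k hφ.bd
  have hu := hG.unn t ht
  have huK := hG.ule t ht
  simp only [mu]
  rw [L_int hc dt hφ]
  set A := ∫ x, p t x * aa c x
  set Q := II (p t) (k + 1) (QQ c k φ)
  set Is := II (p s) k φ
  set It := II (p t) k φ
  have key : u s * Is - u t * It - (s - t) * (u t * (Q - A * It))
      = u t * (Is - It - (s - t) * Q) + (u s - u t + (s - t) * (u t * A)) * Is
        - ((s - t) * (u t * A)) * (Is - It) := by ring
  rw [key]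
  have t1 : |u t * (Is - It - (s - t) * Q)| ≤ K * (C * M * (s - t) ^ 2) := by
    rw [abs_mul, abs_of_nonneg hu]
    exact mul_le_mul huK h2 (abs_nonneg _) hK
  have t2 : |(u s - u t + (s - t) * (u t * A)) * Is| ≤ K * (s - t) ^ 2 * M := by
    rw [abs_mul]
    exact mul_le_mul h3 bs (abs_nonneg _) (by positivity)
  have t3 : |((s - t) * (u t * A)) * (Is - It)| ≤ (|s - t| * (K * (2 * c))) * (C * M * |s - t|) := by
    rw [abs_mul, abs_mul (s - t), abs_mul (u t), abs_of_nonneg hu]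
    refine mul_le_mul (mul_le_mul_of_nonneg_left (mul_le_mul huK hA (abs_nonneg _) hK)
      (abs_nonneg _)) h1 (abs_nonneg _) (by positivity)
  have sq : (|s - t| * (K * (2 * c))) * (C * M * |s - t|) = 2 * c * K * C * M * (s - t) ^ 2 := by
    rw [← sq_abs (s - t)]; ring
  rw [sq] at t3
  have p1 : 0 ≤ K * C * M * (s - t) ^ 2 := by positivity
  refine (abs_sub _ _).trans ((add_le_add ((abs_add_le _ _).trans (add_le_add t1 t2)) t3).trans ?_)
  linarith

end C
end MM

open MeasureTheory
open scoped ENNReal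

namespace MM

def Ch (r : ℝ) (S : Finset ℝ) (y x : ℝ) : Prop :=
  |x - y| < r ∧ ∀ x' ∈ S, |x - y| < |x' - y| ∨ (|x - y| = |x' - y| ∧ x ≤ x')

open Classical in
noncomputable def stp (r : ℝ) (S : Finset ℝ) (y : ℝ) : Finset ℝ := S.filter fun x => ¬ Ch r S y x

lemma Ch_unique {r : ℝ} {S : Finset ℝ} {y x x' : ℝ} (hx : x ∈ S) (hx' : x' ∈ S)
    (h : Ch r S y x) (h' : Ch r S y x') : x = x' := by
  rcases h.2 x' hx' with a | a <;> rcases h'.2 x hx with b | b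
  · exact absurd (a.trans b) (lt_irrefl _)
  · exact absurd b.1 a.ne'
  · exact absurd a.1 b.ne'
  · exact le_antisymm a.2 b.2

lemma stp_of_Ch {r : ℝ} {S : Finset ℝ} {y x : ℝ} (hx : x ∈ S) (h : Ch r S y x) :
    stp r S y = S.erase x := by
  classical
  ext z
  simp only [stp, Finset.mem_filter, Finset.mem_erase]
  constructor
  · rintro ⟨a, b⟩
    exact ⟨fun e => b (e ▸ h), a⟩
  · rintro ⟨a, b⟩
    exact ⟨b, fun e => a (Ch_unique b hx e h)⟩

lemma stp_of_not {r : ℝ} {S : Finset ℝ} {y : ℝ} (h : ∀ x ∈ S, ¬ Ch r S y x) :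
    stp r S y = S := by
  classical
  simp only [stp]
  exact Finset.filter_true_of_mem h

lemma closestStep_spec {r : ℝ} (hr : 0 < r) (S : Finset ℝ) (y : ℝ) :
    (∃ x ∈ S, Ch r S y x ∧ closestStep (ENNReal.ofReal r) S y = (S.erase x, some x)) ∨
    ((∀ x ∈ S, ¬ Ch r S y x) ∧ closestStep (ENNReal.ofReal r) S y = (S, none)) := by
  have hlt : ∀ x, ENNReal.ofReal |x - y| < ENNReal.ofReal r ↔ |x - y| < r :=
    fun x => ENNReal.ofReal_lt_ofReal_iff hr
  by_cases h : (S.filter fun x => ENNReal.ofReal |x - y| < ENNReal.ofReal r).Nonempty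
  · left
    simp only [closestStep, dif_pos h]
    set A := S.filter fun x => ENNReal.ofReal |x - y| < ENNReal.ofReal r with hA
    set m := A.inf' h fun x => |x - y| with hm
    have hne : (A.filter fun x => |x - y| = m).Nonempty := by
      obtain ⟨b, hb, he⟩ := Finset.exists_mem_eq_inf' h (fun x : ℝ => |x - y|)
      exact ⟨b, Finset.mem_filter.2 ⟨hb, he.symm⟩⟩
    have hx0 := Finset.min'_mem _ hne
    set x0 := (A.filter fun x => |x - y| = m).min' hne with hx0d
    have h1 := (Finset.mem_filter.1 hx0)
    have h2 := Finset.mem_filter.1 h1.1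
    refine ⟨x0, h2.1, ⟨(hlt _).1 h2.2, fun x' hx' => ?_⟩, rfl⟩
    by_cases hxr : |x' - y| < r
    · have hxA : x' ∈ A := Finset.mem_filter.2 ⟨hx', (hlt _).2 hxr⟩
      have : m ≤ |x' - y| := Finset.inf'_le (fun x => |x - y|) hxA
      rcases this.lt_or_eq with e | e
      · left; rw [h1.2]; exact e
      · right
        refine ⟨by rw [h1.2]; exact e, Finset.min'_le _ _ (Finset.mem_filter.2 ⟨hxA, e.symm⟩)⟩
    · left
      exact ((hlt _).1 h2.2).trans_le (not_lt.1 hxr)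
  · right
    refine ⟨fun x hx hC => h ⟨x, Finset.mem_filter.2 ⟨hx, (hlt _).2 hC.1⟩⟩, ?_⟩
    simp only [closestStep, dif_neg h]

noncomputable def st (r : ℝ) (S : Finset ℝ) (y : ℕ → ℝ) : ℕ → Finset ℝ
  | 0 => S
  | m + 1 => stp r (st r S y m) (y m)

lemma closestState_spec {r : ℝ} (hr : 0 < r) (X : Finset ℝ) (y : ℕ → ℝ) (m : ℕ) :
    (closestState (ENNReal.ofReal r) X y m).1 = st r X y m ∧
    (closestState (ENNReal.ofReal r) X y m).2.1 + (st r X y m).card = X.card := by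
  induction m with
  | zero => simp [closestState, st]
  | succ m ih =>
    obtain ⟨i1, i2⟩ := ih
    rw [closestState, st]
    rw [i1]
    rcases closestStep_spec hr (st r X y m) (y m) with ⟨x, hx, hC, e⟩ | ⟨h, e⟩
    · rw [e]
      simp only
      rw [stp_of_Ch hx hC]
      refine ⟨rfl, ?_⟩
      have := Finset.card_erase_add_one hx
      omega
    · rw [e]
      simp only
      rw [stp_of_not h]
      exact ⟨rfl, i2⟩

lemma st_front (r : ℝ) (S : Finset ℝ) (y : ℕ → ℝ) (m : ℕ) :
    st r S y (m + 1) = st r (stp r S (y 0)) (shf y) m := by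
  induction m with
  | zero => rfl
  | succ m ih => rw [st, ih]; rfl

lemma st_congr (r : ℝ) (S : Finset ℝ) (y y' : ℕ → ℝ) (m : ℕ) (h : ∀ i < m, y i = y' i) :
    st r S y m = st r S y' m := by
  induction m with
  | zero => rfl
  | succ m ih => rw [st, st, ih fun i hi => h i (by omega), h m (by omega)]

lemma stp_subset (r : ℝ) (S : Finset ℝ) (y : ℝ) : stp r S y ⊆ S := by
  classical
  exact Finset.filter_subset _ _

lemma st_subset (r : ℝ) (S : Finset ℝ) (y : ℕ → ℝ) (m : ℕ) : st r S y m ⊆ S := by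
  induction m with
  | zero => exact subset_rfl
  | succ m ih => exact (stp_subset _ _ _).trans ih

noncomputable def U01 : Measure ℝ := volume.restrict (Set.Icc 0 1)

instance : IsProbabilityMeasure U01 := ⟨by simp [U01]⟩

/-- transition operator -/
noncomputable def Tp (r : ℝ) (H : Finset ℝ → ℝ) (S : Finset ℝ) : ℝ := ∫ y, H (stp r S y) ∂U01

noncomputable def vv (r : ℝ) (S : Finset ℝ) (z : ℝ) : ℝ := U01.real {y | Ch r S y z}

lemma Ch_meas (r : ℝ) (S : Finset ℝ) (z : ℝ) : MeasurableSet {y | Ch r S y z} := by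
  have : {y | Ch r S y z} = {y | |z - y| < r} ∩ ⋂ x' ∈ S,
      ({y | |z - y| < |x' - y|} ∪ ({y | |z - y| = |x' - y|} ∩ {_y | z ≤ x'})) := by
    ext y; simp [Ch]
  rw [this]
  refine (measurableSet_lt (by fun_prop) (by fun_prop)).inter ?_
  refine Finset.measurableSet_biInter _ fun x' _ => ?_
  exact (measurableSet_lt (by fun_prop) (by fun_prop)).union
    ((measurableSet_eq_fun (by fun_prop) (by fun_prop)).inter (MeasurableSet.const _))

lemma H_stp (r : ℝ) (H : Finset ℝ → ℝ) (S : Finset ℝ) (y : ℝ) :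
    H (stp r S y) = H S + ∑ z ∈ S, {y | Ch r S y z}.indicator (fun _ => H (S.erase z) - H S) y := by
  by_cases h : ∃ x ∈ S, Ch r S y x
  · obtain ⟨x, hx, hC⟩ := h
    rw [stp_of_Ch hx hC, Finset.sum_eq_single x]
    · rw [Set.indicator_of_mem (by exact hC)]; ring
    · intro z hz hne
      refine Set.indicator_of_notMem ?_ _
      exact fun e => hne (Ch_unique hz hx e hC)
    · exact fun h => absurd hx h
  · push Not at h
    rw [stp_of_not h, Finset.sum_eq_zero, add_zero]
    intro z hz
    refine Set.indicator_of_notMem ?_ _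
    exact h z hz

lemma H_stp_meas (r : ℝ) (H : Finset ℝ → ℝ) (S : Finset ℝ) :
    Measurable fun y => H (stp r S y) := by
  simp_rw [H_stp r H S]
  refine measurable_const.add (Finset.measurable_sum _ fun z _ => ?_)
  exact measurable_const.indicator (Ch_meas r S z)

lemma H_stp_int (r : ℝ) (H : Finset ℝ → ℝ) (S : Finset ℝ) :
    Integrable (fun y => H (stp r S y)) U01 := by
  simp_rw [H_stp r H S]
  refine (integrable_const _).add (integrable_finsetSum _ fun z _ => ?_)
  exact (integrable_const _).indicator (Ch_meas r S z)

lemma Tp_eq (r : ℝ) (H : Finset ℝ → ℝ) (S : Finset ℝ) :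
    Tp r H S = H S + ∑ z ∈ S, vv r S z * (H (S.erase z) - H S) := by
  rw [Tp]
  simp_rw [H_stp r H S]
  rw [integral_add (integrable_const _) (integrable_finsetSum _ fun z _ =>
    (integrable_const _).indicator (Ch_meas r S z)), integral_finsetSum _ fun z _ =>
    (integrable_const _).indicator (Ch_meas r S z)]
  simp only [integral_const, probReal_univ, one_mul, integral_indicator_const _ (Ch_meas r S _),
    smul_eq_mul, vv]

lemma vv_nonneg (r : ℝ) (S : Finset ℝ) (z : ℝ) : 0 ≤ vv r S z := measureReal_nonneg

lemma vv_le {r : ℝ} (hr : 0 < r) (S : Finset ℝ) (z : ℝ) : vv r S z ≤ 2 * r := by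
  have h1 : {y | Ch r S y z} ⊆ Set.Icc (z - r) (z + r) := by
    intro y hy
    have := abs_lt.1 hy.1
    constructor <;> linarith [this.1, this.2]
  have h2 : vv r S z ≤ volume.real (Set.Icc (z - r) (z + r)) := by
    rw [vv, U01]
    refine (measureReal_mono h1 (by finiteness)).trans ?_
    rw [measureReal_restrict_apply measurableSet_Icc]
    exact measureReal_mono Set.inter_subset_left (by simp)
  refine h2.trans (le_of_eq ?_)
  rw [Real.volume_real_Icc_of_le (by linarith)]; ring

lemma vv_interior {r : ℝ} (hr : 0 < r) {S : Finset ℝ} {l z s : ℝ} (hl : l ∈ S) (hs : s ∈ S)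
    (hlz : l < z) (hzs : z < s) (h01 : ∀ x ∈ S, x ∈ Set.Icc (0:ℝ) 1)
    (gap : ∀ x ∈ S, x ≤ l ∨ x = z ∨ s ≤ x) :
    vv r S z = min r ((z - l) / 2) + min r ((s - z) / 2) := by
  have l01 := h01 l hl
  have s01 := h01 s hs
  set a := z - min r ((z - l) / 2) with ha
  set b := z + min r ((s - z) / 2) with hb
  have m1 : 0 < min r ((z - l) / 2) := lt_min hr (by linarith)
  have m2 : 0 < min r ((s - z) / 2) := lt_min hr (by linarith)
  have m3 := min_le_left r ((z - l) / 2)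
  have m4 := min_le_left r ((s - z) / 2)
  have m5 := min_le_right r ((z - l) / 2)
  have m6 := min_le_right r ((s - z) / 2)
  have hab : a ≤ b := by linarith
  have up : {y | Ch r S y z} ⊆ Set.Icc a b := by
    intro y hy
    have h1 := abs_lt.1 hy.1
    have h2 : |z - y| ≤ |l - y| := by
      rcases hy.2 l hl with e | e
      · exact e.le
      · exact e.1.le
    have h3 : |z - y| ≤ |s - y| := by
      rcases hy.2 s hs with e | e
      · exact e.le
      · exact e.1.le
    have q1 : (l + z) / 2 ≤ y := by
      have := sq_le_sq.2 h2
      nlinarith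
    have q2 : y ≤ (z + s) / 2 := by
      have := sq_le_sq.2 h3
      nlinarith
    constructor
    · rcases min_choice r ((z - l) / 2) with e | e <;> rw [ha, e] <;> linarith
    · rcases min_choice r ((s - z) / 2) with e | e <;> rw [hb, e] <;> linarith
  have lo : Set.Ioo a b ⊆ {y | Ch r S y z} := by
    intro y hy
    obtain ⟨y1, y2⟩ := hy
    refine ⟨abs_lt.2 ⟨by linarith, by linarith⟩, fun x hx => ?_⟩
    have e0 : l + z < 2 * y := by linarith
    have e1 : 2 * y < z + s := by linarith
    rcases gap x hx with e | e | e
    · left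
      apply sq_lt_sq.1
      nlinarith
    · right; subst e; exact ⟨rfl, le_rfl⟩
    · left
      apply sq_lt_sq.1
      nlinarith
  have sub : Set.Icc a b ⊆ Set.Icc 0 1 := Set.Icc_subset_Icc (by linarith [l01.1]) (by linarith [s01.2])
  have u1 : U01.real (Set.Icc a b) = b - a := by
    rw [U01, measureReal_restrict_apply measurableSet_Icc, Set.inter_eq_left.2 sub,
      Real.volume_real_Icc_of_le hab]
  have u2 : U01.real (Set.Ioo a b) = b - a := by
    rw [U01, measureReal_restrict_apply measurableSet_Ioo,
      Set.inter_eq_left.2 (Set.Ioo_subset_Icc_self.trans sub),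
      Real.volume_real_Ioo_of_le hab]
  have w1 : vv r S z ≤ b - a := u1 ▸ measureReal_mono up (by finiteness)
  have w2 : b - a ≤ vv r S z := u2 ▸ measureReal_mono lo (by finiteness)
  have : vv r S z = b - a := le_antisymm w1 w2
  rw [this]; ring

end MM

open MeasureTheory
open scoped ENNReal

namespace MM

noncomputable def up (S : Finset ℝ) (x : ℝ) : Finset ℝ := S.filter fun y => x < y

noncomputable def nx (S : Finset ℝ) (x : ℝ) : ℝ :=
  if h : (up S x).Nonempty then (up S x).min' h else x

noncomputable def GG (n : ℝ) (S : Finset ℝ) (x : ℝ) (i : ℕ) : ℝ :=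
  n * (nx S ((nx S)^[i] x) - (nx S)^[i] x)

lemma mem_up {S : Finset ℝ} {x y : ℝ} : y ∈ up S x ↔ y ∈ S ∧ x < y := Finset.mem_filter

lemma nx_mem {S : Finset ℝ} {x : ℝ} (h : (up S x).Nonempty) : nx S x ∈ S ∧ x < nx S x := by
  rw [nx, dif_pos h]; exact mem_up.1 (Finset.min'_mem _ h)

lemma nx_le {S : Finset ℝ} {x y : ℝ} (hy : y ∈ S) (h : x < y) : nx S x ≤ y := by
  have : (up S x).Nonempty := ⟨y, mem_up.2 ⟨hy, h⟩⟩
  rw [nx, dif_pos this]; exact Finset.min'_le _ _ (mem_up.2 ⟨hy, h⟩)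

lemma nx_emp {S : Finset ℝ} {x : ℝ} (h : ¬ (up S x).Nonempty) : nx S x = x := dif_neg h

lemma nx_ge (S : Finset ℝ) (x : ℝ) : x ≤ nx S x := by
  by_cases h : (up S x).Nonempty
  · exact (nx_mem h).2.le
  · rw [nx_emp h]

lemma nx_eq {S : Finset ℝ} {x y : ℝ} (hy : y ∈ S) (h : x < y) (h2 : ∀ z ∈ S, x < z → y ≤ z) :
    nx S x = y :=
  have := nx_mem (S := S) (x := x) ⟨y, mem_up.2 ⟨hy, h⟩⟩
  le_antisymm (nx_le hy h) (h2 _ this.1 this.2)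

lemma GG_scons (n : ℝ) (S : Finset ℝ) (x : ℝ) :
    GG n S x = scons (n * (nx S x - x)) (GG n S (nx S x)) := by
  ext i; cases i <;> rfl

lemma GG_shf (n : ℝ) (S : Finset ℝ) (x : ℝ) : shf (GG n S x) = GG n S (nx S x) := rfl
lemma GG_zero (n : ℝ) (S : Finset ℝ) (x : ℝ) : GG n S x 0 = n * (nx S x - x) := rfl

lemma up_anti {S S' : Finset ℝ} {x x' : ℝ} (h : up S x = up S' x) (hx : x ≤ x') :
    up S x' = up S' x' := by
  ext y
  have := Finset.ext_iff.1 h y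
  simp only [mem_up] at this ⊢
  constructor
  · rintro ⟨a, b⟩; exact ⟨(this.1 ⟨a, hx.trans_lt b⟩).1, b⟩
  · rintro ⟨a, b⟩; exact ⟨(this.2 ⟨a, hx.trans_lt b⟩).1, b⟩

lemma nx_congr {S S' : Finset ℝ} {x : ℝ} (h : up S x = up S' x) : nx S x = nx S' x := by
  simp only [nx, h]

lemma GG_congr {n : ℝ} {S S' : Finset ℝ} {x : ℝ} (h : up S x = up S' x) :
    GG n S x = GG n S' x := by
  ext i
  induction i generalizing x with
  | zero => simp only [GG_zero, nx_congr h]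
  | succ i ih =>
    have h1 := ih (up_anti h (nx_ge S x))
    calc GG n S x (i + 1) = GG n S (nx S x) i := rfl
      _ = GG n S' (nx S x) i := h1
      _ = GG n S' (nx S' x) i := by rw [nx_congr h]
      _ = _ := rfl

lemma up_erase {S : Finset ℝ} {x z : ℝ} (h : z ≤ x) : up (S.erase z) x = up S x := by
  ext y
  simp only [mem_up, Finset.mem_erase]
  constructor
  · rintro ⟨⟨_, a⟩, b⟩; exact ⟨a, b⟩
  · rintro ⟨a, b⟩; exact ⟨⟨(h.trans_lt b).ne', a⟩, b⟩

lemma up_insert {S : Finset ℝ} {x : ℝ} (h : (up S x).Nonempty) :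
    up S x = insert (nx S x) (up S (nx S x)) := by
  ext y
  obtain ⟨a, b⟩ := nx_mem h
  simp only [mem_up, Finset.mem_insert]
  constructor
  · rintro ⟨h1, h2⟩
    rcases (nx_le h1 h2).lt_or_eq with e | e
    · exact Or.inr ⟨h1, e⟩
    · exact Or.inl e.symm
  · rintro (rfl | ⟨h1, h2⟩)
    · exact ⟨a, b⟩
    · exact ⟨h1, b.trans h2⟩

lemma up_notMem {S : Finset ℝ} {x : ℝ} : x ∉ up S x := fun h => lt_irrefl _ (mem_up.1 h).2

lemma up_card {S : Finset ℝ} {x : ℝ} (h : (up S x).Nonempty) :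
    (up S x).card = (up S (nx S x)).card + 1 := by
  conv_lhs => rw [up_insert h]
  rw [Finset.card_insert_of_notMem up_notMem]

lemma nx_erase {S : Finset ℝ} {x z : ℝ} (h : (up S x).Nonempty) (hz : z ≠ nx S x) :
    nx (S.erase z) x = nx S x := by
  obtain ⟨a, b⟩ := nx_mem h
  exact nx_eq (Finset.mem_erase.2 ⟨hz.symm, a⟩) b fun y hy hxy => nx_le (Finset.mem_of_mem_erase hy) hxy

section
variable {c n : ℝ} {S : Finset ℝ}

lemma Nv_le (hc : 0 < c) (hn : 0 < n) (z : ℝ) : n * vv (c / n) S z ≤ 2 * c := by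
  have := vv_le (div_pos hc hn) S z
  calc n * vv (c / n) S z ≤ n * (2 * (c / n)) := mul_le_mul_of_nonneg_left this hn.le
    _ = 2 * c := by field_simp

lemma Nv_nn (hn : 0 < n) (z : ℝ) : 0 ≤ n * vv (c / n) S z := mul_nonneg hn.le (vv_nonneg _ _ _)

lemma Nv_term (hc : 0 < c) (hn : 0 < n) (z : ℝ) {M : ℝ} {φ : (ℕ → ℝ) → ℝ} (h : ∀ g, |φ g| ≤ M)
    (g g') : |n * vv (c / n) S z * (φ g - φ g')| ≤ 4 * c * M := by
  rw [abs_mul, abs_of_nonneg (Nv_nn hn z)]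
  calc _ ≤ 2 * c * (M + M) := mul_le_mul (Nv_le hc hn z)
        ((abs_sub _ _).trans (add_le_add (h _) (h _))) (abs_nonneg _) (by linarith)
    _ = _ := by ring

lemma aa_min (hc : 0 < c) (hn : 0 < n) {d : ℝ} (hd : 0 ≤ d) :
    n * min (c / n) (d / 2) = aa c (n * d) / 2 := by
  rw [aa_of_nonneg hc (by positivity), mul_min_of_nonneg _ _ hn.le, min_comm, mul_div_cancel₀ _ hn.ne',
    ← min_div_div_right (by norm_num : (0:ℝ) ≤ 2)]
  congr 1 <;> ring

lemma Nv_interior (hc : 0 < c) (hn : 0 < n) (h01 : ∀ x ∈ S, x ∈ Set.Icc (0:ℝ) 1) {x : ℝ}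
    (hx : x ∈ S) (h1 : (up S x).Nonempty) (h2 : (up S (nx S x)).Nonempty) :
    n * vv (c / n) S (nx S x) = (aa c (GG n S x 0) + aa c (GG n S x 1)) / 2 := by
  obtain ⟨a1, b1⟩ := nx_mem h1
  obtain ⟨a2, b2⟩ := nx_mem h2
  rw [vv_interior (div_pos hc hn) hx a2 b1 b2 h01]
  · rw [mul_add, aa_min hc hn (by linarith), aa_min hc hn (by linarith), ← add_div]
    rfl
  · intro y hy
    rcases le_or_gt y x with e | e
    · exact Or.inl e
    · rcases (nx_le hy e).lt_or_eq with e' | e'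
      · exact Or.inr (Or.inr (nx_le hy e'))
      · exact Or.inr (Or.inl e'.symm)

lemma sum_step (φ : (ℕ → ℝ) → ℝ) {x : ℝ} (h1 : (up S x).Nonempty) :
    ∑ z ∈ up S x, n * vv (c / n) S z * (φ (GG n (S.erase z) x) - φ (GG n S x))
      = n * vv (c / n) S (nx S x) * (φ (GG n (S.erase (nx S x)) x) - φ (GG n S x))
      + ∑ z ∈ up S (nx S x), n * vv (c / n) S z *
        (φ (scons (GG n S x 0) (GG n (S.erase z) (nx S x)))
          - φ (scons (GG n S x 0) (GG n S (nx S x)))) := by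
  rw [up_insert h1, Finset.sum_insert up_notMem]
  congr 1
  refine Finset.sum_congr rfl fun z hz => ?_
  have hz' := mem_up.1 hz
  rw [GG_scons n S x, GG_scons n (S.erase z) x, nx_erase h1 hz'.2.ne']
  rfl

lemma sum_RR (hc : 0 < c) (hn : 0 < n) (h01 : ∀ x ∈ S, x ∈ Set.Icc (0:ℝ) 1) (k : ℕ) :
    ∀ {M : ℝ} {φ : (ℕ → ℝ) → ℝ}, TT k M φ → ∀ x ∈ S, k + 1 ≤ (up S x).card →
    ∑ z ∈ up S x, n * vv (c / n) S z * (φ (GG n (S.erase z) x) - φ (GG n S x))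
      = RR c k φ (GG n S x) := by
  induction k with
  | zero =>
    intro M φ h x _ _
    rw [RR]
    refine Finset.sum_eq_zero fun z _ => ?_
    rw [h.loc (GG n (S.erase z) x) (GG n S x) (by simp), sub_self, mul_zero]
  | succ k ih =>
    intro M φ h x hx hcard
    have h1 : (up S x).Nonempty := Finset.card_pos.1 (by omega)
    have hc1 := up_card h1
    have h2 : (up S (nx S x)).Nonempty := Finset.card_pos.1 (by omega)
    obtain ⟨a1, b1⟩ := nx_mem h1
    obtain ⟨a2, b2⟩ := nx_mem h2
    rw [sum_step φ h1, RR, GG_shf]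
    have e := ih (h.sub (GG n S x 0)) (nx S x) a1 (by omega)
    rw [e, Nv_interior hc hn h01 hx h1 h2]
    congr 3
    rw [GG_scons n (S.erase (nx S x)) x]
    have e2 : nx (S.erase (nx S x)) x = nx S (nx S x) := by
      refine nx_eq (Finset.mem_erase.2 ⟨b2.ne', a2⟩) (b1.trans b2) fun z hz hxz => ?_
      obtain ⟨z1, z2⟩ := Finset.mem_erase.1 hz
      exact nx_le z2 ((nx_le z2 hxz).lt_of_ne z1.symm)
    rw [e2, GG_congr (up_erase b2.le)]
    congr 2
    simp only [GG, Function.iterate_zero, id, Function.iterate_one]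
    ring

lemma sum_bd (hc : 0 < c) (hn : 0 < n) (k : ℕ) :
    ∀ {M : ℝ} {φ : (ℕ → ℝ) → ℝ}, TT k M φ → ∀ x,
    |∑ z ∈ up S x, n * vv (c / n) S z * (φ (GG n (S.erase z) x) - φ (GG n S x))|
      ≤ 4 * c * k * M := by
  induction k with
  | zero =>
    intro M φ h x
    rw [Finset.sum_eq_zero, abs_zero]
    · simp
    intro z _
    rw [h.loc (GG n (S.erase z) x) (GG n S x) (by simp), sub_self, mul_zero]
  | succ k ih =>
    intro M φ h x
    by_cases h1 : (up S x).Nonempty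
    · rw [sum_step φ h1]
      refine (abs_add_le _ _).trans ((add_le_add (Nv_term hc hn _ h.bd _ _)
        (ih (h.sub (GG n S x 0)) (nx S x))).trans (le_of_eq ?_))
      push_cast; ring
    · rw [Finset.not_nonempty_iff_eq_empty.1 h1, Finset.sum_empty, abs_zero]
      have := h.Mnn
      positivity

lemma up_card_inj : Set.InjOn (fun x => (up S x).card) (S : Set ℝ) := by
  have key : ∀ x ∈ S, ∀ y ∈ S, x < y → (up S y).card < (up S x).card := by
    intro x hx y hy hxy
    refine Finset.card_lt_card ⟨fun z hz => ?_, fun h => ?_⟩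
    · have := mem_up.1 hz
      exact mem_up.2 ⟨this.1, hxy.trans this.2⟩
    · exact up_notMem (h (mem_up.2 ⟨hy, hxy⟩))
  intro x hx y hy e
  rcases lt_trichotomy x y with h | h | h
  · exact absurd e (key x hx y hy h).ne'
  · exact h
  · exact absurd e (key y hy x hx h).ne

lemma card_few (k : ℕ) : (S.filter fun x => (up S x).card ≤ k).card ≤ k + 1 := by
  have := Finset.card_le_card_of_injOn (s := S.filter fun x => (up S x).card ≤ k)
    (t := Finset.range (k + 1)) (fun x => (up S x).card)
    (fun x hx => by
      have hx : x ∈ S.filter fun x => (up S x).card ≤ k := hx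
      have := (Finset.mem_filter.1 hx).2
      simp only [Finset.coe_range, Set.mem_Iio]; omega)
    (up_card_inj.mono fun x hx => by
      have hx : x ∈ S.filter fun x => (up S x).card ≤ k := hx
      exact (Finset.mem_filter.1 hx).1)
  simpa using this

/-- sums of errors supported on points with few successors -/
lemma sum_few {k : ℕ} {B : ℝ} (f : ℝ → ℝ) (h0 : ∀ x ∈ S, k < (up S x).card → f x = 0)
    (hB : ∀ x ∈ S, |f x| ≤ B) (hB0 : 0 ≤ B) : |∑ x ∈ S, f x| ≤ (k + 1) * B := by
  have e : ∑ x ∈ S, f x = ∑ x ∈ S.filter (fun x => (up S x).card ≤ k), f x := by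
    rw [Finset.sum_filter]
    refine Finset.sum_congr rfl fun x hx => ?_
    split_ifs with h
    · rfl
    · exact h0 x hx (not_le.1 h)
  rw [e]
  refine (Finset.abs_sum_le_sum_abs _ _).trans ?_
  refine (Finset.sum_le_card_nsmul _ _ B fun x hx => hB x (Finset.mem_filter.1 hx).1).trans ?_
  rw [nsmul_eq_mul]
  refine mul_le_mul_of_nonneg_right ?_ hB0
  exact_mod_cast card_few k

lemma nx_injOn : Set.InjOn (nx S) {x | x ∈ S ∧ (up S x).Nonempty} := by
  intro x hx y hy e
  have a := nx_mem hx.2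
  have b := nx_mem hy.2
  rcases lt_trichotomy x y with h | h | h
  · have := nx_le hy.1 h; linarith [b.2]
  · exact h
  · have := nx_le hx.1 h; linarith [a.2]

lemma nx_image (hS : S.Nonempty) :
    (S.filter fun x => (up S x).Nonempty).image (nx S) = S.erase (S.min' hS) := by
  ext z
  simp only [Finset.mem_image, Finset.mem_filter, Finset.mem_erase]
  constructor
  · rintro ⟨x, ⟨hx, hu⟩, rfl⟩
    have := nx_mem hu
    exact ⟨((Finset.min'_le _ _ hx).trans_lt this.2).ne', this.1⟩
  · rintro ⟨h1, h2⟩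
    have hlt : S.min' hS < z := lt_of_le_of_ne (Finset.min'_le _ _ h2) h1.symm
    have hne : (S.filter fun x => x < z).Nonempty := ⟨_, Finset.mem_filter.2 ⟨S.min'_mem hS, hlt⟩⟩
    have hm := Finset.mem_filter.1 (Finset.max'_mem _ hne)
    refine ⟨(S.filter fun x => x < z).max' hne, ⟨hm.1, ⟨z, mem_up.2 ⟨h2, hm.2⟩⟩⟩, ?_⟩
    refine nx_eq h2 hm.2 fun y hy hlt => ?_
    by_contra hcon
    have hy2 : y ∈ S.filter fun x => x < z := Finset.mem_filter.2 ⟨hy, not_le.1 hcon⟩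
    have := Finset.le_max' _ y hy2
    linarith

lemma sum_nx (h : ℝ → ℝ) (hS : S.Nonempty) :
    ∑ x ∈ S.filter (fun x => (up S x).Nonempty), h (nx S x) = ∑ z ∈ S, h z - h (S.min' hS) := by
  rw [← Finset.sum_erase_eq_sub (S.min'_mem hS), ← nx_image hS, Finset.sum_image]
  intro x hx y hy e
  have hx : x ∈ S.filter fun x => (up S x).Nonempty := hx
  have hy : y ∈ S.filter fun x => (up S x).Nonempty := hy
  exact nx_injOn (Finset.mem_filter.1 hx) (Finset.mem_filter.1 hy) e

noncomputable def FF (n : ℝ) (φ : (ℕ → ℝ) → ℝ) (S : Finset ℝ) : ℝ := ∑ x ∈ S, φ (GG n S x)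

lemma FF_gen (φ : (ℕ → ℝ) → ℝ) :
    n * (Tp (c / n) (FF n φ) S - FF n φ S)
      = ∑ x ∈ S, ((∑ z ∈ up S x, n * vv (c / n) S z * (φ (GG n (S.erase z) x) - φ (GG n S x)))
          - n * vv (c / n) S x * φ (GG n S x)) := by
  rw [Tp_eq, add_sub_cancel_left, Finset.mul_sum, Finset.sum_sub_distrib]
  have e1 : ∀ x ∈ S, (∑ z ∈ up S x, n * vv (c / n) S z * (φ (GG n (S.erase z) x) - φ (GG n S x)))
      = ∑ z ∈ S, n * vv (c / n) S z * (φ (GG n (S.erase z) x) - φ (GG n S x)) := by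
    intro x hx
    refine Finset.sum_subset (Finset.filter_subset _ _) fun z hz hz' => ?_
    have : z ≤ x := not_lt.1 fun h => hz' (mem_up.2 ⟨hz, h⟩)
    rw [GG_congr (up_erase this), sub_self, mul_zero]
  rw [Finset.sum_congr rfl e1, Finset.sum_comm, ← Finset.sum_sub_distrib]
  refine Finset.sum_congr rfl fun z hz => ?_
  rw [← Finset.mul_sum, Finset.sum_sub_distrib, FF, FF, Finset.sum_erase_eq_sub hz,
    GG_congr (S := S.erase z) (S' := S) (x := z) (up_erase le_rfl)]
  ring

lemma own_term (hc : 0 < c) (hn : 0 < n) (h01 : ∀ x ∈ S, x ∈ Set.Icc (0:ℝ) 1) {M : ℝ}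
    {φ : (ℕ → ℝ) → ℝ} (h : ∀ g, |φ g| ≤ M) :
    |(∑ x ∈ S, n * vv (c / n) S x * φ (GG n S x))
      - ∑ x ∈ S, (aa c (GG n S x 0) * φ (GG n S x) + aa c (GG n S x 0) * φ (shf (GG n S x))) / 2|
      ≤ 11 * c * M := by
  have hM := (abs_nonneg _).trans (h 0)
  have hcM : 0 ≤ c * M := by positivity
  rcases S.eq_empty_or_nonempty with rfl | hS
  · simp; positivity
  set h' : ℝ → ℝ := fun z => (n * vv (c / n) S z - aa c (GG n S z 0) / 2) * φ (GG n S z) with hh'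
  have h'bd : ∀ z, |h' z| ≤ 3 * c * M := by
    intro z
    rw [hh', abs_mul]
    refine mul_le_mul ?_ (h _) (abs_nonneg _) (by linarith)
    have := Nv_le (S := S) hc hn z
    have := Nv_nn (c := c) (S := S) hn z
    have := abs_le.1 (aa_abs hc (GG n S z 0))
    rw [abs_le]; constructor <;> linarith
  have e1 := sum_nx h' hS
  have e2 : ∑ x ∈ S, aa c (GG n S x 0) / 2 * φ (shf (GG n S x))
      = ∑ x ∈ S.filter (fun x => (up S x).Nonempty), aa c (GG n S x 0) / 2 * φ (shf (GG n S x)) := by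
    rw [Finset.sum_filter]
    refine Finset.sum_congr rfl fun x hx => ?_
    split_ifs with hu
    · rfl
    · rw [GG_zero, nx_emp hu, sub_self, mul_zero, aa_of_nonpos le_rfl]; simp
  set f : ℝ → ℝ := fun x => if (up S x).Nonempty then
    h' (nx S x) - aa c (GG n S x 0) / 2 * φ (shf (GG n S x)) else 0 with hf
  have e3 : ∑ x ∈ S, f x = (∑ z ∈ S, h' z - h' (S.min' hS))
      - ∑ x ∈ S, aa c (GG n S x 0) / 2 * φ (shf (GG n S x)) := by
    rw [← e1, e2, ← Finset.sum_sub_distrib, Finset.sum_filter]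
  have e4 : (∑ x ∈ S, n * vv (c / n) S x * φ (GG n S x))
      - ∑ x ∈ S, (aa c (GG n S x 0) * φ (GG n S x) + aa c (GG n S x 0) * φ (shf (GG n S x))) / 2
      = ∑ x ∈ S, f x + h' (S.min' hS) := by
    rw [e3, sub_add_eq_add_sub, sub_add_cancel, ← Finset.sum_sub_distrib, ← Finset.sum_sub_distrib]
    refine Finset.sum_congr rfl fun x hx => ?_
    rw [hh']; ring
  have e5 : |∑ x ∈ S, f x| ≤ ((1 : ℕ) + 1) * (4 * c * M) := by
    refine sum_few (k := 1) f (fun x hx hcard => ?_) (fun x hx => ?_) (by linarith)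
    · have u1 : (up S x).Nonempty := Finset.card_pos.1 (by omega)
      have := up_card u1
      have u2 : (up S (nx S x)).Nonempty := Finset.card_pos.1 (by omega)
      simp only [hf, if_pos u1, hh']
      rw [Nv_interior hc hn h01 hx u1 u2, GG_shf]
      have : GG n S x 1 = GG n S (nx S x) 0 := rfl
      rw [this]; ring
    · simp only [hf]
      split_ifs with hu
      · refine (abs_sub _ _).trans ?_
        have : |aa c (GG n S x 0) / 2 * φ (shf (GG n S x))| ≤ c * M := by
          rw [abs_mul]
          refine mul_le_mul ?_ (h _) (abs_nonneg _) hc.le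
          have := abs_le.1 (aa_abs hc (GG n S x 0))
          rw [abs_le]; constructor <;> linarith
        linarith [h'bd (nx S x)]
      · rw [abs_zero]; linarith
  rw [e4]
  refine (abs_add_le _ _).trans ((add_le_add e5 (h'bd _)).trans ?_)
  push_cast
  linarith

lemma gen_LL (hc : 0 < c) (hn : 0 < n) (h01 : ∀ x ∈ S, x ∈ Set.Icc (0:ℝ) 1) {k : ℕ} {M : ℝ}
    {φ : (ℕ → ℝ) → ℝ} (h : TT k M φ) :
    |n * (Tp (c / n) (FF n φ) S - FF n φ S) - FF n (LL c k φ) S|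
      ≤ (8 * k * (k + 1) + 11) * c * M := by
  have hM := h.Mnn
  have hcM : 0 ≤ c * M := by positivity
  have e5 : |∑ x ∈ S, ((∑ z ∈ up S x, n * vv (c / n) S z * (φ (GG n (S.erase z) x) - φ (GG n S x)))
      - RR c k φ (GG n S x))| ≤ (k + 1) * (8 * c * k * M) := by
    refine sum_few (k := k) _ (fun x hx hcard => ?_) (fun x hx => ?_) (by positivity)
    · rw [sum_RR hc hn h01 k h x hx hcard, sub_self]
    · refine (abs_sub _ _).trans ((add_le_add (sum_bd hc hn k h x) (RR_bd hc k h.bd _)).trans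
        (le_of_eq (by ring)))
  have e6 := own_term hc hn h01 h.bd
  have e7 : n * (Tp (c / n) (FF n φ) S - FF n φ S) - FF n (LL c k φ) S
    = (∑ x ∈ S, ((∑ z ∈ up S x, n * vv (c / n) S z * (φ (GG n (S.erase z) x) - φ (GG n S x)))
      - RR c k φ (GG n S x))) - ((∑ x ∈ S, n * vv (c / n) S x * φ (GG n S x))
      - ∑ x ∈ S, (aa c (GG n S x 0) * φ (GG n S x) + aa c (GG n S x 0) * φ (shf (GG n S x))) / 2) := by
    rw [FF_gen, FF]
    simp only [← Finset.sum_sub_distrib, LL]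
    refine Finset.sum_congr rfl fun x hx => ?_
    ring
  rw [e7]
  refine (abs_sub _ _).trans ((add_le_add e5 e6).trans (le_of_eq ?_))
  ring

end
end MM

open MeasureTheory
open scoped ENNReal

namespace MM

lemma meas_pieces {α ι : Type*} [MeasurableSpace α] [Fintype ι] {b : α → ι}
    (hb : ∀ i, MeasurableSet {a | b a = i}) {h : ι → α → ℝ} (hh : ∀ i, Measurable (h i)) :
    Measurable fun a => h (b a) a := by
  have : (fun a => h (b a) a) = fun a => ∑ i, {a | b a = i}.indicator (h i) a := by
    ext a
    rw [Finset.sum_eq_single (b a)]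
    · rw [Set.indicator_of_mem (by exact rfl)]
    · intro i _ hi
      refine Set.indicator_of_notMem ?_ _
      exact fun e => hi (Eq.symm e)
    · simp
  rw [this]
  exact Finset.measurable_sum _ fun i _ => (hh i).indicator (hb i)

section
variable {K : ℕ}

open Classical in
noncomputable def bst (r : ℝ) (X : Fin K → ℝ) (B : Finset (Fin K)) (y : ℝ) : Finset (Fin K) :=
  B.filter fun i => ¬ Ch r (B.image X) y (X i)

lemma bst_image (r : ℝ) (X : Fin K → ℝ) (B : Finset (Fin K)) (y : ℝ) :
    (bst r X B y).image X = stp r (B.image X) y := by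
  classical
  ext z
  simp only [bst, stp, Finset.mem_image, Finset.mem_filter]
  constructor
  · rintro ⟨i, ⟨h1, h2⟩, rfl⟩
    exact ⟨⟨i, h1, rfl⟩, h2⟩
  · rintro ⟨⟨i, h1, rfl⟩, h2⟩
    exact ⟨i, ⟨h1, h2⟩, rfl⟩

noncomputable def Bm (r : ℝ) (X : Fin K → ℝ) (y : ℕ → ℝ) : ℕ → Finset (Fin K)
  | 0 => Finset.univ
  | m + 1 => bst r X (Bm r X y m) (y m)

lemma Bm_image (r : ℝ) (X : Fin K → ℝ) (y : ℕ → ℝ) (m : ℕ) :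
    (Bm r X y m).image X = st r (Finset.univ.image X) y m := by
  induction m with
  | zero => rfl
  | succ m ih => rw [Bm, bst_image, ih, st]

lemma bst_meas (r : ℝ) (B B' : Finset (Fin K)) :
    MeasurableSet {q : (Fin K → ℝ) × ℝ | bst r q.1 B q.2 = B'} := by
  classical
  have : {q : (Fin K → ℝ) × ℝ | bst r q.1 B q.2 = B'}
      = {q | ∀ i, (i ∈ B ∧ ¬ (|q.1 i - q.2| < r ∧ ∀ j, j ∈ B → (|q.1 i - q.2| < |q.1 j - q.2| ∨
        (|q.1 i - q.2| = |q.1 j - q.2| ∧ q.1 i ≤ q.1 j)))) ↔ i ∈ B'} := by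
    ext q
    simp only [Set.mem_setOf_eq, Finset.ext_iff, bst, Finset.mem_filter, Ch, Finset.forall_mem_image]
  rw [this]
  have hi : ∀ i : Fin K, Measurable fun q : (Fin K → ℝ) × ℝ => q.1 i := fun i => by fun_prop
  have ha : ∀ i : Fin K, Measurable fun q : (Fin K → ℝ) × ℝ => |q.1 i - q.2| := fun i => by fun_prop
  refine Measurable.setOf (Measurable.forall fun i => Measurable.iff ?_ measurable_const)
  refine Measurable.and measurable_const (Measurable.not (Measurable.and ?_
    (Measurable.forall fun j => Measurable.imp measurable_const (Measurable.or ?_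
      (Measurable.and ?_ ?_)))))
  · exact measurableSet_setOfPred.1 (measurableSet_lt (ha i) measurable_const)
  · exact measurableSet_setOfPred.1 (measurableSet_lt (ha i) (ha j))
  · exact measurableSet_setOfPred.1 (measurableSet_eq_fun (ha i) (ha j))
  · exact measurableSet_setOfPred.1 (measurableSet_le (hi i) (hi j))

lemma Bm_meas (r : ℝ) (m : ℕ) : ∀ B' : Finset (Fin K),
    MeasurableSet {q : (Fin K → ℝ) × (ℕ → ℝ) | Bm r q.1 q.2 m = B'} := by
  induction m with
  | zero =>
    intro B'
    show MeasurableSet {_q : (Fin K → ℝ) × (ℕ → ℝ) | (Finset.univ : Finset (Fin K)) = B'}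
    exact MeasurableSet.const _
  | succ m ih =>
    intro B'
    have : {q : (Fin K → ℝ) × (ℕ → ℝ) | Bm r q.1 q.2 (m + 1) = B'}
      = ⋃ B : Finset (Fin K), {q : (Fin K → ℝ) × (ℕ → ℝ) | Bm r q.1 q.2 m = B} ∩
        ((fun q : (Fin K → ℝ) × (ℕ → ℝ) => (q.1, q.2 m)) ⁻¹'
          {q : (Fin K → ℝ) × ℝ | bst r q.1 B q.2 = B'}) := by
      ext q
      simp [Bm]
    rw [this]
    refine MeasurableSet.iUnion fun B => (ih B).inter ?_
    exact (show Measurable fun q : (Fin K → ℝ) × (ℕ → ℝ) => (q.1, q.2 m) by fun_prop) (bst_meas r B B')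

/-- measurable functionals of the configuration -/
def MS (K : ℕ) (H : Finset ℝ → ℝ) : Prop :=
  ∀ B : Finset (Fin K), Measurable fun X : Fin K → ℝ => H (B.image X)

lemma MS.st {H : Finset ℝ → ℝ} (h : MS K H) (r : ℝ) (m : ℕ) :
    Measurable fun q : (Fin K → ℝ) × (ℕ → ℝ) => H (st r (Finset.univ.image q.1) q.2 m) := by
  simp_rw [← Bm_image]
  exact meas_pieces (b := fun q : (Fin K → ℝ) × (ℕ → ℝ) => Bm r q.1 q.2 m) (Bm_meas r m)
    (h := fun B q => H (B.image q.1)) fun B => (h B).comp measurable_fst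

lemma st_meas (H : Finset ℝ → ℝ) (S : Finset ℝ) (r : ℝ) (m : ℕ) :
    Measurable fun y : ℕ → ℝ => H (st r S y m) := by
  set X : Fin S.card → ℝ := fun i => S.equivFin.symm i with hX
  have hS : S = Finset.univ.image X := by
    ext x
    simp only [Finset.mem_image, Finset.mem_univ, true_and, hX]
    constructor
    · intro hx; exact ⟨S.equivFin ⟨x, hx⟩, by simp⟩
    · rintro ⟨i, rfl⟩; exact (S.equivFin.symm i).2
  rw [hS]
  simp_rw [← Bm_image]
  refine meas_pieces (b := fun y : ℕ → ℝ => Bm r X y m) (fun B => ?_)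
    (h := fun B _ => H (B.image X)) fun B => measurable_const
  exact (show Measurable fun y : ℕ → ℝ => (X, y) by fun_prop) (Bm_meas r m B)

lemma MS.Tp {H : Finset ℝ → ℝ} (h : MS K H) (r : ℝ) : MS K (Tp r H) := by
  intro B
  have : Measurable fun q : (Fin K → ℝ) × ℝ => H (stp r (B.image q.1) q.2) := by
    simp_rw [← bst_image]
    exact meas_pieces (b := fun q : (Fin K → ℝ) × ℝ => bst r q.1 B q.2) (bst_meas r B)
      (h := fun B q => H (B.image q.1)) fun B => (h B).comp measurable_fst
  exact (this.stronglyMeasurable.integral_prod_right (ν := U01)).measurable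

lemma MS.iter {H : Finset ℝ → ℝ} (h : MS K H) (r : ℝ) (m : ℕ) : MS K ((MM.Tp r)^[m] H) := by
  induction m with
  | zero => exact h
  | succ m ih => rw [Function.iterate_succ_apply']; exact ih.Tp r

end

noncomputable def ext {N : ℕ} (Y : Fin N → ℝ) : ℕ → ℝ := fun i => if h : i < N then Y ⟨i, h⟩ else 0

lemma ext_meas (N : ℕ) : Measurable (ext (N := N)) := by
  refine measurable_pi_iff.2 fun i => ?_
  by_cases h : i < N
  · simp only [ext, dif_pos h]; fun_prop
  · simp only [ext, dif_neg h]; fun_prop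

lemma unifCube_eq (N : ℕ) : unifCube N = Measure.pi fun _ => U01 := rfl

instance (N : ℕ) : IsProbabilityMeasure (unifCube N) := by rw [unifCube_eq]; infer_instance

lemma cube_mp (n : ℕ) (i : Fin (n + 1)) :
    MeasurePreserving (fun q : ℝ × (Fin n → ℝ) => (i.insertNth q.1 q.2 : Fin (n + 1) → ℝ))
      (U01.prod (unifCube n)) (unifCube (n + 1)) :=
  (measurePreserving_piFinSuccAbove (fun _ : Fin (n + 1) => U01) i).symm

lemma cube_succ {n : ℕ} (i : Fin (n + 1)) {f : (Fin (n + 1) → ℝ) → ℝ}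
    (hf : Integrable f (unifCube (n + 1))) :
    ∫ X, f X ∂(unifCube (n + 1)) = ∫ x, ∫ X', f (i.insertNth x X') ∂(unifCube n) ∂U01 := by
  have h1 := (measurePreserving_piFinSuccAbove (fun _ : Fin (n + 1) => U01) i).symm
  rw [unifCube_eq, ← h1.integral_comp' f]
  have := (h1.integrable_comp_emb (MeasurableEquiv.measurableEmbedding _)).2 hf
  exact (integral_prod _ this).trans rfl

lemma integrable_of_bdd {α : Type*} [MeasurableSpace α] {μ : Measure α} [IsProbabilityMeasure μ]
    {f : α → ℝ} (hf : Measurable f) {B : ℝ} (hB : ∀ x, |f x| ≤ B) : Integrable f μ :=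
  Integrable.of_bound hf.aestronglyMeasurable B (Filter.Eventually.of_forall hB)

lemma st_bdd (H : Finset ℝ → ℝ) (S : Finset ℝ) : ∃ B, ∀ S' ⊆ S, |H S'| ≤ B := by
  refine ⟨∑ S' ∈ S.powerset, |H S'|, fun S' hS' => ?_⟩
  exact Finset.single_le_sum (f := fun S' => |H S'|) (fun _ _ => abs_nonneg _)
    (Finset.mem_powerset.2 hS')

lemma Tp_bridge (r : ℝ) (H : Finset ℝ → ℝ) (m : ℕ) : ∀ (N : ℕ) (S : Finset ℝ), m ≤ N →
    ∫ Y, H (st r S (ext Y) m) ∂(unifCube N) = (Tp r)^[m] H S := by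
  induction m with
  | zero => intro N S _; simp [st]
  | succ m ih =>
    intro N S hN
    obtain ⟨N, rfl⟩ : ∃ N', N = N' + 1 := ⟨N - 1, by omega⟩
    obtain ⟨B, hB⟩ := st_bdd H S
    have hi : Integrable (fun Y : Fin (N + 1) → ℝ => H (st r S (ext Y) (m + 1))) (unifCube (N + 1)) :=
      integrable_of_bdd ((st_meas H S r (m + 1)).comp (ext_meas _)) (B := B)
        fun Y => hB _ (st_subset _ _ _ _)
    rw [cube_succ 0 hi, Function.iterate_succ_apply', Tp]
    congr 1; ext y
    rw [← ih N _ (by omega)]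
    congr 1; ext Y'
    rw [st_front]
    congr 2
    ext i
    simp only [shf, ext]
    by_cases h : i < N
    · rw [dif_pos h, dif_pos (by omega)]
      rfl
    · rw [dif_neg h, dif_neg (by omega)]

lemma Tp_iter_bd (r : ℝ) {H : Finset ℝ → ℝ} {B : ℝ} (m : ℕ) : ∀ {S : Finset ℝ},
    (∀ S' ⊆ S, |H S'| ≤ B) → |(Tp r)^[m] H S| ≤ B := by
  induction m with
  | zero => intro S h; exact h S subset_rfl
  | succ m ih =>
    intro S h
    rw [Function.iterate_succ_apply', Tp]
    have := norm_integral_le_of_norm_le_const (μ := U01) (f := fun y => (Tp r)^[m] H (stp r S y))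
      (C := B) (Filter.Eventually.of_forall fun y => ih fun S' hS' => h S' (hS'.trans (stp_subset _ _ _)))
    simpa using this

lemma Tp_lin (r a b d : ℝ) (H1 H2 H3 : Finset ℝ → ℝ) (m : ℕ) (S : Finset ℝ) :
    (Tp r)^[m] (fun S => a * H1 S + b * H2 S + d * H3 S) S
      = a * (Tp r)^[m] H1 S + b * (Tp r)^[m] H2 S + d * (Tp r)^[m] H3 S := by
  induction m generalizing S with
  | zero => rfl
  | succ m ih =>
    simp only [Function.iterate_succ_apply']
    rw [Tp, Tp, Tp, Tp]
    simp_rw [ih]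
    exact lin3 (H_stp_int r _ S) (H_stp_int r _ S) (H_stp_int r _ S) a b d

lemma FF_bd {n : ℝ} {M : ℝ} {φ : (ℕ → ℝ) → ℝ} (h : ∀ g, |φ g| ≤ M) (S : Finset ℝ) :
    |FF n φ S| ≤ S.card * M := by
  refine (Finset.abs_sum_le_sum_abs _ _).trans ?_
  refine (Finset.sum_le_card_nsmul _ _ M fun x _ => h _).trans ?_
  rw [nsmul_eq_mul]

lemma Tp_step {c n : ℝ} (hc : 0 < c) (hn : 0 < n) {S : Finset ℝ}
    (h01 : ∀ x ∈ S, x ∈ Set.Icc (0:ℝ) 1) {k : ℕ} {M : ℝ} {φ : (ℕ → ℝ) → ℝ} (h : TT k M φ) (m : ℕ) :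
    |(Tp (c / n))^[m + 1] (FF n φ) S - (Tp (c / n))^[m] (FF n φ) S
      - n⁻¹ * (Tp (c / n))^[m] (FF n (LL c k φ)) S| ≤ n⁻¹ * ((8 * k * (k + 1) + 11) * c * M) := by
  rw [Function.iterate_succ_apply]
  have e := Tp_lin (c / n) 1 (-1) (-n⁻¹) (Tp (c / n) (FF n φ)) (FF n φ) (FF n (LL c k φ)) m S
  have e2 : ∀ S' ⊆ S, |1 * Tp (c / n) (FF n φ) S' + -1 * FF n φ S' + -n⁻¹ * FF n (LL c k φ) S'|
      ≤ n⁻¹ * ((8 * k * (k + 1) + 11) * c * M) := by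
    intro S' hS'
    have := gen_LL hc hn (fun x hx => h01 x (hS' hx)) h
    have e3 : 1 * Tp (c / n) (FF n φ) S' + -1 * FF n φ S' + -n⁻¹ * FF n (LL c k φ) S'
      = n⁻¹ * (n * (Tp (c / n) (FF n φ) S' - FF n φ S') - FF n (LL c k φ) S') := by
      field_simp; ring
    rw [e3, abs_mul, abs_of_pos (inv_pos.2 hn)]
    exact mul_le_mul_of_nonneg_left this (inv_pos.2 hn).le
  have e4 := Tp_iter_bd (c / n) m e2
  rw [e] at e4
  convert e4 using 2
  ring

end MM

open MeasureTheory
open scoped ENNReal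

namespace MM

section
variable {K : ℕ}

lemma nx_meas (B : Finset (Fin K)) :
    Measurable fun q : (Fin K → ℝ) × ℝ => nx (B.image q.1) q.2 := by
  classical
  have e : (fun q : (Fin K → ℝ) × ℝ => nx (B.image q.1) q.2)
      = fun q => (fun (u : Finset (Fin K)) (q : (Fin K → ℝ) × ℝ) =>
        if h : u.Nonempty then u.inf' h q.1 else q.2) (B.filter fun i => q.2 < q.1 i) q := by
    ext q
    dsimp only
    by_cases h : (B.filter fun i => q.2 < q.1 i).Nonempty
    · rw [dif_pos h]
      obtain ⟨i, hi, he⟩ := Finset.exists_mem_eq_inf' h q.1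
      rw [Finset.mem_filter] at hi
      rw [he]
      refine nx_eq (Finset.mem_image_of_mem _ hi.1) hi.2 ?_
      intro z hz hqz
      obtain ⟨j, hj, rfl⟩ := Finset.mem_image.1 hz
      rw [← he]
      exact Finset.inf'_le _ (Finset.mem_filter.2 ⟨hj, hqz⟩)
    · rw [dif_neg h]
      refine nx_emp fun h' => h ?_
      obtain ⟨z, hz⟩ := h'
      obtain ⟨hz, h2⟩ := mem_up.1 hz
      obtain ⟨j, hj, rfl⟩ := Finset.mem_image.1 hz
      exact ⟨j, Finset.mem_filter.2 ⟨hj, h2⟩⟩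
  rw [e]
  refine meas_pieces (b := fun q : (Fin K → ℝ) × ℝ => B.filter fun i => q.2 < q.1 i) (fun u => ?_)
    (h := fun (u : Finset (Fin K)) (q : (Fin K → ℝ) × ℝ) =>
        if h : u.Nonempty then u.inf' h q.1 else q.2) (fun u => ?_)
  · have : {q : (Fin K → ℝ) × ℝ | (B.filter fun i => q.2 < q.1 i) = u}
      = {q | ∀ i, (i ∈ B ∧ q.2 < q.1 i) ↔ i ∈ u} := by
      ext q
      simp only [Set.mem_ofPred_eq, Finset.ext_iff, Finset.mem_filter]
    rw [this]
    refine Measurable.setOf (Measurable.forall fun i => Measurable.iff (Measurable.and measurable_const ?_) measurable_const)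
    exact measurableSet_setOfPred.1 (measurableSet_lt measurable_snd (by fun_prop))
  · by_cases h : u.Nonempty
    · simp only [dif_pos h]
      induction h using Finset.Nonempty.cons_induction with
      | singleton a => simp only [Finset.inf'_singleton]; fun_prop
      | cons a s ha hs ih =>
        simp only [Finset.inf'_cons hs]
        exact Measurable.min (by fun_prop) ih
    · simp only [dif_neg h]
      exact measurable_snd

lemma nxi_meas (B : Finset (Fin K)) (i : ℕ) :
    Measurable fun q : (Fin K → ℝ) × ℝ => (nx (B.image q.1))^[i] q.2 := by
  induction i with
  | zero => exact measurable_snd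
  | succ i ih =>
    simp only [Function.iterate_succ_apply']
    exact (nx_meas B).comp (measurable_fst.prodMk ih)

lemma GG_meas (n : ℝ) (B : Finset (Fin K)) :
    Measurable fun q : (Fin K → ℝ) × ℝ => GG n (B.image q.1) q.2 := by
  refine measurable_pi_iff.2 fun i => ?_
  have := nxi_meas B (i + 1)
  simp only [Function.iterate_succ_apply'] at this
  exact (this.sub (nxi_meas B i)).const_mul n

lemma FF_image (n : ℝ) (φ : (ℕ → ℝ) → ℝ) (B : Finset (Fin K)) (X : Fin K → ℝ) :
    FF n φ (B.image X) = ∑ i ∈ B.filter (fun i => ∀ j ∈ B, j < i → X j ≠ X i),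
      φ (GG n (B.image X) (X i)) := by
  classical
  rw [FF]
  have : B.image X = (B.filter (fun i => ∀ j ∈ B, j < i → X j ≠ X i)).image X := by
    ext z
    constructor
    · intro hz
      obtain ⟨i, hi, rfl⟩ := Finset.mem_image.1 hz
      have hne : (B.filter fun j => X j = X i).Nonempty := ⟨i, by simp [hi]⟩
      have h1 := Finset.mem_filter.1 (Finset.min'_mem _ hne)
      refine Finset.mem_image.2 ⟨(B.filter fun j => X j = X i).min' hne, ?_, h1.2⟩
      refine Finset.mem_filter.2 ⟨h1.1, fun j hj hlt he => ?_⟩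
      exact absurd (Finset.min'_le _ j (Finset.mem_filter.2 ⟨hj, he.trans h1.2⟩)) (not_le.2 hlt)
    · intro hz
      obtain ⟨i, hi, rfl⟩ := Finset.mem_image.1 hz
      exact Finset.mem_image_of_mem _ (Finset.mem_filter.1 hi).1
  conv_lhs => rw [Finset.sum_congr this (fun x _ => rfl)]
  rw [Finset.sum_image]
  intro i hi j hj e
  obtain ⟨hi1, hi2⟩ := Finset.mem_filter.1 hi
  obtain ⟨hj1, hj2⟩ := Finset.mem_filter.1 hj
  rcases lt_trichotomy i j with h | h | h
  · exact absurd e (hj2 i hi1 h)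
  · exact h
  · exact absurd e.symm (hi2 j hj1 h)

lemma FF_MS (n : ℝ) {φ : (ℕ → ℝ) → ℝ} (hφ : Continuous φ) : MS K (FF n φ) := by
  classical
  intro B
  simp_rw [FF_image, Finset.sum_filter]
  refine Finset.measurable_sum _ fun i _ => Measurable.ite ?_ ?_ measurable_const
  · refine Measurable.setOf (Measurable.forall fun j => Measurable.imp measurable_const
      (Measurable.imp measurable_const (Measurable.not ?_)))
    exact measurableSet_setOfPred.1 (measurableSet_eq_fun (measurable_pi_apply j) (measurable_pi_apply i))
  · have h1 : Measurable fun X : Fin K → ℝ => (X, X i) := measurable_id.prodMk (measurable_pi_apply i)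
    have h2 := (GG_meas n B).comp h1
    exact hφ.measurable.comp h2

end

/-- expectation of the empirical functional after `m` steps -/
noncomputable def ee (c : ℝ) (N : ℕ) (φ : (ℕ → ℝ) → ℝ) (m : ℕ) : ℝ :=
  (N : ℝ)⁻¹ * ∫ X, (Tp (c / N))^[m] (FF N φ) (Finset.univ.image X) ∂(unifCube N)

lemma ae_01 (N : ℕ) : ∀ᵐ X ∂(unifCube N), ∀ i, X i ∈ Set.Icc (0:ℝ) 1 := by
  rw [unifCube_eq, ae_all_iff]
  intro i
  have h : ∀ᵐ x ∂U01, x ∈ Set.Icc (0:ℝ) 1 := ae_restrict_mem measurableSet_Icc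
  exact (measurePreserving_eval (fun _ : Fin N => U01) i).quasiMeasurePreserving.ae h

lemma TF_bd (r : ℝ) (N : ℕ) {φ : (ℕ → ℝ) → ℝ} {M : ℝ} (h : ∀ g, |φ g| ≤ M) (n : ℝ) (m : ℕ) (X : Fin N → ℝ) :
    |(Tp r)^[m] (FF n φ) (Finset.univ.image X)| ≤ N * M := by
  have hM : 0 ≤ M := (abs_nonneg _).trans (h 0)
  refine Tp_iter_bd r m fun S' hS' => (FF_bd h S').trans ?_
  refine mul_le_mul_of_nonneg_right ?_ hM
  have := (Finset.card_le_card hS').trans Finset.card_image_le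
  rw [Finset.card_univ, Fintype.card_fin] at this
  exact_mod_cast this

lemma TF_int (r : ℝ) (N : ℕ) {φ : (ℕ → ℝ) → ℝ} (hφ : Continuous φ) {M : ℝ} (h : ∀ g, |φ g| ≤ M) (n : ℝ) (m : ℕ) :
    Integrable (fun X : Fin N → ℝ => (Tp r)^[m] (FF n φ) (Finset.univ.image X)) (unifCube N) :=
  integrable_of_bdd (((FF_MS n hφ).iter r m) Finset.univ) (B := N * M) fun X => TF_bd r N h n m X

lemma ee_bd (c : ℝ) (N : ℕ) {φ : (ℕ → ℝ) → ℝ} {M : ℝ} (h : ∀ g, |φ g| ≤ M) (m : ℕ) :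
    |ee c N φ m| ≤ M := by
  have hM : 0 ≤ M := (abs_nonneg _).trans (h 0)
  have := norm_integral_le_of_norm_le_const (μ := unifCube N) (C := N * M)
    (f := fun X : Fin N → ℝ => (Tp (c / N))^[m] (FF N φ) (Finset.univ.image X))
    (Filter.Eventually.of_forall fun X => TF_bd (c / N) N h N m X)
  rw [ee, abs_mul]
  simp only [Real.norm_eq_abs, probReal_univ, mul_one] at this
  rcases Nat.eq_zero_or_pos N with rfl | hN
  · simpa using hM
  · have hN' : (0:ℝ) < N := by exact_mod_cast hN
    rw [abs_of_pos (inv_pos.2 hN')]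
    calc _ ≤ (N : ℝ)⁻¹ * (N * M) := mul_le_mul_of_nonneg_left this (inv_pos.2 hN').le
      _ = M := by field_simp

lemma ee_step {c : ℝ} (hc : 0 < c) {N : ℕ} (hN : 0 < N) {k : ℕ} {M : ℝ} {φ : (ℕ → ℝ) → ℝ}
    (h : TT k M φ) (m : ℕ) :
    |ee c N φ (m + 1) - ee c N φ m - (N : ℝ)⁻¹ * ee c N (LL c k φ) m|
      ≤ (8 * k * (k + 1) + 11) * c * M * ((N : ℝ)⁻¹) ^ 2 := by
  have hN' : (0:ℝ) < N := by exact_mod_cast hN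
  have hL := LL_TT hc h
  have i1 := TF_int (c / N) N h.cont h.bd N (m + 1)
  have i2 := TF_int (c / N) N h.cont h.bd N m
  have i3 := TF_int (c / N) N hL.cont hL.bd N m
  have e := lin3 i1 i2 i3 1 (-1) (-(N : ℝ)⁻¹)
  have b : ∀ᵐ X ∂(unifCube N), ‖1 * (Tp (c / N))^[m + 1] (FF N φ) (Finset.univ.image X)
      + -1 * (Tp (c / N))^[m] (FF N φ) (Finset.univ.image X)
      + -(N : ℝ)⁻¹ * (Tp (c / N))^[m] (FF N (LL c k φ)) (Finset.univ.image X)‖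
      ≤ (N : ℝ)⁻¹ * ((8 * k * (k + 1) + 11) * c * M) := by
    filter_upwards [ae_01 N] with X hX
    have := Tp_step hc hN' (S := Finset.univ.image X) (fun x hx => by
      obtain ⟨i, _, rfl⟩ := Finset.mem_image.1 hx
      exact hX i) h m
    rw [Real.norm_eq_abs]
    convert this using 2
    ring
  have := norm_integral_le_of_norm_le_const b
  rw [e] at this
  simp only [Real.norm_eq_abs, probReal_univ, mul_one] at this
  simp only [ee]
  rw [show ∀ A B C : ℝ, (N:ℝ)⁻¹ * A - (N:ℝ)⁻¹ * B - (N:ℝ)⁻¹ * ((N:ℝ)⁻¹ * C)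
    = (N:ℝ)⁻¹ * (1 * A + -1 * B + -(N:ℝ)⁻¹ * C) by intros; ring, abs_mul, abs_of_pos (inv_pos.2 hN')]
  calc _ ≤ (N:ℝ)⁻¹ * ((N : ℝ)⁻¹ * ((8 * k * (k + 1) + 11) * c * M)) :=
        mul_le_mul_of_nonneg_left this (inv_pos.2 hN').le
    _ = _ := by ring

end MM

open MeasureTheory
open scoped ENNReal

namespace MM

lemma cube_restrict (N : ℕ) : unifCube N = (volume : Measure (Fin N → ℝ)).restrict
    (Set.univ.pi fun _ => Set.Icc (0:ℝ) 1) := by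
  rw [unifCube_eq, volume_pi, Measure.restrict_pi_pi]; rfl

lemma ae_inj (N : ℕ) : ∀ᵐ X ∂(unifCube N), Function.Injective X := by
  have h : ∀ i j : Fin N, i ≠ j → ∀ᵐ X ∂(unifCube N), X i ≠ X j := by
    intro i j hij
    rw [cube_restrict]
    refine ae_restrict_of_ae ?_
    let L : (Fin N → ℝ) →ₗ[ℝ] ℝ := LinearMap.proj (R := ℝ) (φ := fun _ : Fin N => ℝ) i -
      LinearMap.proj (R := ℝ) (φ := fun _ : Fin N => ℝ) j
    have hL : LinearMap.ker L ≠ ⊤ := by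
      intro h
      have := (Submodule.eq_top_iff'.1 h) (Pi.single i 1)
      simp [L, Pi.single_apply, hij.symm] at this
    have := Measure.addHaar_submodule (volume : Measure (Fin N → ℝ)) _ hL
    rw [ae_iff]
    convert this using 2
    ext X
    simp [L, sub_eq_zero]
  have h2 : ∀ᵐ X ∂(unifCube N), ∀ i j : Fin N, i ≠ j → X i ≠ X j := by
    rw [ae_all_iff]; intro i
    rw [ae_all_iff]; intro j
    by_cases hij : i = j
    · exact Filter.Eventually.of_forall fun X h => absurd hij h
    · filter_upwards [h i j hij] with X hX _ using hX
  filter_upwards [h2] with X hX i j hij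
  by_contra hne
  exact hX i j hne hij

lemma cube_box (n : ℕ) (s : Set ℝ) :
    (unifCube n).real (Set.univ.pi fun _ => s) = (U01.real s) ^ n := by
  rw [unifCube_eq, Measure.real, Measure.pi_pi, Finset.prod_const, ENNReal.toReal_pow, Finset.card_univ,
    Fintype.card_fin]
  rfl

lemma U01_gap {w x : ℝ} (hw : 0 ≤ w) (hwx : w ≤ x) (hx : x ≤ 1) :
    U01.real (Set.Ioc w x)ᶜ = 1 - (x - w) := by
  have h2 : Set.Ioc w x ∩ Set.Icc 0 1 = Set.Ioc w x :=
    Set.inter_eq_left.2 (fun y hy => ⟨hw.trans hy.1.le, hy.2.trans hx⟩)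
  rw [probReal_compl_eq_one_sub measurableSet_Ioc, U01, measureReal_restrict_apply measurableSet_Ioc,
    h2, Measure.real, Real.volume_Ioc,
    ENNReal.toReal_ofReal (by linarith)]

lemma U01_Iic {w : ℝ} (hw : 0 ≤ w) (hx : w ≤ 1) : U01.real (Set.Iic w) = w := by
  rw [U01, measureReal_restrict_apply measurableSet_Iic]
  have : Set.Iic w ∩ Set.Icc 0 1 = Set.Icc 0 w := by
    ext y; simp only [Set.mem_inter_iff, Set.mem_Iic, Set.mem_Icc]
    constructor
    · rintro ⟨a, b, _⟩; exact ⟨b, a⟩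
    · rintro ⟨a, b⟩; exact ⟨b, a, b.trans hx⟩
  rw [this, Measure.real, Real.volume_Icc, ENNReal.toReal_ofReal (by linarith), sub_zero]

open Classical in
noncomputable def JI {n : ℕ} (ν w x : ℝ) (φ : (ℕ → ℝ) → ℝ) (X : Fin n → ℝ) : ℝ :=
  if ∀ i, X i ∉ Set.Ioc w x then φ (GG ν (Finset.univ.image X) x) else 0

noncomputable def JJ (n : ℕ) (ν w x : ℝ) (φ : (ℕ → ℝ) → ℝ) : ℝ :=
  ∫ X : Fin n → ℝ, JI ν w x φ X ∂(unifCube n)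

open Classical in
noncomputable def JR {n : ℕ} (ν w x : ℝ) (φ : (ℕ → ℝ) → ℝ) (X : Fin n → ℝ) : ℝ :=
  if ∀ i, X i ≤ w then φ (GG ν (Finset.univ.image X) x) else 0

open Classical in
noncomputable def JH {n : ℕ} (ν w x : ℝ) (φ : (ℕ → ℝ) → ℝ) (q : ℝ × (Fin n → ℝ)) : ℝ :=
  if x < q.1 then JI ν w q.1 (fun s => φ (scons (ν * (q.1 - x)) s)) q.2 else 0

lemma up_remove {n : ℕ} (X : Fin (n + 1) → ℝ) (i : Fin (n + 1)) :
    up (Finset.univ.image X) (X i) = up (Finset.univ.image (i.removeNth X)) (X i) := by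
  classical
  ext y
  simp only [mem_up, Finset.mem_image, Finset.mem_univ, true_and, Fin.removeNth]
  constructor
  · rintro ⟨⟨j, rfl⟩, h⟩
    have : j ≠ i := by rintro rfl; exact lt_irrefl _ h
    obtain ⟨l, rfl⟩ := Fin.exists_succAbove_eq this
    exact ⟨⟨l, rfl⟩, h⟩
  · rintro ⟨⟨j, rfl⟩, h⟩
    exact ⟨⟨_, rfl⟩, h⟩

lemma JI_decomp {n : ℕ} {ν w x : ℝ} (hwx : w ≤ x) (φ : (ℕ → ℝ) → ℝ) {X : Fin (n + 1) → ℝ}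
    (hX : Function.Injective X) :
    JI ν w x φ X = JR ν w x φ X + ∑ i, JH ν w x φ (X i, i.removeNth X) := by
  classical
  by_cases hne : (up (Finset.univ.image X) x).Nonempty
  · obtain ⟨h1, h2⟩ := nx_mem hne
    obtain ⟨i, _, hi⟩ := Finset.mem_image.1 h1
    have hmin : ∀ j, x < X j → X i ≤ X j := fun j hj => by
      rw [hi]; exact nx_le (Finset.mem_image_of_mem _ (Finset.mem_univ j)) hj
    have hR : JR ν w x φ X = 0 := by
      rw [JR, if_neg]
      intro h
      have := h i
      linarith
    rw [hR, zero_add, Finset.sum_eq_single i]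
    · rw [JH, if_pos (by rw [hi]; exact h2), JI, JI]
      dsimp only
      have hiff : (∀ j, X j ∉ Set.Ioc w x) ↔ ∀ j, i.removeNth X j ∉ Set.Ioc w (X i) := by
        constructor
        · rintro h j ⟨ha, hb⟩
          simp only [Fin.removeNth] at ha hb
          have h3 : x < X (i.succAbove j) := by
            by_contra h'
            exact h _ ⟨ha, not_lt.1 h'⟩
          have := hX (le_antisymm hb (hmin _ h3))
          exact Fin.succAbove_ne i j this
        · rintro h j ⟨ha, hb⟩
          by_cases hj : j = i
          · subst hj; linarith
          · obtain ⟨l, rfl⟩ := Fin.exists_succAbove_eq hj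
            exact h l ⟨ha, hb.trans (by rw [hi]; exact h2.le)⟩
      rw [if_congr hiff _ rfl]
      rw [GG_scons, ← hi, GG_congr (up_remove X i)]
    · intro j _ hj
      rw [JH]
      dsimp only
      split_ifs with hxj
      · rw [JI, if_neg]
        intro h
        obtain ⟨l, hl⟩ := Fin.exists_succAbove_eq (Ne.symm hj)
        refine h l ?_
        simp only [Fin.removeNth, hl]
        exact ⟨by linarith, hmin j hxj⟩
      · rfl
    · simp
  · have hle : ∀ i, X i ≤ x := fun i => by
      by_contra h
      exact hne ⟨X i, mem_up.2 ⟨Finset.mem_image_of_mem _ (Finset.mem_univ i), not_le.1 h⟩⟩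
    rw [Finset.sum_eq_zero, add_zero, JI, JR]
    · refine if_congr ⟨fun h i => ?_, fun h i hi => ?_⟩ rfl rfl
      · by_contra h'
        exact h i ⟨not_le.1 h', hle i⟩
      · linarith [h i, hi.1]
    · intro i _
      rw [JH, if_neg (not_lt.2 (hle i))]

lemma mprop_notIoc {n : ℕ} (w : ℝ) (i : Fin n) :
    Measurable fun q : ℝ × (Fin n → ℝ) => q.2 i ∉ Set.Ioc w q.1 := by
  have h1 : Measurable fun q : ℝ × (Fin n → ℝ) => q.2 i := (measurable_pi_apply i).comp measurable_snd
  refine Measurable.not (Measurable.and ?_ ?_)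
  · exact measurableSet_setOfPred.1 (measurableSet_lt measurable_const h1)
  · exact measurableSet_setOfPred.1 (measurableSet_le h1 measurable_fst)

lemma GG_meas' {n : ℕ} (ν : ℝ) :
    Measurable fun q : ℝ × (Fin n → ℝ) => GG ν (Finset.univ.image q.2) q.1 := by
  have h1 : Measurable fun q : ℝ × (Fin n → ℝ) => (q.2, q.1) := measurable_snd.prodMk measurable_fst
  have h2 := (GG_meas ν (Finset.univ : Finset (Fin n))).comp h1
  exact h2

lemma JI_meas {n : ℕ} (ν w : ℝ) {φ : (ℕ → ℝ) → ℝ} (hφ : Continuous φ) :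
    Measurable fun q : ℝ × (Fin n → ℝ) => JI ν w q.1 φ q.2 := by
  unfold JI
  refine Measurable.ite ?_ (hφ.measurable.comp (GG_meas' ν)) measurable_const
  exact Measurable.setOf (Measurable.forall fun i => mprop_notIoc w i)

lemma JH_meas {n : ℕ} (ν w x : ℝ) {φ : (ℕ → ℝ) → ℝ} (hφ : Continuous φ) :
    Measurable (JH (n := n) ν w x φ) := by
  unfold JH JI
  refine Measurable.ite (measurableSet_lt measurable_const measurable_fst) ?_ measurable_const
  refine Measurable.ite ?_ ?_ measurable_const
  · exact Measurable.setOf (Measurable.forall fun i => mprop_notIoc w i)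
  · have h1 : Continuous fun q : ℝ × (ℕ → ℝ) => φ (scons q.1 q.2) := hφ.comp (by fun_prop)
    have h2 : Measurable fun q : ℝ × (Fin n → ℝ) =>
      (ν * (q.1 - x), GG ν (Finset.univ.image q.2) q.1) :=
      ((measurable_fst.sub_const x).const_mul ν).prodMk (GG_meas' ν)
    exact h1.measurable.comp h2

lemma JI_bd {n : ℕ} (ν w x : ℝ) {φ : (ℕ → ℝ) → ℝ} {M : ℝ} (h : ∀ g, |φ g| ≤ M) (X : Fin n → ℝ) :
    |JI ν w x φ X| ≤ (Set.univ.pi fun _ => (Set.Ioc w x)ᶜ).indicator (fun _ => M) X := by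
  classical
  rw [JI]
  split_ifs with h'
  · rw [Set.indicator_of_mem]
    · exact h _
    · exact fun i _ => h' i
  · rw [abs_zero]
    exact Set.indicator_nonneg (fun _ _ => (abs_nonneg _).trans (h 0)) _

lemma JI_bd' {n : ℕ} (ν w x : ℝ) {φ : (ℕ → ℝ) → ℝ} {M : ℝ} (h : ∀ g, |φ g| ≤ M) (X : Fin n → ℝ) :
    |JI ν w x φ X| ≤ M :=
  (JI_bd ν w x h X).trans (Set.indicator_le_self' (fun _ _ => (abs_nonneg _).trans (h 0)) _)

lemma box_meas {n : ℕ} {s : Set ℝ} (hs : MeasurableSet s) :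
    MeasurableSet (Set.univ.pi fun _ : Fin n => s) := MeasurableSet.univ_pi fun _ => hs

lemma int_ind {n : ℕ} {s : Set ℝ} (hs : MeasurableSet s) (M : ℝ) :
    ∫ X, (Set.univ.pi fun _ : Fin n => s).indicator (fun _ => M) X ∂(unifCube n) = U01.real s ^ n * M := by
  rw [integral_indicator_const _ (box_meas hs), cube_box, smul_eq_mul]

lemma JJ_bd {n : ℕ} {ν w x : ℝ} (hw : 0 ≤ w) (hwx : w ≤ x) (hx : x ≤ 1) {φ : (ℕ → ℝ) → ℝ} {M : ℝ}
    (h : ∀ g, |φ g| ≤ M) : |JJ n ν w x φ| ≤ (1 - (x - w)) ^ n * M := by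
  rw [← U01_gap hw hwx hx, ← int_ind measurableSet_Ioc.compl]
  rw [JJ, ← Real.norm_eq_abs]
  refine norm_integral_le_of_norm_le ?_ (Filter.Eventually.of_forall fun X => by
    rw [Real.norm_eq_abs]; exact JI_bd ν w x h X)
  exact (integrable_const M).indicator (box_meas measurableSet_Ioc.compl)

lemma JJ_const {n : ℕ} {ν w x : ℝ} (hw : 0 ≤ w) (hwx : w ≤ x) (hx : x ≤ 1) {φ : (ℕ → ℝ) → ℝ} {a : ℝ}
    (h : ∀ g, φ g = a) : JJ n ν w x φ = (1 - (x - w)) ^ n * a := by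
  classical
  rw [← U01_gap hw hwx hx, ← int_ind measurableSet_Ioc.compl, JJ]
  congr 1; ext X
  rw [JI, Set.indicator_apply]
  refine if_congr ⟨fun h i _ => h i, fun h i => h i trivial⟩ (h _) rfl

lemma JJ_rec {n : ℕ} {ν w x : ℝ} (hν : 0 < ν) (hw : 0 ≤ w) (hwx : w ≤ x) (hx : x ≤ 1) {φ : (ℕ → ℝ) → ℝ} {M : ℝ}
    (hφ : Continuous φ) (h : ∀ g, |φ g| ≤ M) :
    |JJ (n + 1) ν w x φ - (n + 1) / ν * ∫ g, (Set.Ioc 0 (ν * (1 - x))).indicator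
      (fun g => JJ n ν w (x + g / ν) fun s => φ (scons g s)) g| ≤ w ^ (n + 1) * M := by
  classical
  have hM : 0 ≤ M := (abs_nonneg _).trans (h 0)
  have mI : Measurable fun X : Fin (n + 1) → ℝ => JI ν w x φ X := (JI_meas ν w hφ).comp (measurable_const.prodMk measurable_id)
  have bH : ∀ q : ℝ × (Fin n → ℝ), |JH ν w x φ q| ≤ M := fun q => by
    rw [JH]; split_ifs
    · exact JI_bd' _ _ _ (fun g => h _) _
    · simpa using hM
  have mH : ∀ i : Fin (n + 1), Measurable fun X : Fin (n + 1) → ℝ => JH ν w x φ (X i, i.removeNth X) := fun i => by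
    refine (JH_meas ν w x hφ).comp ((measurable_pi_apply i).prodMk ?_)
    exact measurable_pi_iff.2 fun j => measurable_pi_apply _
  have iH : ∀ i : Fin (n + 1), Integrable (fun X : Fin (n + 1) → ℝ => JH ν w x φ (X i, i.removeNth X))
      (unifCube (n + 1)) := fun i => integrable_of_bdd (mH i) fun X => bH _
  have iI : Integrable (fun X : Fin (n + 1) → ℝ => JI ν w x φ X) (unifCube (n + 1)) :=
    integrable_of_bdd mI fun X => JI_bd' _ _ _ h _
  have e1 : ∫ X : Fin (n + 1) → ℝ, ∑ i, JH ν w x φ (X i, i.removeNth X) ∂(unifCube (n + 1))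
      = (n + 1) / ν * ∫ g, (Set.Ioc 0 (ν * (1 - x))).indicator
      (fun g => JJ n ν w (x + g / ν) fun s => φ (scons g s)) g := by
    rw [integral_finsetSum _ fun i _ => iH i]
    have : ∀ i : Fin (n + 1), ∫ X : Fin (n + 1) → ℝ, JH ν w x φ (X i, i.removeNth X) ∂(unifCube (n + 1))
        = ∫ y, (Set.Ioc x 1).indicator (fun y => JJ n ν w y fun s => φ (scons (ν * (y - x)) s)) y := by
      intro i
      rw [cube_succ i (iH i), U01, ← integral_indicator measurableSet_Icc]
      congr 1; ext y
      simp only [Fin.insertNth_apply_same, Fin.removeNth_insertNth]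
      by_cases hy : y ∈ Set.Ioc x 1
      · have hy' : y ∈ Set.Icc (0:ℝ) 1 := ⟨by linarith [hy.1], hy.2⟩
        rw [Set.indicator_of_mem hy, Set.indicator_of_mem hy']
        simp only [JH, if_pos hy.1, JJ]
      · rw [Set.indicator_of_notMem hy]
        by_cases hy2 : x < y
        · rw [Set.indicator_of_notMem fun h => hy ⟨hy2, h.2⟩]
        · rw [Set.indicator_apply]
          simp only [JH, if_neg hy2, integral_zero, ite_self]
    simp_rw [this]
    rw [Finset.sum_const, Finset.card_univ, Fintype.card_fin, nsmul_eq_mul, div_mul_eq_mul_div, mul_div_assoc]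
    push_cast
    congr 1
    rw [← integral_add_left_eq_self (μ := volume) _ x, eq_div_iff hν.ne', mul_comm]
    have := Measure.integral_comp_div (fun y => (Set.Ioc x 1).indicator
      (fun y => JJ n ν w y fun s => φ (scons (ν * (y - x)) s)) (x + y)) ν
    rw [abs_of_pos hν, smul_eq_mul] at this
    rw [← this]
    congr 1; ext g
    have hiff : x + g / ν ∈ Set.Ioc x 1 ↔ g ∈ Set.Ioc 0 (ν * (1 - x)) := by
      simp only [Set.mem_Ioc]
      refine and_congr ?_ ?_
      · rw [lt_add_iff_pos_right, div_pos_iff_of_pos_right hν]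
      · rw [← le_sub_iff_add_le', div_le_iff₀' hν]
    by_cases hg : g ∈ Set.Ioc 0 (ν * (1 - x))
    · rw [Set.indicator_of_mem hg, Set.indicator_of_mem (hiff.2 hg)]
      rw [add_sub_cancel_left, mul_div_cancel₀ _ hν.ne']
    · rw [Set.indicator_of_notMem hg, Set.indicator_of_notMem fun h => hg (hiff.1 h)]
  rw [← e1, JJ, ← integral_sub iI (integrable_finsetSum _ fun i _ => iH i)]
  rw [show w ^ (n + 1) * M = U01.real (Set.Iic w) ^ (n + 1) * M by rw [U01_Iic hw (hwx.trans hx)],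
    ← int_ind measurableSet_Iic, ← Real.norm_eq_abs]
  refine norm_integral_le_of_norm_le ((integrable_const M).indicator (box_meas measurableSet_Iic)) ?_
  filter_upwards [ae_inj (n + 1)] with X hX
  rw [JI_decomp hwx φ hX, add_sub_cancel_right, JR, Real.norm_eq_abs]
  split_ifs with h'
  · rw [Set.indicator_of_mem]
    · exact h _
    · exact fun i _ => h' i
  · rw [abs_zero]
    exact Set.indicator_nonneg (fun _ _ => hM) _

end MM

open MeasureTheory
open scoped ENNReal

namespace MM

lemma int_meas {n : ℕ} {F : ℝ × (Fin n → ℝ) → ℝ} (hF : Measurable F) :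
    Measurable fun x => ∫ X, F (x, X) ∂(unifCube n) :=
  (hF.stronglyMeasurable.integral_prod_right' (ν := unifCube n)).measurable

noncomputable def p0 : ℝ → ℝ := fun x => if 0 ≤ x then Real.exp (-x) else 0

lemma inv_lim (z : ℝ) : Filter.Tendsto (fun N : ℕ => z / (N:ℝ)) Filter.atTop (nhds 0) :=
  tendsto_const_div_atTop_nhds_zero_nat z

lemma pow_lim (z : ℝ) (j : ℕ) :
    Filter.Tendsto (fun N : ℕ => (1 - z / (N:ℝ)) ^ (N - j)) Filter.atTop (nhds (Real.exp (-z))) := by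
  have h1 := Real.tendsto_one_add_div_pow_exp (-z)
  have h2 : Filter.Tendsto (fun N : ℕ => (1 - z / (N:ℝ))) Filter.atTop (nhds 1) := by
    simpa using (inv_lim z).const_sub 1
  have h3 := h1.div (h2.pow j) (by simp)
  simp only [one_pow, div_one] at h3
  refine h3.congr' ?_
  filter_upwards [h2.eventually_ne one_ne_zero, Filter.eventually_ge_atTop j] with N hN hj
  simp only [Pi.div_apply]
  rw [pow_sub₀ _ hN hj, neg_div, ← sub_eq_add_neg, div_eq_mul_inv]

lemma JJ_lim (k : ℕ) : ∀ {M : ℝ} {φ : (ℕ → ℝ) → ℝ}, TT k M φ → ∀ (j : ℕ) (w z : ℝ), 0 ≤ w → w < 1 → 0 ≤ z →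
    Filter.Tendsto (fun N : ℕ => JJ (N - j) N w (w + z / N) φ) Filter.atTop
      (nhds (Real.exp (-z) * II p0 k φ)) := by
  have hev : ∀ w z : ℝ, w < 1 → ∀ᶠ N : ℕ in Filter.atTop, w + z / N ≤ 1 := by
    intro w z hw
    have : Filter.Tendsto (fun N : ℕ => w + z / (N:ℝ)) Filter.atTop (nhds w) := by
      simpa using (inv_lim z).const_add w
    exact this.eventually_le_const hw
  induction k with
  | zero =>
    intro M φ h j w z hw hw1 hz
    have h0 : ∀ g, φ g = φ 0 := fun g => h.loc _ _ fun i hi => absurd hi (by omega)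
    refine ((pow_lim z j).mul_const (φ 0)).congr' ?_
    filter_upwards [hev w z hw1] with N hN
    rw [JJ_const hw (le_add_of_nonneg_right (by positivity)) hN h0, add_sub_cancel_left]
  | succ k ih =>
    intro M φ h j w z hw hw1 hz
    have hM := h.Mnn
    set F : ℕ → ℝ → ℝ := fun N g => (Set.Ioc 0 ((N:ℝ) * (1 - (w + z / N)))).indicator
      (fun g => JJ (N - (j + 1)) N w ((w + z / N) + g / N) fun s => φ (scons g s)) g with hF
    have hlim : Filter.Tendsto (fun N => ∫ g, F N g) Filter.atTop
        (nhds (∫ g, Real.exp (-z) * (p0 g * II p0 k fun s => φ (scons g s)))) := by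
      refine tendsto_integral_filter_of_dominated_convergence
        ((Set.Ioi 0).indicator fun g => M * Real.exp (-(1/2) * g)) ?_ ?_ ?_ ?_
      · filter_upwards [Filter.eventually_gt_atTop 0] with N hN
        have hN' : (0:ℝ) < N := by exact_mod_cast hN
        have e : F N = (Set.Ioc 0 ((N:ℝ) * (1 - (w + z / N)))).indicator
          (fun g => ∫ X : Fin (N - (j + 1)) → ℝ, JH N w (w + z / N) φ ((w + z / N) + g / N, X)
            ∂(unifCube (N - (j + 1)))) := by
          ext g
          simp only [hF]
          by_cases hg : g ∈ Set.Ioc 0 ((N:ℝ) * (1 - (w + z / N)))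
          · rw [Set.indicator_of_mem hg, Set.indicator_of_mem hg]
            have h1 : w + z / N < w + z / N + g / N := by
              have := div_pos hg.1 hN'; linarith
            simp only [JH, if_pos h1, JJ]
            rw [add_sub_cancel_left, mul_div_cancel₀ _ hN'.ne']
          · rw [Set.indicator_of_notMem hg, Set.indicator_of_notMem hg]
        rw [e]
        refine AEStronglyMeasurable.indicator ?_ measurableSet_Ioc
        have h1 : Measurable fun q : ℝ × (Fin (N - (j + 1)) → ℝ) => ((w + z / N) + q.1 / N, q.2) :=
          (measurable_const.add (measurable_fst.div_const _)).prodMk measurable_snd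
        have h2 := (JH_meas N w (w + z / N) h.cont).comp h1
        exact (int_meas h2).aestronglyMeasurable
      · filter_upwards [Filter.eventually_ge_atTop (2 * (j + 1))] with N hN
        refine Filter.Eventually.of_forall fun g => ?_
        have hN' : (0:ℝ) < N := by exact_mod_cast (show 0 < N by omega)
        simp only [hF]
        by_cases hg : g ∈ Set.Ioc 0 ((N:ℝ) * (1 - (w + z / N)))
        · have hg0 := hg.1
          have hg1 : g / N ≤ 1 - (w + z / N) := by rw [div_le_iff₀' hN']; exact hg.2
          rw [Set.indicator_of_mem hg, Set.indicator_of_mem (show g ∈ Set.Ioi 0 from hg.1), Real.norm_eq_abs]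
          have hzN : 0 ≤ z / N := by positivity
          have hgN : 0 ≤ g / N := by positivity
          have := JJ_bd (n := N - (j + 1)) (ν := N) hw (x := (w + z / N) + g / N) (by linarith) (by linarith)
            (φ := fun s => φ (scons g s)) (fun s => h.bd _)
          refine this.trans ?_
          rw [mul_comm M]
          refine mul_le_mul_of_nonneg_right ?_ hM
          have h3 : 1 - (w + z / N + g / N - w) ≤ Real.exp (-(g / N)) := by
            have := Real.add_one_le_exp (-(g / N)); linarith
          refine (pow_le_pow_left₀ (by linarith) h3 _).trans ?_
          rw [← Real.exp_nat_mul, Real.exp_le_exp]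
          have h4 : (N:ℝ) / 2 ≤ ((N - (j + 1) : ℕ) : ℝ) := by
            rw [div_le_iff₀ (by norm_num)]
            exact_mod_cast (show N ≤ (N - (j + 1)) * 2 by omega)
          calc ((N - (j + 1) : ℕ) : ℝ) * -(g / N) ≤ (N:ℝ) / 2 * -(g / N) :=
                mul_le_mul_of_nonpos_right h4 (by linarith)
            _ = _ := by field_simp
        · rw [Set.indicator_of_notMem hg, norm_zero]
          exact Set.indicator_nonneg (fun _ _ => by positivity) _
      · rw [integrable_indicator_iff measurableSet_Ioi]
        exact (integrableOn_exp_mul_Ioi (by norm_num) 0).const_mul M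
      · have h0 : ∀ᵐ g : ℝ, g ≠ 0 := by simp [ae_iff]
        filter_upwards [h0] with g hg0
        rcases lt_or_gt_of_ne hg0 with hg | hg
        · rw [show (p0 g) = 0 from if_neg (not_le.2 hg), zero_mul, mul_zero]
          refine tendsto_const_nhds.congr fun N => ?_
          simp only [hF]
          rw [Set.indicator_of_notMem fun h => by linarith [h.1]]
        · rw [show (p0 g) = Real.exp (-g) from if_pos hg.le, ← mul_assoc, ← Real.exp_add, ← neg_add]
          refine (ih (h.sub g) (j + 1) w (z + g) hw hw1 (by linarith)).congr' ?_
          filter_upwards [hev w (z + g) hw1, Filter.eventually_gt_atTop 0] with N h1 hN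
          have hN' : (0:ℝ) < N := by exact_mod_cast hN
          simp only [hF]
          rw [Set.indicator_of_mem, add_div, add_assoc]
          refine ⟨hg, ?_⟩
          rw [add_div] at h1
          rw [← div_le_iff₀' hN']; linarith
    rw [integral_const_mul] at hlim
    have hfac : Filter.Tendsto (fun N : ℕ => ((N - (j + 1) : ℕ) + 1 : ℝ) / N) Filter.atTop (nhds 1) := by
      have : Filter.Tendsto (fun N : ℕ => 1 - (j:ℝ) / N) Filter.atTop (nhds 1) := by
        simpa using (inv_lim j).const_sub 1
      refine this.congr' ?_
      filter_upwards [Filter.eventually_ge_atTop (j + 1)] with N hN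
      have hN' : (N:ℝ) ≠ 0 := by exact_mod_cast (show N ≠ 0 by omega)
      rw [Nat.cast_sub hN]
      push_cast
      field_simp
      ring
    have hB : Filter.Tendsto (fun N : ℕ => w ^ (N - (j + 1) + 1) * M) Filter.atTop (nhds 0) := by
      have h1 := (tendsto_pow_atTop_nhds_zero_of_lt_one hw hw1).comp (Filter.tendsto_sub_atTop_nat j)
      have h2 := h1.mul_const M
      rw [zero_mul] at h2
      refine h2.congr' ?_
      filter_upwards [Filter.eventually_ge_atTop (j + 1)] with N hN
      simp only [Function.comp]
      rw [show N - (j + 1) + 1 = N - j by omega]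
    have hmain := hfac.mul hlim
    rw [one_mul] at hmain
    have hdiff : Filter.Tendsto (fun N : ℕ => JJ (N - j) N w (w + z / N) φ
        - ((N - (j + 1) : ℕ) + 1 : ℝ) / N * ∫ g, F N g) Filter.atTop (nhds 0) := by
      refine squeeze_zero_norm' ?_ hB
      filter_upwards [Filter.eventually_ge_atTop (j + 1), hev w z hw1] with N hN h1
      have hN' : (0:ℝ) < N := by exact_mod_cast (show 0 < N by omega)
      have := JJ_rec (n := N - (j + 1)) hN' hw (le_add_of_nonneg_right (by positivity)) h1 h.cont h.bd
      rw [show N - j = N - (j + 1) + 1 by omega]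
      exact this
    have := hdiff.add hmain
    simp only [sub_add_cancel, zero_add] at this
    exact this

lemma ee_zero {c : ℝ} {n : ℕ} {M : ℝ} {φ : (ℕ → ℝ) → ℝ} (hφ : Continuous φ) (h : ∀ g, |φ g| ≤ M) :
    ee c (n + 1) φ 0 = ∫ x, JJ n ((n + 1 : ℕ) : ℝ) x x φ ∂U01 := by
  classical
  set ν : ℝ := ((n + 1 : ℕ) : ℝ) with hν
  have hν0 : ν ≠ 0 := by rw [hν]; positivity
  have mH : Measurable fun q : ℝ × (Fin n → ℝ) => φ (GG ν (Finset.univ.image q.2) q.1) :=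
    hφ.measurable.comp (GG_meas' ν)
  have iH : ∀ i : Fin (n + 1), Integrable (fun X : Fin (n + 1) → ℝ =>
      φ (GG ν (Finset.univ.image (i.removeNth X)) (X i))) (unifCube (n + 1)) := fun i => by
    refine integrable_of_bdd (B := M) ?_ fun X => h _
    have h1 : Measurable fun X : Fin (n + 1) → ℝ => (X i, i.removeNth X) :=
      (measurable_pi_apply i).prodMk (measurable_pi_iff.2 fun j => measurable_pi_apply _)
    have := mH.comp h1
    exact this
  have e1 : ∫ X, FF ν φ (Finset.univ.image X) ∂(unifCube (n + 1))
      = ∫ X : Fin (n + 1) → ℝ, ∑ i, φ (GG ν (Finset.univ.image (i.removeNth X)) (X i)) ∂(unifCube (n + 1)) := by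
    refine integral_congr_ae ?_
    filter_upwards [ae_inj (n + 1)] with X hX
    rw [FF, Finset.sum_image hX.injOn]
    refine Finset.sum_congr rfl fun i _ => ?_
    rw [GG_congr (up_remove X i)]
  rw [ee, Function.iterate_zero, id, ← hν, e1, integral_finsetSum _ fun i _ => iH i]
  have : ∀ i : Fin (n + 1), ∫ X : Fin (n + 1) → ℝ, φ (GG ν (Finset.univ.image (i.removeNth X)) (X i)) ∂(unifCube (n + 1))
        = ∫ x, JJ n ν x x φ ∂U01 := by
    intro i
    rw [cube_succ i (iH i)]
    congr 1; ext y
    rw [JJ]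
    congr 1; ext X
    simp only [Fin.insertNth_apply_same, Fin.removeNth_insertNth]
    rw [JI, if_pos (by simp)]
  simp_rw [this]
  rw [Finset.sum_const, Finset.card_univ, Fintype.card_fin, nsmul_eq_mul, ← mul_assoc, inv_mul_cancel₀ hν0, one_mul]

lemma ee_zero_lim (c : ℝ) {k : ℕ} {M : ℝ} {φ : (ℕ → ℝ) → ℝ} (h : TT k M φ) :
    Filter.Tendsto (fun N => ee c N φ 0) Filter.atTop (nhds (II p0 k φ)) := by
  have key : Filter.Tendsto (fun N : ℕ => ∫ x, JJ (N - 1) N x x φ ∂U01) Filter.atTop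
      (nhds (∫ _x, II p0 k φ ∂U01)) := by
    refine tendsto_integral_of_dominated_convergence (fun _ => M) ?_ (integrable_const M) ?_ ?_
    · intro N
      have e : (fun x => JJ (N - 1) N x x φ) = fun x => ∫ X : Fin (N - 1) → ℝ,
        φ (GG N (Finset.univ.image X) x) ∂(unifCube (N - 1)) := by
        ext x
        rw [JJ]
        congr 1; ext X
        rw [JI, if_pos (by simp)]
      rw [e]
      have mH : Measurable fun q : ℝ × (Fin (N - 1) → ℝ) => φ (GG N (Finset.univ.image q.2) q.1) :=
        h.cont.measurable.comp (GG_meas' N)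
      exact (int_meas mH).aestronglyMeasurable
    · intro N
      refine Filter.Eventually.of_forall fun x => ?_
      have := norm_integral_le_of_norm_le_const (μ := unifCube (N - 1)) (C := M)
        (f := fun X : Fin (N - 1) → ℝ => JI N x x φ X)
        (Filter.Eventually.of_forall fun X => JI_bd' N x x h.bd X)
      rw [probReal_univ, mul_one] at this
      exact this
    · have h1 : ∀ᵐ x ∂U01, x ∈ Set.Icc (0:ℝ) 1 := ae_restrict_mem measurableSet_Icc
      have h2 : ∀ᵐ x ∂U01, x ≠ 1 := ae_restrict_of_ae (by simp [ae_iff])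
      filter_upwards [h1, h2] with x hx hx1
      have := JJ_lim k h 1 x 0 hx.1 (lt_of_le_of_ne hx.2 hx1) le_rfl
      simpa using this
  rw [integral_const, probReal_univ, one_smul] at key
  refine key.congr' ?_
  filter_upwards [Filter.eventually_ge_atTop 1] with N hN
  obtain ⟨n, rfl⟩ : ∃ n, N = n + 1 := ⟨N - 1, by omega⟩
  rw [ee_zero h.cont h.bd]
  rfl

end MM

open MeasureTheory
open scoped ENNReal

namespace MM

lemma pow_bern (r : ℕ) {x h : ℝ} (hx : 0 ≤ x) (hh : 0 ≤ h) :
    x ^ (r + 1) + (r + 1) * (x ^ r * h) ≤ (x + h) ^ (r + 1) := by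
  induction r with
  | zero => simp
  | succ r ih =>
    have := mul_le_mul_of_nonneg_right ih (add_nonneg hx hh)
    rw [← pow_succ] at this
    refine le_trans ?_ this
    push_cast
    have h2 : 0 ≤ ((r:ℝ) + 1) * (x ^ r * h) * h := by positivity
    have : (x ^ (r + 1) + (r + 1) * (x ^ r * h)) * (x + h)
      = x ^ (r + 1 + 1) + (r + 1 + 1) * (x ^ (r + 1) * h) + ((r:ℝ) + 1) * (x ^ r * h) * h := by ring
    rw [this]
    linarith

lemma absIter {a : ℕ → ℕ → ℕ → ℝ} {T : ℕ → ℕ} {A D : ℕ → ℝ} (hT : ∀ N, T N ≤ N)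
    (hD : ∀ n, 0 ≤ D n) (hA : ∀ n, 0 ≤ A n)
    (h1 : ∀ N n l, l ≤ T N → a N n l ≤ A n)
    (h2 : ∀ N n l, 0 < N → l + 1 ≤ T N →
      a N n (l + 1) ≤ a N n l + (N:ℝ)⁻¹ * a N (n + 1) l + D n * ((N:ℝ)⁻¹) ^ 2)
    (h3 : ∀ n, Filter.Tendsto (fun N => a N n 0) Filter.atTop (nhds 0)) (r : ℕ) :
    ∀ n, ∃ E : ℕ → ℝ, Filter.Tendsto E Filter.atTop (nhds 0) ∧ (∀ N, 0 ≤ E N) ∧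
      ∀ N l, 0 < N → l ≤ T N → a N n l ≤ E N + A (n + r) / r.factorial * ((l:ℝ) * (N:ℝ)⁻¹) ^ r := by
  induction r with
  | zero =>
    intro n
    exact ⟨fun _ => 0, tendsto_const_nhds, fun _ => le_rfl, fun N l _ hl => by simpa using h1 N n l hl⟩
  | succ r ih =>
    intro n
    obtain ⟨E, hE, hE0, hEb⟩ := ih (n + 1)
    refine ⟨fun N => |a N n 0| + (E N + D n * (N:ℝ)⁻¹), ?_, fun N => ?_, ?_⟩
    · have e1 := (h3 n).abs
      have e2 := (tendsto_inv_atTop_nhds_zero_nat (𝕜 := ℝ)).const_mul (D n)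
      simpa using e1.add (hE.add e2)
    · have := hE0 N; have := hD n; positivity
    · intro N l hN hl
      have hN' : (0:ℝ) < N := by exact_mod_cast hN
      set h : ℝ := (N:ℝ)⁻¹ with hh
      have hpos : 0 < h := inv_pos.2 hN'
      set B := A (n + 1 + r) / r.factorial with hB
      have key : ∀ l, l ≤ T N → a N n l ≤ |a N n 0| + l * h * (E N + D n * h)
          + B / (r + 1) * ((l:ℝ) * h) ^ (r + 1) := by
        intro l
        induction l with
        | zero => intro _; simp [le_abs_self]
        | succ l ihl =>
          intro hl
          have s1 := ihl (by omega)
          have s2 := h2 N n l hN hl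
          have s3 := mul_le_mul_of_nonneg_left (hEb N l hN (by omega)) hpos.le
          have s4 := pow_bern r (x := l * h) (h := h) (by positivity) hpos.le
          have hBn : 0 ≤ B := div_nonneg (hA _) (by positivity)
          have s5 := mul_le_mul_of_nonneg_left s4 (show 0 ≤ B / (r + 1) by positivity)
          have e : B / (r + 1) * ((l * h) ^ (r + 1) + (r + 1) * ((l * h) ^ r * h))
            = B / (r + 1) * (l * h) ^ (r + 1) + h * (B * (l * h) ^ r) := by field_simp
          rw [e] at s5
          push_cast
          rw [show ((l:ℝ) + 1) * h = l * h + h by ring]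
          rw [← hh] at s2
          nlinarith [s1, s2, s3, s5]
      have := key l hl
      have hlN : (l:ℝ) * h ≤ 1 := by
        rw [hh, ← div_eq_mul_inv, div_le_one hN']
        exact_mod_cast hl.trans (hT N)
      have hEE : 0 ≤ E N + D n * h := by have := hE0 N; have := hD n; positivity
      refine this.trans ?_
      have e : A (n + (r + 1)) / ((r + 1).factorial : ℝ) = B / (r + 1) := by
        rw [hB, Nat.factorial_succ, show n + (r + 1) = n + 1 + r by ring]
        push_cast
        have : (r.factorial : ℝ) ≠ 0 := by positivity
        field_simp
      rw [e]
      nlinarith [mul_le_mul_of_nonneg_right hlN hEE]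


noncomputable def Lit (c : ℝ) (k : ℕ) (φ : (ℕ → ℝ) → ℝ) : ℕ → (ℕ → ℝ) → ℝ
  | 0 => φ
  | n + 1 => LL c (k + n) (Lit c k φ n)

noncomputable def LM (c : ℝ) (k : ℕ) (M : ℝ) (n : ℕ) : ℝ :=
  M * (4 * c) ^ n * ((k + n).choose n * n.factorial : ℕ)

lemma Lit_TT {c : ℝ} (hc : 0 < c) {k : ℕ} {M : ℝ} {φ : (ℕ → ℝ) → ℝ} (h : TT k M φ) (n : ℕ) :
    TT (k + n) (LM c k M n) (Lit c k φ n) := by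
  induction n with
  | zero => simpa [LM, Lit] using h
  | succ n ih =>
    have := LL_TT hc ih
    have e := Nat.add_one_mul_choose_eq (k + n) n
    have e2 : LM c k M (n + 1) = 4 * c * ((k + n : ℕ) + 1) * LM c k M n := ?_
    · rw [e2]; exact this
    unfold LM
    rw [Nat.factorial_succ, ← mul_assoc, ← add_assoc, ← e, pow_succ]
    push_cast
    ring

lemma LM_bd {c : ℝ} (hc : 0 < c) (k : ℕ) {M : ℝ} (hM : 0 ≤ M) (n : ℕ) :
    LM c k M n / n.factorial ≤ M * 2 ^ k * (8 * c) ^ n := by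
  have h1 : (((k + n).choose n : ℕ) : ℝ) ≤ 2 ^ (k + n) := by
    exact_mod_cast Nat.choose_le_two_pow (k + n) n
  have h2 : (n.factorial : ℝ) ≠ 0 := by positivity
  rw [LM]
  push_cast
  rw [← mul_assoc, mul_div_assoc, div_self h2, mul_one]
  calc M * (4 * c) ^ n * ((k + n).choose n) ≤ M * (4 * c) ^ n * 2 ^ (k + n) :=
        mul_le_mul_of_nonneg_left h1 (by positivity)
    _ = M * 2 ^ k * (8 * c) ^ n := by
      have e : (8 * c) ^ n = (4 * c) ^ n * 2 ^ n := by rw [← mul_pow]; congr 1; ring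
      rw [e, pow_add]; ring

section
variable {c K : ℝ} {p : ℝ → ℝ → ℝ} {u : ℝ → ℝ}

lemma mu_bd (hG : GoodP c K p u) {k : ℕ} {M : ℝ} {φ : (ℕ → ℝ) → ℝ} (h : ∀ g, |φ g| ≤ M) {t : ℝ}
    (ht : t ∈ Set.Icc (0:ℝ) 1) : |mu p u k φ t| ≤ K * M := by
  rw [mu, abs_mul, abs_of_nonneg (hG.unn t ht)]
  exact mul_le_mul (hG.ule t ht) (II_bd (hG.dens ht) k h) (abs_nonneg _) hG.Knn

lemma iter_step (hc : 0 < c) (hG : GoodP c K p u) {k : ℕ} {M : ℝ} {φ : (ℕ → ℝ) → ℝ} (h : TT k M φ)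
    {m0 l : ℕ → ℕ} (hm : ∀ N, m0 N + l N ≤ N)
    (hl : ∀ᶠ N : ℕ in Filter.atTop, (l N : ℝ) ≤ (1 / (16 * c)) * N)
    (h0 : ∀ k M φ, TT k M φ → Filter.Tendsto (fun N : ℕ => ee c N φ (m0 N) - mu p u k φ (m0 N / N))
      Filter.atTop (nhds 0)) :
    Filter.Tendsto (fun N : ℕ => ee c N φ (m0 N + l N) - mu p u k φ ((m0 N + l N : ℕ) / N))
      Filter.atTop (nhds 0) := by
  have hM := h.Mnn
  have hK := hG.Knn
  have hTT := fun n => Lit_TT hc h n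
  have hLM : ∀ n, 0 ≤ LM c k M n := fun n => (hTT n).Mnn
  choose C hC hCt using fun n => mu_taylor hc hG n
  set a : ℕ → ℕ → ℕ → ℝ := fun N n l => |ee c N (Lit c k φ n) (m0 N + l)
    - mu p u (k + n) (Lit c k φ n) ((m0 N + l : ℕ) / N)| with ha
  have h01 : ∀ N l' : ℕ, l' ≤ l N → ((m0 N + l' : ℕ) / N : ℝ) ∈ Set.Icc (0:ℝ) 1 := by
    intro N l' hl'
    have : m0 N + l' ≤ N := by have := hm N; omega
    refine ⟨by positivity, ?_⟩
    refine div_le_one_of_le₀ (by exact_mod_cast this) (by positivity)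
  have main := absIter (a := a) (T := l) (A := fun n => (1 + K) * LM c k M n)
    (D := fun n => ((8 * (k + n : ℕ) * ((k + n : ℕ) + 1) + 11) * c + C (k + n)) * LM c k M n)
    (fun N => by have := hm N; omega)
    (fun n => by have := hLM n; have := hC (k + n); positivity)
    (fun n => by have := hLM n; positivity)
    (by
      intro N n l' hl'
      have e1 := ee_bd c N (hTT n).bd (m0 N + l')
      have e2 := mu_bd hG (k := k + n) (hTT n).bd (h01 N l' hl')
      have e3 := abs_sub (ee c N (Lit c k φ n) (m0 N + l')) (mu p u (k + n) (Lit c k φ n) ((m0 N + l' : ℕ) / N))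
      simp only [ha]
      linarith)
    (by
      intro N n l' hN hl'
      have hN' : (0:ℝ) < N := by exact_mod_cast hN
      have e1 := ee_step hc hN (hTT n) (m0 N + l')
      have e2 := hCt (k + n) _ _ (hTT n) _ (h01 N (l' + 1) hl') _ (h01 N l' (by omega))
      have e3 : ((m0 N + (l' + 1) : ℕ) / N : ℝ) - (m0 N + l' : ℕ) / N = (N:ℝ)⁻¹ := by
        push_cast; field_simp; ring
      rw [e3] at e2
      simp only [ha]
      have e4 : Lit c k φ (n + 1) = LL c (k + n) (Lit c k φ n) := rfl
      rw [← add_assoc, e4, ← add_assoc]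
      rw [← add_assoc] at e2
      set x1 := ee c N (Lit c k φ n) (m0 N + l' + 1)
      set x0 := ee c N (Lit c k φ n) (m0 N + l')
      set y1 := mu p u (k + n) (Lit c k φ n) ((m0 N + l' + 1 : ℕ) / N)
      set y0 := mu p u (k + n) (Lit c k φ n) ((m0 N + l' : ℕ) / N)
      set x2 := ee c N (LL c (k + n) (Lit c k φ n)) (m0 N + l')
      set y2 := mu p u (k + n + 1) (LL c (k + n) (Lit c k φ n)) ((m0 N + l' : ℕ) / N)
      have e5 : x1 - y1 = (x0 - y0) + (N:ℝ)⁻¹ * (x2 - y2) + (x1 - x0 - (N:ℝ)⁻¹ * x2)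
        - (y1 - y0 - (N:ℝ)⁻¹ * y2) := by ring
      have e6 : |x1 - y1| ≤ |x0 - y0| + |(N:ℝ)⁻¹ * (x2 - y2)| + |x1 - x0 - (N:ℝ)⁻¹ * x2|
        + |y1 - y0 - (N:ℝ)⁻¹ * y2| := by
        rw [e5]
        refine (abs_sub _ _).trans (add_le_add_left ?_ _)
        refine (abs_add_le _ _).trans (add_le_add_left (abs_add_le _ _) _)
      rw [abs_mul, abs_of_pos (inv_pos.2 hN')] at e6
      refine e6.trans ?_
      rw [show ∀ P Q R : ℝ, (P * c + Q) * R * ((N:ℝ)⁻¹) ^ 2 = P * c * R * ((N:ℝ)⁻¹) ^ 2 + Q * R * ((N:ℝ)⁻¹) ^ 2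
        by intros; ring]
      linarith)
    (by
      intro n
      have := (h0 _ _ _ (hTT n)).abs
      simpa [ha] using this)
  rw [tendsto_zero_iff_abs_tendsto_zero]
  have hgoal : Filter.Tendsto (fun N => a N 0 (l N)) Filter.atTop (nhds 0) := by
    rw [Metric.tendsto_nhds]
    intro ε hε
    have hr : Filter.Tendsto (fun r : ℕ => (1 + K) * (M * 2 ^ k) * (1 / 2 : ℝ) ^ r) Filter.atTop (nhds 0) := by
      simpa using (tendsto_pow_atTop_nhds_zero_of_lt_one (r := (1 / 2 : ℝ)) (by norm_num) (by norm_num)).const_mul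
        ((1 + K) * (M * 2 ^ k))
    obtain ⟨r, hr⟩ := (hr.eventually_lt_const (half_pos hε)).exists
    obtain ⟨E, hE, -, hEb⟩ := main r 0
    filter_upwards [hE.eventually_lt_const (half_pos hε), hl, Filter.eventually_gt_atTop 0] with N e1 e2 hN
    have hN' : (0:ℝ) < N := by exact_mod_cast hN
    have e3 := hEb N (l N) hN le_rfl
    have e4 : (l N : ℝ) * (N:ℝ)⁻¹ ≤ 1 / (16 * c) := by
      rw [← div_eq_mul_inv, div_le_iff₀ hN']; exact e2
    have e5 : (1 + K) * LM c k M (0 + r) / r.factorial * ((l N : ℝ) * (N:ℝ)⁻¹) ^ r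
        ≤ (1 + K) * (M * 2 ^ k) * (1 / 2 : ℝ) ^ r := by
      rw [zero_add, mul_div_assoc]
      calc (1 + K) * (LM c k M r / r.factorial) * ((l N : ℝ) * (N:ℝ)⁻¹) ^ r
          ≤ (1 + K) * (M * 2 ^ k * (8 * c) ^ r) * (1 / (16 * c)) ^ r := by
            have := LM_bd hc k hM r
            gcongr
        _ = (1 + K) * (M * 2 ^ k) * (8 * c * (1 / (16 * c))) ^ r := by
            rw [mul_pow (8 * c)]; ring
        _ = _ := by congr 2; field_simp; norm_num
    rw [Real.dist_eq, sub_zero, abs_of_nonneg (abs_nonneg _)]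
    linarith
  exact hgoal

lemma conv_aux (hc : 0 < c) (hG : GoodP c K p u) (j : ℕ) : ∀ m : ℕ → ℕ, (∀ N, m N ≤ N) →
    (∀ N, (m N : ℝ) ≤ j * (1 / (32 * c)) * N) → ∀ k M φ, TT k M φ →
    Filter.Tendsto (fun N : ℕ => ee c N φ (m N) - mu p u k φ (m N / N)) Filter.atTop (nhds 0) := by
  induction j with
  | zero =>
    intro m hm hb k M φ h
    have hz : ∀ N, m N = 0 := fun N => by
      have := hb N
      simp only [Nat.cast_zero, zero_mul] at this
      exact_mod_cast le_antisymm this (Nat.cast_nonneg _)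
    simp only [hz, Nat.cast_zero, zero_div]
    have e : mu p u k φ 0 = II p0 k φ := by
      rw [mu, hG.u0, one_mul, hG.exp0]; rfl
    rw [e]
    simpa using (ee_zero_lim c h).sub_const (II p0 k φ)
  | succ j ih =>
    intro m hm hb k M φ h
    set m0 : ℕ → ℕ := fun N => min (m N) ⌊(j * (1 / (32 * c)) * N : ℝ)⌋₊ with hm0
    have hle : ∀ N, m0 N ≤ m N := fun N => min_le_left _ _
    have hm0b : ∀ N, (m0 N : ℝ) ≤ j * (1 / (32 * c)) * N := fun N => by
      refine le_trans (Nat.cast_le.2 (min_le_right _ _)) (Nat.floor_le (by positivity))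
    have e : ∀ N, m0 N + (m N - m0 N) = m N := fun N => by have := hle N; omega
    have := iter_step hc hG h (m0 := m0) (l := fun N => m N - m0 N) (fun N => by
      have := hm N; have := e N; omega) ?_ (ih m0 (fun N => (hle N).trans (hm N)) hm0b)
    · simpa only [e] using this
    · filter_upwards [Filter.eventually_ge_atTop ⌈32 * c⌉₊] with N hN
      have hN1 : 32 * c ≤ N := (Nat.le_ceil _).trans (by exact_mod_cast hN)
      have hN2 : 1 ≤ 1 / (32 * c) * N := by
        rw [one_div, inv_mul_eq_div, le_div_iff₀ (by positivity)]; linarith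
      have e16 : 1 / (16 * c) * (N:ℝ) = 1 / (32 * c) * N + 1 / (32 * c) * N := by field_simp; ring
      rw [Nat.cast_sub (hle N), e16]
      have hbN := hb N
      push_cast at hbN
      rcases le_total (m N) ⌊(j * (1 / (32 * c)) * N : ℝ)⌋₊ with h' | h'
      · rw [show m0 N = m N from min_eq_left h', sub_self]; linarith
      · rw [show m0 N = _ from min_eq_right h']
        have := Nat.lt_floor_add_one (j * (1 / (32 * c)) * N : ℝ)
        nlinarith

lemma conv_main (hc : 0 < c) (hG : GoodP c K p u) (m : ℕ → ℕ) (hm : ∀ N, m N ≤ N) {k : ℕ} {M : ℝ}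
    {φ : (ℕ → ℝ) → ℝ} (h : TT k M φ) :
    Filter.Tendsto (fun N : ℕ => ee c N φ (m N) - mu p u k φ (m N / N)) Filter.atTop (nhds 0) := by
  refine conv_aux hc hG ⌈32 * c⌉₊ m hm (fun N => ?_) k M φ h
  have h1 : (1:ℝ) ≤ ⌈32 * c⌉₊ * (1 / (32 * c)) := by
    rw [mul_one_div, le_div_iff₀ (by positivity), one_mul]; exact Nat.le_ceil _
  have h2 : (m N : ℝ) ≤ N := by exact_mod_cast hm N
  nlinarith [mul_le_mul_of_nonneg_right h1 (Nat.cast_nonneg (α := ℝ) N)]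

end

end MM

open MeasureTheory
open scoped ENNReal

namespace MM

def Er (S S' : Finset ℝ) : Prop := S = S' ∨ ∃ z ∈ S, S' = S.erase z

lemma Er.card {S S' : Finset ℝ} (h : Er S S') : S'.card ≤ S.card ∧ S.card ≤ S'.card + 1 := by
  rcases h with rfl | ⟨z, hz, rfl⟩
  · exact ⟨le_rfl, Nat.le_succ _⟩
  · exact ⟨Finset.card_le_card (Finset.erase_subset _ _), by rw [Finset.card_erase_add_one hz]⟩

lemma Er_stp (r : ℝ) (S : Finset ℝ) (y : ℝ) : Er S (stp r S y) := by
  by_cases h : ∃ x ∈ S, Ch r S y x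
  · obtain ⟨x, hx, hc⟩ := h
    exact Or.inr ⟨x, hx, stp_of_Ch hx hc⟩
  · push Not at h
    exact Or.inl (stp_of_not h).symm

lemma Er.stp {r : ℝ} {S S' : Finset ℝ} (h : Er S S') (y : ℝ) : Er (stp r S y) (stp r S' y) := by
  rcases h with rfl | ⟨z, hz, rfl⟩
  · exact Or.inl rfl
  by_cases h : ∃ x ∈ S, Ch r S y x
  · obtain ⟨x, hx, hc⟩ := h
    rw [stp_of_Ch hx hc]
    by_cases hxz : x = z
    · subst hxz; exact Er_stp r _ y
    · have hc' : Ch r (S.erase z) y x := ⟨hc.1, fun x' hx' => hc.2 x' (Finset.mem_of_mem_erase hx')⟩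
      rw [stp_of_Ch (Finset.mem_erase.2 ⟨hxz, hx⟩) hc']
      exact Or.inr ⟨z, Finset.mem_erase.2 ⟨Ne.symm hxz, hz⟩, Finset.erase_right_comm⟩
  · push Not at h
    rw [stp_of_not h, stp_of_not]
    · exact Or.inr ⟨z, hz, rfl⟩
    · intro x hx hc
      have hxS := Finset.mem_of_mem_erase hx
      by_cases hb : |x - y| < |z - y| ∨ (|x - y| = |z - y| ∧ x ≤ z)
      · refine h x hxS ⟨hc.1, fun x' hx' => ?_⟩
        by_cases e : x' = z
        · subst e; exact hb
        · exact hc.2 x' (Finset.mem_erase.2 ⟨e, hx'⟩)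
      · have hb2 : |z - y| < |x - y| ∨ (|z - y| = |x - y| ∧ z ≤ x) := by grind
        refine h z hz ⟨?_, fun x' hx' => ?_⟩
        · have := hc.1; grind
        · by_cases e : x' = z
          · subst e; exact Or.inr ⟨rfl, le_rfl⟩
          · have := hc.2 x' (Finset.mem_erase.2 ⟨e, hx'⟩)
            grind

lemma Er.st {r : ℝ} {S S' : Finset ℝ} (h : Er S S') (y : ℕ → ℝ) (m : ℕ) : Er (st r S y m) (st r S' y m) := by
  induction m with
  | zero => exact h
  | succ m ih => exact ih.stp (y m)

lemma card_close_Y (r : ℝ) (S : Finset ℝ) {y y' : ℕ → ℝ} {i : ℕ} (h : ∀ j, j ≠ i → y j = y' j) (m : ℕ) :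
    |((st r S y m).card : ℝ) - (st r S y' m).card| ≤ 1 := by
  have key : ∃ T, Er T (st r S y m) ∧ Er T (st r S y' m) := by
    induction m with
    | zero => exact ⟨S, Or.inl rfl, Or.inl rfl⟩
    | succ m ih =>
      by_cases hm : m = i
      · subst hm
        have e : st r S y m = st r S y' m := st_congr r S y y' m fun j hj => h j (by omega)
        refine ⟨st r S y m, Er_stp r _ (y m), ?_⟩
        have := Er_stp r (st r S y' m) (y' m)
        rw [← e] at this
        rw [MM.st, ← e]
        exact this
      · obtain ⟨T, h1, h2⟩ := ih
        refine ⟨MM.stp r T (y m), h1.stp (y m), ?_⟩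
        rw [MM.st, ← h m hm]
        exact h2.stp (y m)
  obtain ⟨T, h1, h2⟩ := key
  have a := h1.card
  have b := h2.card
  have c1 : ((st r S y m).card : ℝ) ≤ (st r S y' m).card + 1 := by exact_mod_cast (by omega)
  have c2 : ((st r S y' m).card : ℝ) ≤ (st r S y m).card + 1 := by exact_mod_cast (by omega)
  rw [abs_le]; constructor <;> linarith

lemma card_close_X (r : ℝ) {n : ℕ} {X X' : Fin n → ℝ} {i : Fin n} (h : ∀ j, j ≠ i → X j = X' j)
    (y : ℕ → ℝ) (m : ℕ) :
    |((st r (Finset.univ.image X) y m).card : ℝ) - (st r (Finset.univ.image X') y m).card| ≤ 1 := by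
  classical
  have key : ∀ X : Fin n → ℝ, Er (Finset.univ.image X) ((Finset.univ.erase i).image X) := by
    intro X
    have e : Finset.univ.image X = insert (X i) ((Finset.univ.erase i).image X) := by
      rw [← Finset.image_insert, Finset.insert_erase (Finset.mem_univ i)]
    by_cases hm : X i ∈ (Finset.univ.erase i).image X
    · left; rw [e, Finset.insert_eq_of_mem hm]
    · right
      refine ⟨X i, Finset.mem_image_of_mem _ (Finset.mem_univ i), ?_⟩
      rw [e, Finset.erase_insert hm]
  have e : (Finset.univ.erase i).image X = (Finset.univ.erase i).image X' :=
    Finset.image_congr fun j hj => h j (by simpa using hj)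
  have a := ((key X).st (r := r) y m).card
  have b := ((key X').st (r := r) y m).card
  rw [← e] at b
  have c1 : ((st r (Finset.univ.image X) y m).card : ℝ) ≤ (st r (Finset.univ.image X') y m).card + 1 := by
    exact_mod_cast (by omega)
  have c2 : ((st r (Finset.univ.image X') y m).card : ℝ) ≤ (st r (Finset.univ.image X) y m).card + 1 := by
    exact_mod_cast (by omega)
  rw [abs_le]; constructor <;> linarith

lemma var_bd {α : Type*} [MeasurableSpace α] {μ : Measure α} [IsProbabilityMeasure μ] {g : α → ℝ} {d B : ℝ}
    (hg : Measurable g) (hB : ∀ x, |g x| ≤ B) (hd : ∀ x x', |g x - g x'| ≤ d) :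
    ∫ x, g x ^ 2 ∂μ ≤ (∫ x, g x ∂μ) ^ 2 + d ^ 2 := by
  set E := ∫ x, g x ∂μ with hE
  have i1 : Integrable g μ := integrable_of_bdd hg hB
  have hB2 : ∀ x, |g x ^ 2| ≤ B ^ 2 := fun x => by
    rw [abs_pow]; exact pow_le_pow_left₀ (abs_nonneg _) (hB x) 2
  have i2 : Integrable (fun x => g x ^ 2) μ := integrable_of_bdd (hg.pow_const 2) hB2
  have hgE : ∀ x, |g x - E| ≤ d := fun x => by
    have : g x - E = ∫ x', (g x - g x') ∂μ := by
      rw [integral_sub (integrable_const _) i1, integral_const, probReal_univ, one_smul]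
    rw [this]
    have := norm_integral_le_of_norm_le_const (μ := μ) (C := d) (f := fun x' => g x - g x')
      (Filter.Eventually.of_forall fun x' => hd x x')
    simpa using this
  have e := lin3 i2 i1 (integrable_const (1:ℝ)) 1 (-2 * E) (E ^ 2)
  rw [integral_const, probReal_univ, one_smul, ← hE] at e
  have : ∫ x, (1 * g x ^ 2 + -2 * E * g x + E ^ 2 * 1) ∂μ ≤ d ^ 2 := by
    have := norm_integral_le_of_norm_le_const (μ := μ) (C := d ^ 2)
      (f := fun x => 1 * g x ^ 2 + -2 * E * g x + E ^ 2 * 1)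
      (Filter.Eventually.of_forall fun x => by
        rw [show 1 * g x ^ 2 + -2 * E * g x + E ^ 2 * 1 = (g x - E) ^ 2 by ring, Real.norm_eq_abs, abs_pow]
        exact pow_le_pow_left₀ (abs_nonneg _) (hgE x) 2)
    rw [probReal_univ] at this
    exact (le_abs_self _).trans (this.trans (mul_one _).le)
  rw [e] at this
  nlinarith

lemma efron {d : ℝ} (n : ℕ) : ∀ (f : (Fin n → ℝ) → ℝ) (B : ℝ), Measurable f → (∀ X, |f X| ≤ B) →
    (∀ X X' : Fin n → ℝ, ∀ i, (∀ j, j ≠ i → X j = X' j) → |f X - f X'| ≤ d) →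
    ∫ X, f X ^ 2 ∂(unifCube n) ≤ (∫ X, f X ∂(unifCube n)) ^ 2 + n * d ^ 2 := by
  induction n with
  | zero =>
    intro f B hf hB _
    have e : f = fun _ => f 0 := by ext X; rw [Subsingleton.elim X 0]
    rw [e]
    simp
  | succ n ih =>
    intro f B hf hB hd
    have mcons : Measurable fun q : ℝ × (Fin n → ℝ) => ((0 : Fin (n + 1)).insertNth q.1 q.2 : Fin (n + 1) → ℝ) :=
      (cube_mp n 0).measurable
    have mF : Measurable fun q : ℝ × (Fin n → ℝ) => f ((0 : Fin (n + 1)).insertNth q.1 q.2) := hf.comp mcons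
    have hB2 : ∀ x, |f x ^ 2| ≤ B ^ 2 := fun x => by
      rw [abs_pow]; exact pow_le_pow_left₀ (abs_nonneg _) (hB x) 2
    rw [cube_succ 0 (integrable_of_bdd hf hB), cube_succ 0 (integrable_of_bdd (hf.pow_const 2) hB2)]
    set g : ℝ → ℝ := fun x => ∫ X', f ((0 : Fin (n + 1)).insertNth x X') ∂(unifCube n) with hg
    have mg : Measurable g := int_meas mF
    have mi : ∀ x, Measurable fun X' : Fin n → ℝ => f ((0 : Fin (n + 1)).insertNth x X') := fun x =>
      mF.comp (measurable_const.prodMk measurable_id)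
    have gB : ∀ x, |g x| ≤ B := fun x => by
      have := norm_integral_le_of_norm_le_const (μ := unifCube n) (C := B)
        (f := fun X' => f ((0 : Fin (n + 1)).insertNth x X')) (Filter.Eventually.of_forall fun X' => hB _)
      rw [probReal_univ, mul_one] at this
      exact this
    have gd : ∀ x x', |g x - g x'| ≤ d := fun x x' => by
      simp only [hg]
      rw [← integral_sub (integrable_of_bdd (mi x) fun _ => hB _) (integrable_of_bdd (mi x') fun _ => hB _)]
      have := norm_integral_le_of_norm_le_const (μ := unifCube n) (C := d)
        (f := fun X' => f ((0 : Fin (n + 1)).insertNth x X') - f ((0 : Fin (n + 1)).insertNth x' X'))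
        (Filter.Eventually.of_forall fun X' => hd _ _ 0 fun j hj => by
          obtain ⟨l, rfl⟩ := Fin.exists_succAbove_eq hj
          rw [Fin.insertNth_apply_succAbove, Fin.insertNth_apply_succAbove])
      rw [probReal_univ, mul_one] at this
      exact this
    have s1 : ∀ x, ∫ X', f ((0 : Fin (n + 1)).insertNth x X') ^ 2 ∂(unifCube n) ≤ g x ^ 2 + n * d ^ 2 := fun x =>
      ih (fun X' => f ((0 : Fin (n + 1)).insertNth x X')) B (mi x) (fun _ => hB _) fun X X' i h =>
        hd _ _ i.succ fun j hj => by
          rcases Fin.eq_zero_or_eq_succ j with rfl | ⟨l, rfl⟩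
          · simp
          · have := h l fun e => hj (by rw [e])
            simpa using this
    have hgB2 : ∀ x, |g x ^ 2| ≤ B ^ 2 := fun x => by
      rw [abs_pow]; exact pow_le_pow_left₀ (abs_nonneg _) (gB x) 2
    have i2 : Integrable (fun x => g x ^ 2) U01 := integrable_of_bdd (mg.pow_const 2) hgB2
    have s2 : ∫ x, ∫ X', f ((0 : Fin (n + 1)).insertNth x X') ^ 2 ∂(unifCube n) ∂U01
        ≤ ∫ x, (g x ^ 2 + n * d ^ 2) ∂U01 := by
      refine integral_mono ?_ (i2.add (integrable_const _)) s1
      refine integrable_of_bdd (int_meas (mF.pow_const 2)) (B := B ^ 2) fun x => ?_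
      have := norm_integral_le_of_norm_le_const (μ := unifCube n) (C := B ^ 2)
        (f := fun X' => f ((0 : Fin (n + 1)).insertNth x X') ^ 2) (Filter.Eventually.of_forall fun X' => hB2 _)
      rw [probReal_univ, mul_one] at this
      exact this
    rw [integral_add i2 (integrable_const _), integral_const, probReal_univ, one_smul] at s2
    have s3 := var_bd (μ := U01) mg gB gd
    push_cast
    linarith

end MM


open MeasureTheory
open scoped ENNReal

namespace MM

lemma FF_one (n : ℝ) (S : Finset ℝ) : FF n (fun _ => 1) S = S.card := by simp [FF]

lemma st_card_le (r : ℝ) {n : ℕ} (X : Fin n → ℝ) (y : ℕ → ℝ) (m : ℕ) :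
    |((st r (Finset.univ.image X) y m).card : ℝ)| ≤ n := by
  have h1 : (st r (Finset.univ.image X) y m).card ≤ n := by
    refine (Finset.card_le_card (st_subset r _ y m)).trans ?_
    simpa using Finset.card_image_le (s := (Finset.univ : Finset (Fin n))) (f := X)
  rw [abs_of_nonneg (Nat.cast_nonneg _)]
  exact_mod_cast h1

lemma card_meas (r : ℝ) (N m : ℕ) : Measurable fun q : (Fin N → ℝ) × (Fin N → ℝ) =>
    ((st r (Finset.univ.image q.1) (ext q.2) m).card : ℝ) := by
  have h := (FF_MS (K := N) 1 (φ := fun _ => 1) continuous_const).st r m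
  have h2 := h.comp (measurable_fst.prodMk ((ext_meas N).comp measurable_snd) :
    Measurable fun q : (Fin N → ℝ) × (Fin N → ℝ) => (q.1, ext q.2))
  simpa only [Function.comp_def, FF_one] using h2

lemma second_moment (c : ℝ) (N m : ℕ) (hm : m ≤ N) (v : ℝ) :
    ∫ q, (((st (c / N) (Finset.univ.image q.1) (ext q.2) m).card : ℝ) - N * v) ^ 2
      ∂((unifCube N).prod (unifCube N)) ≤ N ^ 2 * (ee c N (fun _ => 1) m - v) ^ 2 + 2 * N := by
  set C : (Fin N → ℝ) × (Fin N → ℝ) → ℝ := fun q =>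
    ((st (c / N) (Finset.univ.image q.1) (ext q.2) m).card : ℝ) with hC
  have mC : Measurable C := card_meas _ N m
  have bC : ∀ q, |C q| ≤ N := fun q => st_card_le _ _ _ _
  have bC2 : ∀ q, |C q ^ 2| ≤ (N:ℝ) ^ 2 := fun q => by
    rw [abs_pow]; exact pow_le_pow_left₀ (abs_nonneg _) (bC q) 2
  have i1 : Integrable C ((unifCube N).prod (unifCube N)) := integrable_of_bdd mC bC
  have i2 : Integrable (fun q => C q ^ 2) ((unifCube N).prod (unifCube N)) :=
    integrable_of_bdd (mC.pow_const 2) bC2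
  set h : (Fin N → ℝ) → ℝ := fun X => ∫ Y, C (X, Y) ∂(unifCube N) with hh
  have hT : ∀ X, h X = (Tp (c / N))^[m] (FF N (fun _ => 1)) (Finset.univ.image X) := fun X => by
    rw [← Tp_bridge (c / N) (FF N fun _ => 1) m N (Finset.univ.image X) hm]
    simp only [hh, hC, FF_one]
  have mX : ∀ X, Measurable fun Y => C (X, Y) := fun X => mC.comp measurable_prodMk_left
  have mh : Measurable h := by
    rw [show h = _ from funext hT]
    exact ((FF_MS (K := N) (N:ℝ) (φ := fun _ => 1) continuous_const).iter (c / N) m) Finset.univ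
  have bh : ∀ X, |h X| ≤ N := fun X => by
    have := norm_integral_le_of_norm_le_const (μ := unifCube N) (C := (N:ℝ))
      (f := fun Y => C (X, Y)) (Filter.Eventually.of_forall fun Y => bC _)
    rw [probReal_univ, mul_one] at this
    exact this
  have dh : ∀ X X' : Fin N → ℝ, ∀ i, (∀ j, j ≠ i → X j = X' j) → |h X - h X'| ≤ 1 := by
    intro X X' i hX
    simp only [hh]
    rw [← integral_sub (integrable_of_bdd (mX X) fun _ => bC _) (integrable_of_bdd (mX X') fun _ => bC _)]
    have := norm_integral_le_of_norm_le_const (μ := unifCube N) (C := (1:ℝ))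
      (f := fun Y => C (X, Y) - C (X', Y)) (Filter.Eventually.of_forall fun Y => card_close_X _ hX _ _)
    rw [probReal_univ, mul_one] at this
    exact this
  have E1 := efron N h N mh bh dh
  have E2 : ∀ X, ∫ Y, C (X, Y) ^ 2 ∂(unifCube N) ≤ h X ^ 2 + N * 1 ^ 2 := fun X =>
    efron N (fun Y => C (X, Y)) N (mX X) (fun _ => bC _) fun Y Y' i hY =>
      card_close_Y (i := i) _ _ (fun j hj => by
        simp only [ext]
        split_ifs with hjN
        · exact hY _ fun e => hj (by rw [← e])
        · rfl) _
  have bh2 : ∀ X, |h X ^ 2| ≤ (N:ℝ) ^ 2 := fun q => by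
    rw [abs_pow]; exact pow_le_pow_left₀ (abs_nonneg _) (bh q) 2
  have ih2 : Integrable (fun X => h X ^ 2) (unifCube N) := integrable_of_bdd (mh.pow_const 2) bh2
  have E3 : ∫ X, ∫ Y, C (X, Y) ^ 2 ∂(unifCube N) ∂(unifCube N) ≤ ∫ X, (h X ^ 2 + N * 1 ^ 2) ∂(unifCube N) :=
    integral_mono i2.integral_prod_left (ih2.add (integrable_const _)) E2
  rw [integral_add ih2 (integrable_const _), integral_const, probReal_univ, one_smul] at E3
  have hI : ∫ X, h X ∂(unifCube N) = N * ee c N (fun _ => 1) m := by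
    rcases Nat.eq_zero_or_pos N with h0 | h0
    · have hz : ∀ X, h X = 0 := fun X => by
        have := bh X
        have hN : (N:ℝ) = 0 := by exact_mod_cast h0
        rw [hN] at this
        exact abs_eq_zero.1 (le_antisymm this (abs_nonneg _))
      have hN : (N:ℝ) = 0 := by exact_mod_cast h0
      rw [hN, zero_mul]
      simp [hz]
    · have hN : (N:ℝ) ≠ 0 := by positivity
      rw [ee, ← mul_assoc, mul_inv_cancel₀ hN, one_mul]
      simp_rw [hT]
  have P1 : ∫ q, C q ∂((unifCube N).prod (unifCube N)) = N * ee c N (fun _ => 1) m := by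
    rw [integral_prod _ i1, ← hI]
  have P2 : ∫ q, C q ^ 2 ∂((unifCube N).prod (unifCube N)) ≤ (N * ee c N (fun _ => 1) m) ^ 2 + 2 * N := by
    rw [integral_prod _ i2]
    rw [hI] at E1
    linarith
  have e := lin3 i2 i1 (integrable_const (1:ℝ)) 1 (-2 * (N * v)) ((N * v) ^ 2)
  rw [integral_const, probReal_univ, one_smul, P1] at e
  have e2 : ∀ q, (C q - N * v) ^ 2 = 1 * C q ^ 2 + -2 * (N * v) * C q + (N * v) ^ 2 * 1 := fun q => by ring
  refine le_trans (le_of_eq ((integral_congr_ae (Filter.Eventually.of_forall e2)).trans e)) ?_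
  nlinarith

lemma prob_bd {c : ℝ} (hc : 0 < c) (N m : ℕ) (hN : 0 < N) (hm : m ≤ N) (v : ℝ) {ε : ℝ} (hε : 0 < ε) :
    ((unifCube N).prod (unifCube N))
      {ω | ε < |(closestMatchedCount (ENNReal.ofReal (c / N)) (Finset.image ω.1 Finset.univ)
              (ext ω.2) m : ℝ) / N - (1 - v)|}
      ≤ ENNReal.ofReal (((ee c N (fun _ => 1) m - v) ^ 2 + 2 / N) / ε ^ 2) := by
  have hNR : (0:ℝ) < N := by exact_mod_cast hN
  set P := (unifCube N).prod (unifCube N) with hP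
  set C : (Fin N → ℝ) × (Fin N → ℝ) → ℝ := fun q =>
    ((st (c / N) (Finset.univ.image q.1) (ext q.2) m).card : ℝ) with hC
  have mC : Measurable C := card_meas _ N m
  have bC : ∀ q, |C q| ≤ N := fun q => st_card_le _ _ _ _
  have mG : Measurable fun q => (C q - N * v) ^ 2 := (mC.sub_const _).pow_const 2
  have iG : Integrable (fun q => (C q - N * v) ^ 2) P := by
    refine integrable_of_bdd mG (B := (N + |N * v|) ^ 2) fun q => ?_
    rw [abs_pow]
    exact pow_le_pow_left₀ (abs_nonneg _) ((abs_sub _ _).trans (add_le_add (bC q) le_rfl)) 2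
  have hinj : ∀ᵐ q ∂P, Function.Injective q.1 :=
    Measure.quasiMeasurePreserving_fst.ae (ae_inj N)
  have hsub : P {ω | ε < |(closestMatchedCount (ENNReal.ofReal (c / N)) (Finset.image ω.1 Finset.univ)
              (ext ω.2) m : ℝ) / N - (1 - v)|} ≤ P {q | (N * ε) ^ 2 ≤ (C q - N * v) ^ 2} := by
    refine measure_mono_ae ?_
    filter_upwards [hinj] with q hq hω
    change ε < _ at hω
    change (N * ε) ^ 2 ≤ (C q - N * v) ^ 2
    have h1 := (closestState_spec (r := c / N) (by positivity) (Finset.univ.image q.1) (ext q.2) m).2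
    rw [Finset.card_image_of_injective _ hq, Finset.card_univ, Fintype.card_fin] at h1
    have h2 : (closestMatchedCount (ENNReal.ofReal (c / N)) (Finset.image q.1 Finset.univ)
              (ext q.2) m : ℝ) = N - C q := by
      have : ((closestState (ENNReal.ofReal (c / N)) (Finset.univ.image q.1) (ext q.2) m).2.1 : ℝ) + C q = N := by
        simp only [hC]; exact_mod_cast h1
      rw [closestMatchedCount]; linarith
    rw [h2, show ((N:ℝ) - C q) / N - (1 - v) = - ((C q - N * v) / N) by field_simp; ring, abs_neg, abs_div,
      abs_of_pos hNR, lt_div_iff₀ hNR] at hω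
    rw [← sq_abs (C q - N * v)]
    exact pow_le_pow_left₀ (by positivity) (by linarith) 2
  refine hsub.trans ?_
  have hch := mul_meas_ge_le_integral_of_nonneg (μ := P) (f := fun q => (C q - N * v) ^ 2)
    (Filter.Eventually.of_forall fun q => sq_nonneg _) iG ((N * ε) ^ 2)
  have h2 := second_moment c N m hm v
  rw [← ofReal_measureReal]
  refine ENNReal.ofReal_le_ofReal ?_
  rw [le_div_iff₀ (by positivity)]
  have h3 := hch.trans h2
  have h4 : (N:ℝ) ^ 2 * (P.real {q | (N * ε) ^ 2 ≤ (C q - N * v) ^ 2} * ε ^ 2)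
      ≤ N ^ 2 * ((ee c N (fun _ => 1) m - v) ^ 2 + 2 / N) := by
    have : (N:ℝ) ^ 2 * ((ee c N (fun _ => 1) m - v) ^ 2 + 2 / N) =
      N ^ 2 * (ee c N (fun _ => 1) m - v) ^ 2 + 2 * N := by field_simp
    rw [this]
    refine le_trans (le_of_eq ?_) h3
    ring
  exact le_of_mul_le_mul_left h4 (by positivity)

lemma final {c : ℝ} (hc : 0 < c) {f : ℝ → ℝ → ℝ} (hf : SolvesMaxMatchingPDE c f)
    {t : ℝ} (ht : t ∈ Set.Icc (0 : ℝ) 1) {ε : ℝ} (hε : 0 < ε) :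
    Filter.Tendsto
      (fun N : ℕ =>
        ((unifCube N).prod (unifCube N))
          {ω | ε < |(closestMatchedCount (ENNReal.ofReal (c / N))
              (Finset.image ω.1 Finset.univ) (ext ω.2) ⌊t * N⌋₊ : ℝ) / N
            - (1 - ∫ x in Set.Ioi (0 : ℝ), f x t)|})
      Filter.atTop (nhds 0) := by
  rw [uu_eq hf t]
  obtain ⟨K, hG⟩ := goodP_exists hc hf
  have hm : ∀ N : ℕ, ⌊t * N⌋₊ ≤ N := fun N => by
    refine Nat.floor_le_of_le ?_
    have : (0:ℝ) ≤ N := Nat.cast_nonneg _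
    nlinarith [ht.2]
  have hT : TT 0 1 (fun _ => (1:ℝ)) := ⟨continuous_const, fun _ => by simp, fun _ _ _ => rfl⟩
  have h1 := conv_main hc hG (fun N => ⌊t * N⌋₊) hm hT
  have h2 : ∀ s, mu (pp f) (uu f) 0 (fun _ => 1) s = uu f s := fun s => by
    change uu f s * 1 = _; rw [mul_one]
  simp only [h2] at h1
  have hfl : Filter.Tendsto (fun N : ℕ => ((⌊t * N⌋₊ : ℕ) : ℝ) / N) Filter.atTop (nhds t) :=
    (tendsto_nat_floor_mul_div_atTop (R := ℝ) ht.1).comp tendsto_natCast_atTop_atTop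
  have hu : Filter.Tendsto (fun N : ℕ => uu f (((⌊t * N⌋₊ : ℕ) : ℝ) / N)) Filter.atTop (nhds (uu f t)) := by
    refine ((uu_deriv hc hf ht).continuousWithinAt.tendsto).comp ?_
    refine tendsto_nhdsWithin_iff.2 ⟨hfl, Filter.Eventually.of_forall fun N => ⟨by positivity, ?_⟩⟩
    refine div_le_one_of_le₀ ?_ (Nat.cast_nonneg _)
    exact_mod_cast hm N
  have h3 : Filter.Tendsto (fun N : ℕ => ee c N (fun _ => 1) ⌊t * N⌋₊ - uu f t) Filter.atTop (nhds 0) := by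
    have := h1.add (hu.sub_const (uu f t))
    rw [sub_self, add_zero] at this
    refine this.congr fun N => by ring
  have h4 : Filter.Tendsto (fun N : ℕ => ENNReal.ofReal
      (((ee c N (fun _ => 1) ⌊t * N⌋₊ - uu f t) ^ 2 + 2 / (N:ℝ)) / ε ^ 2)) Filter.atTop (nhds 0) := by
    have h5 := ((h3.pow 2).add (tendsto_const_div_atTop_nhds_zero_nat (2:ℝ))).div_const (ε ^ 2)
    have h6 := ENNReal.tendsto_ofReal h5
    simpa using h6
  refine tendsto_of_tendsto_of_tendsto_of_le_of_le' tendsto_const_nhds h4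
    (Filter.Eventually.of_forall fun _ => bot_le) ?_
  filter_upwards [Filter.eventually_gt_atTop 0] with N hN
  exact prob_bd hc N _ hN (hm N) (uu f t) hε

end MM

/-- If `f` solves the max-matching PDE with parameter `c`, then for every `t ∈ [0,1]`
the fraction `κ_N(t)/N` of matched online points after `⌊tN⌋` arrivals, for the greedy
algorithm `closest` with threshold `c/N` on `N` uniform offline and online points,
converges in probability to `1 - ∫₀^∞ f(x,t) dx`. -/
theorem stmt7 (c : ℝ) (hc : 0 < c) (f : ℝ → ℝ → ℝ) (hf : SolvesMaxMatchingPDE c f)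
    (t : ℝ) (ht : t ∈ Set.Icc (0 : ℝ) 1) (ε : ℝ) (hε : 0 < ε) :
    Filter.Tendsto
      (fun N : ℕ =>
        ((unifCube N).prod (unifCube N))
          {ω | ε < |(closestMatchedCount (ENNReal.ofReal (c / N))
              (Finset.image ω.1 Finset.univ)
              (fun i => if h : i < N then ω.2 ⟨i, h⟩ else 0)
              ⌊t * N⌋₊ : ℝ) / N
            - (1 - ∫ x in Set.Ioi (0 : ℝ), f x t)|})
      Filter.atTop (nhds 0) := by
  exact MM.final hc hf ht hε
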